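/- arXiv:1309.7593 — 3 statements merged into one kernel-verified Lean document; each statement's English description precedes it below -/
import Mathlib

section
/- Let f: [0,1] → [0,1] be a multimodal map of class C^3 with non-flat critical points, with all periodic points hyperbolic repelling, and topologically exact. Then for every κ > 0 there is δ > 0 such that for every x ∈ [0,1], every integer n ≥ 1, and every pull-back W of B(x,δ) by f^n (i.e., every connected component W of f^{−n}(B(x,δ))), we have |W| < κ. -/
/-!
Topological exactness and compactness of `[0,1]` force pull-backs of small balls to be small.

Fix `κ` and cut `[0,1]` into finitely many open intervals of length `1/M < κ/4`. By exactness
each of them is mapped onto `[0,1]` by some iterate, hence, `f` being onto, by every later one.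
So there is one `N` such that `f^m(W) = [0,1]` for all `m ≥ N` and every interval `W` of length
at least `κ`, since such a `W` contains a cell of the grid (`exists_iterate_image_eq`).

The iterates `f^k`, `k ≤ N`, are equicontinuous on `[0,1]`, so there is `η > 0` such that none of
them spreads two points at distance less than `η` to distance `1`
(`exists_equicontinuity_radius`). Take `δ = η/2`. If `f^n(W)` lies in a ball of radius `δ` and
`W` has length at least `κ`, then with `m = max n N` the iterate `f^(m-n)`, where `m - n ≤ N`,
maps a subset of this ball onto `[0,1]`, a contradiction.
-/

open Set MeasureTheory Metric Filter

noncomputable section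

/-- The unit interval as a subset of `ℝ`. -/
def unitI : Set ℝ := Set.Icc 0 1

/-- The ball of `I` centered at `x` of radius `r`. -/
def ballI (x r : ℝ) : Set ℝ := {y ∈ unitI | |x - y| < r}

/-- `f` is a multimodal map of the unit interval: continuous, non-injective,
and there is a finite partition of `I` into intervals on each of which `f` is injective. -/
def Multimodal (f : ℝ → ℝ) : Prop :=
  ContinuousOn f unitI ∧ Set.MapsTo f unitI unitI ∧ ¬ Set.InjOn f unitI ∧
    ∃ (n : ℕ) (J : Fin n → Set ℝ), (∀ i, (J i).OrdConnected) ∧ (⋃ i, J i) = unitI ∧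
      Pairwise (Function.onFun Disjoint J) ∧ ∀ i, Set.InjOn f (J i)

/-- `f` is topologically exact on the unit interval. -/
def TopExact (f : ℝ → ℝ) : Prop :=
  ∀ U : Set ℝ, U.Nonempty → U ⊆ unitI → (∃ V : Set ℝ, IsOpen V ∧ U = V ∩ unitI) →
    ∃ n : ℕ, 1 ≤ n ∧ f^[n] '' U = unitI

/-- The set of critical points of `f` in the unit interval. -/
def Crit (f : ℝ → ℝ) : Set ℝ := {x ∈ unitI | deriv f x = 0}

/-- The set of turning points of `f`: points of `I` at which `f` is not locally injective. -/
def TurnPts (f : ℝ → ℝ) : Set ℝ :=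
  {x ∈ unitI | ∀ ε > 0, ¬ Set.InjOn f (ballI x ε)}

/-- A `C^3` diffeomorphism of `ℝ`. -/
def IsC3Diffeo (φ : ℝ → ℝ) : Prop :=
  ContDiff ℝ 3 φ ∧ Function.Bijective φ ∧ ∀ x : ℝ, deriv φ x ≠ 0

/-- `f` is non-flat at `c` with exponent `ℓc`. -/
def NonflatAt (f : ℝ → ℝ) (ℓc : ℝ) (c : ℝ) : Prop :=
  1 < ℓc ∧ ∃ φ ψ : ℝ → ℝ, IsC3Diffeo φ ∧ IsC3Diffeo ψ ∧ φ c = 0 ∧ ψ (f c) = 0 ∧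
    ∃ U ∈ nhdsWithin c unitI, ∀ x ∈ U, |ψ (f x)| = |φ x| ^ ℓc

/-- `f` is of class `C^3` with non-flat critical points, with exponents given by `ℓ`. -/
def C3NonflatWith (f : ℝ → ℝ) (ℓ : ℝ → ℝ) : Prop :=
  ContDiffOn ℝ 1 f unitI ∧ ContDiffOn ℝ 3 f (unitI \ Crit f) ∧
    ∀ c ∈ Crit f, NonflatAt f (ℓ c) c

/-- `f` is of class `C^3` with non-flat critical points. -/
def C3Nonflat (f : ℝ → ℝ) : Prop := ∃ ℓ : ℝ → ℝ, C3NonflatWith f ℓ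

/-- All periodic points of `f` are hyperbolic repelling. -/
def AllPeriodicRepelling (f : ℝ → ℝ) : Prop :=
  ∀ p ∈ unitI, ∀ n : ℕ, 1 ≤ n → f^[n] p = p → 1 < |deriv (f^[n]) p|

/-- The criticality of `f^m` at `x` with respect to `r`: the number of `j < m` such that
the connected component of `f^{-(m-j)}(B(f^m(x),r) ∩ I)` containing `f^j(x)` meets the
set of turning points. -/
def criticality (f : ℝ → ℝ) (m : ℕ) (x r : ℝ) : ℕ :=
  Nat.card {j : ℕ // j < m ∧
    (connectedComponentIn (unitI ∩ f^[m - j] ⁻¹' ballI (f^[m] x) r) (f^[j] x) ∩ TurnPts f).Nonempty}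

/-- `f` is semi-hyperbolic. -/
def SemiHyperbolic (f : ℝ → ℝ) : Prop :=
  ∃ r : ℝ, 0 < r ∧ ∃ D : ℕ, 1 ≤ D ∧ ∀ x ∈ unitI, ∀ n : ℕ, 1 ≤ n → criticality f n x r ≤ D

/-- `c` is a recurrent point of `f`: `c` belongs to the set of accumulation points of
its forward orbit. -/
def RecurrentPt (f : ℝ → ℝ) (c : ℝ) : Prop :=
  ∀ ε > 0, ∀ N : ℕ, ∃ n : ℕ, N ≤ n ∧ |f^[n] c - c| < ε

/-- A Borel measure on the unit interval is doubling. -/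
def DoublingOn (μ : Measure ℝ) : Prop :=
  ∃ C : ℝ, 0 < C ∧ ∃ r₀ : ℝ, 0 < r₀ ∧ ∀ x ∈ unitI, ∀ r : ℝ, 0 < r → r < r₀ →
    μ (ballI x (2 * r)) ≤ ENNReal.ofReal C * μ (ballI x r)

/-- A homeomorphism of the unit interval is quasi-symmetric. -/
def QuasiSymmetricOn (h : ℝ → ℝ) : Prop :=
  ∃ K : ℝ, 1 ≤ K ∧ ∀ x ∈ unitI, ∀ ε : ℝ, 0 < ε → x + ε ∈ unitI → x - ε ∈ unitI →
    |h (x + ε) - h x| ≤ K * |h x - h (x - ε)| ∧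
    |h x - h (x - ε)| ≤ K * |h (x + ε) - h x|

/-- `F` is piecewise affine on the unit interval with slope `±s` everywhere. -/
def PiecewiseAffineSlope (F : ℝ → ℝ) (s : ℝ) : Prop :=
  ∃ (n : ℕ) (a : Fin (n + 1) → ℝ), a 0 = 0 ∧ a (Fin.last n) = 1 ∧ StrictMono a ∧
    ∀ i : Fin n, ∃ b σ : ℝ, (σ = 1 ∨ σ = -1) ∧
      ∀ x ∈ Set.Icc (a i.castSucc) (a i.succ), F x = σ * s * x + b

/-- `f` is quasi-symmetrically conjugate to a piecewise affine map of the unit interval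
with slope `±s` everywhere. -/
def QSConjPiecewiseAffine (f : ℝ → ℝ) (s : ℝ) : Prop :=
  ∃ h F : ℝ → ℝ, ContinuousOn h unitI ∧ Set.BijOn h unitI unitI ∧ QuasiSymmetricOn h ∧
    Set.MapsTo F unitI unitI ∧ PiecewiseAffineSlope F s ∧ ∀ x ∈ unitI, h (f x) = F (h x)

/-- The topological entropy of `f` on the unit interval (Bowen's definition). -/
def htop (f : ℝ → ℝ) : ℝ := (Dynamics.coverEntropy f unitI).toReal

/-- `μ` is an `f`-invariant Borel probability measure on the unit interval which is
non-atomic, has topological support equal to the unit interval, and has constant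
Jacobian `s`; for a topologically exact multimodal map this characterizes the unique
measure of maximal entropy when `s = exp (htop f)`. -/
def IsMaxEntropyLike (f : ℝ → ℝ) (μ : Measure ℝ) (s : ℝ) : Prop :=
  IsProbabilityMeasure μ ∧ μ unitIᶜ = 0 ∧
    (∀ A : Set ℝ, MeasurableSet A → μ (f ⁻¹' A) = μ A) ∧
    (∀ x : ℝ, μ {x} = 0) ∧
    (∀ x ∈ unitI, ∀ r : ℝ, 0 < r → 0 < μ (ballI x r)) ∧
    (∀ A : Set ℝ, MeasurableSet A → A ⊆ unitI → Set.InjOn f A →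
      μ (f '' A) = ENNReal.ofReal s * μ A)

/-- `W` is a pull-back of `J` by `f^n`, i.e. a connected component of `f^{-n}(J)`. -/
def IsPullback (f : ℝ → ℝ) (n : ℕ) (J W : Set ℝ) : Prop :=
  ∃ x ∈ unitI ∩ f^[n] ⁻¹' J, W = connectedComponentIn (unitI ∩ f^[n] ⁻¹' J) x

/-- `J` is `τ`-well inside `T` (for intervals): both components of `T ∖ J`
have length at least `τ|J|`. -/
def WellInside (τ : ℝ) (J T : Set ℝ) : Prop :=
  J ⊆ T ∧ τ * Metric.diam J ≤ sInf J - sInf T ∧ τ * Metric.diam J ≤ sSup T - sSup J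


theorem surjOn_of_topExact {f : ℝ → ℝ} (hmaps : MapsTo f unitI unitI) (hex : TopExact f) :
    f '' unitI = unitI := by
  obtain ⟨n, hn, h⟩ := hex unitI ⟨0, by simp [unitI]⟩ subset_rfl ⟨univ, isOpen_univ, by simp⟩
  refine Subset.antisymm hmaps.image_subset ?_
  intro y hy
  rw [← h] at hy
  obtain ⟨x, hx, rfl⟩ := hy
  obtain ⟨k, rfl⟩ : ∃ k, n = k + 1 := ⟨n - 1, by omega⟩
  exact ⟨f^[k] x, hmaps.iterate k hx, (Function.iterate_succ_apply' f k x).symm⟩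

/-- Once an iterate of a surjective map sends `U` onto the unit interval, so do all later ones. -/
theorem iterate_image_eq_of_le {f : ℝ → ℝ} (hsurj : f '' unitI = unitI) {U : Set ℝ} {n m : ℕ}
    (hnm : n ≤ m) (h : f^[n] '' U = unitI) : f^[m] '' U = unitI := by
  induction m, hnm using Nat.le_induction with
  | base => exact h
  | succ m _ ih => rw [Function.iterate_succ', image_comp, ih, hsurj]

/-- Uniform exactness: all intervals of length at least `κ` cover the unit interval from a
common time on. -/
theorem exists_iterate_image_eq {f : ℝ → ℝ} (hmaps : MapsTo f unitI unitI) (hex : TopExact f)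
    {κ : ℝ} (hκ : 0 < κ) :
    ∃ N : ℕ, ∀ m, N ≤ m → ∀ W : Set ℝ, W.OrdConnected → W ⊆ unitI → κ ≤ Metric.diam W →
      f^[m] '' W = unitI := by
  obtain ⟨M, hM⟩ := exists_nat_gt (4 / κ)
  have hM0 : (0 : ℝ) < M := lt_trans (by positivity) hM
  have hMκ : 4 < M * κ := by rwa [div_lt_iff₀ hκ] at hM
  have hcell : ∀ i : ℕ, ∃ n : ℕ, i < M →
      f^[n] '' Ioo ((i : ℝ) / M) (((i : ℝ) + 1) / M) = unitI := by
    intro i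
    by_cases hi : i < M
    · have hi' : (i : ℝ) + 1 ≤ M := by exact_mod_cast hi
      have hsub : Ioo ((i : ℝ) / M) (((i : ℝ) + 1) / M) ⊆ unitI := by
        intro y hy
        exact ⟨le_trans (by positivity) hy.1.le, hy.2.le.trans ((div_le_one hM0).2 hi')⟩
      obtain ⟨n, -, h⟩ := hex _ (nonempty_Ioo.2 (by gcongr; linarith)) hsub
        ⟨_, isOpen_Ioo, (inter_eq_left.2 hsub).symm⟩
      exact ⟨n, fun _ => h⟩
    · exact ⟨0, fun h => absurd h hi⟩
  choose t ht using hcell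
  refine ⟨(Finset.range M).sup t, fun m hm W hW hWI hdiam => ?_⟩
  refine Subset.antisymm ((hmaps.iterate m).mono_left hWI).image_subset ?_
  obtain ⟨a, ha, b, hb, hab⟩ : ∃ a ∈ W, ∃ b ∈ W, κ / 2 < b - a := by
    by_contra! hcon
    have : Metric.diam W ≤ κ / 2 := Metric.diam_le_of_forall_dist_le (by positivity)
      fun x hx y hy => by
        rw [Real.dist_eq, abs_le]
        constructor <;> linarith [hcon x hx y hy, hcon y hy x hx]
    linarith
  -- The first full grid cell to the right of `a` starts at `(⌊a * M⌋ + 1) / M`.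
  have haM : 0 ≤ a * M := mul_nonneg (hWI ha).1 hM0.le
  have hfl := Nat.floor_le haM
  have hfl' := Nat.lt_floor_add_one (a * M)
  have hbM : (⌊a * M⌋₊ : ℝ) + 2 < b * M := by nlinarith
  have hbM1 : b * M ≤ M := by nlinarith [(hWI hb).2]
  have hi : ⌊a * M⌋₊ + 1 < M := by
    have : (⌊a * M⌋₊ : ℝ) + 1 < M := by linarith
    exact_mod_cast this
  have hsub : Ioo (((⌊a * M⌋₊ + 1 : ℕ) : ℝ) / M) ((((⌊a * M⌋₊ + 1 : ℕ) : ℝ) + 1) / M) ⊆ W := by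
    intro y hy
    have h1 := (div_lt_iff₀ hM0).1 hy.1
    have h2 := (lt_div_iff₀ hM0).1 hy.2
    push_cast at h1 h2
    exact hW.out ha hb ⟨le_of_mul_le_mul_right (by linarith) hM0,
      le_of_mul_le_mul_right (by linarith) hM0⟩
  have hle : t (⌊a * M⌋₊ + 1) ≤ m := (Finset.le_sup (Finset.mem_range.2 hi)).trans hm
  rw [← iterate_image_eq_of_le (surjOn_of_topExact hmaps hex) hle (ht _ hi)]
  exact image_mono hsub

theorem exists_equicontinuity_radius {f : ℝ → ℝ} (hcont : ContinuousOn f unitI)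
    (hmaps : MapsTo f unitI unitI) (N : ℕ) :
    ∃ η : ℝ, 0 < η ∧ ∀ k ≤ N, ∀ y ∈ unitI, ∀ z ∈ unitI, |y - z| < η →
      |f^[k] y - f^[k] z| < 1 := by
  have hk : ∀ k : ℕ, ∃ η : ℝ, 0 < η ∧ ∀ y ∈ unitI, ∀ z ∈ unitI, |y - z| < η →
      |f^[k] y - f^[k] z| < 1 := fun k =>
    Metric.uniformContinuousOn_iff.1
      (isCompact_Icc.uniformContinuousOn_of_continuous (hcont.iterate hmaps k)) 1 one_pos
  choose η hη hηk using hk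
  refine ⟨(Finset.range (N + 1)).inf' ⟨0, by simp⟩ η, ?_, ?_⟩
  · exact (Finset.lt_inf'_iff _).2 fun k _ => hη k
  · intro k hk y hy z hz hyz
    exact hηk k y hy z hz
      (hyz.trans_le (Finset.inf'_le _ (Finset.mem_range.2 (Nat.lt_succ_of_le hk))))

/-- **Backward Lyapunov stability** (Lemma 2.1): pull-backs of small balls are small. -/
theorem pullback_stability (f : ℝ → ℝ)
    (hmm : Multimodal f) (hc3 : C3Nonflat f) (hrep : AllPeriodicRepelling f)
    (hex : TopExact f) :
    ∀ κ : ℝ, 0 < κ → ∃ δ : ℝ, 0 < δ ∧ ∀ x ∈ unitI, ∀ n : ℕ, 1 ≤ n →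
      ∀ W : Set ℝ, IsPullback f n (ballI x δ) W → Metric.diam W < κ := by
  intro κ hκ
  obtain ⟨hcont, hmaps, -, -⟩ := hmm
  obtain ⟨N, hN⟩ := exists_iterate_image_eq hmaps hex hκ
  obtain ⟨η, hη, hequi⟩ := exists_equicontinuity_radius hcont hmaps N
  refine ⟨η / 2, by positivity, ?_⟩
  rintro x - n - W ⟨w, -, rfl⟩
  by_contra! hdiam
  set W := connectedComponentIn (unitI ∩ f^[n] ⁻¹' ballI x (η / 2)) w
  have hsub : W ⊆ unitI ∩ f^[n] ⁻¹' ballI x (η / 2) := connectedComponentIn_subset _ _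
  have hfull := hN (max n N) (le_max_right _ _) W
    isPreconnected_connectedComponentIn.ordConnected (fun y hy => (hsub hy).1) hdiam
  have hsplit : max n N = (max n N - n) + n := by omega
  rw [hsplit] at hfull
  obtain ⟨u, hu, hu0⟩ : (0 : ℝ) ∈ f^[max n N - n + n] '' W := by rw [hfull]; simp [unitI]
  obtain ⟨v, hv, hv1⟩ : (1 : ℝ) ∈ f^[max n N - n + n] '' W := by rw [hfull]; simp [unitI]
  rw [Function.iterate_add_apply] at hu0 hv1
  obtain ⟨huI, hux⟩ := (hsub hu).2
  obtain ⟨hvI, hvx⟩ := (hsub hv).2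
  have hclose : |f^[n] u - f^[n] v| < η := by
    rw [abs_lt] at hux hvx ⊢
    constructor <;> linarith [hux.1, hux.2, hvx.1, hvx.2]
  have h := hequi (max n N - n) (by omega) _ huI _ hvI hclose
  rw [hu0, hv1] at h
  norm_num at h

end
end

section
/- Let μ be a non-atomic Borel measure on I = [0,1] whose support equals I. Then μ is doubling if and only if there exists C > 1 such that for each x ∈ I and each ε > 0 with x ± ε ∈ I, one has C^{−1} μ((x, x+ε)) ≤ μ((x−ε, x)) ≤ C μ((x, x+ε)). -/
/-!
The measure `μ` may be infinite, so all estimates are carried out in `ℝ≥0∞`, without subtraction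
or division.

If `μ` is doubling at scales below `r₀`, balls of radius `1 / N < r₀` whose centers are `1 / N`
apart have comparable measures; chaining at most `N` such comparisons bounds `μ I` by a multiple of
the measure of any ball of radius `1 / N`, so the doubling inequality holds at every scale
(`doublingOn_all_scales`). The interval `(x - ε, x)` is the ball of radius `ε / 2` about
`x - ε / 2`, and multiplying its radius by `4` covers `(x, x + ε)`: two doublings give the
comparison of adjacent intervals.

Conversely, `B_I(x, 2r)` consists of `B_I(x, r)`, a right part in `[x + r, x + 2r)` and a left part
in `(x - 2r, x - r]`. Up to endpoints, which are null, the right part is contained in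
`(x + r, x + r + δ)` with `δ = min r (1 - x - r)`; the adjacent interval `(x + r - δ, x + r)` lies
in `B_I(x, r)` (`measure_right_part_le`), and symmetrically on the left.
-/

open Set MeasureTheory Metric Filter

noncomputable section

lemma ballI_mono {x r s : ℝ} (h : r ≤ s) : ballI x r ⊆ ballI x s :=
  fun _ hy => ⟨hy.1, hy.2.trans_le h⟩

/-- Chaining the doubling inequality at one scale `s`: moving the center by at most `s` costs a
factor `c`, hence moving it by at most `n * s` costs `c ^ n`. -/
lemma measure_ballI_le_pow (μ : Measure ℝ) {c : ENNReal} {s : ℝ}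
    (h : ∀ x ∈ unitI, μ (ballI x (2 * s)) ≤ c * μ (ballI x s)) (n : ℕ) :
    ∀ y ∈ unitI, ∀ z ∈ unitI, |y - z| ≤ n * s → μ (ballI z s) ≤ c ^ n * μ (ballI y s) := by
  induction n with
  | zero =>
    intro y _ z _ hyz
    have : y = z := by
      have : |y - z| ≤ 0 := by simpa using hyz
      exact sub_eq_zero.1 (abs_nonpos_iff.1 this)
    simp [this]
  | succ n ih =>
    intro y hy z hz hyz
    -- `w` divides the segment from `y` to `z` in the ratio `n : 1`.
    obtain ⟨w, hw, hyw, hwz⟩ : ∃ w ∈ unitI, |y - w| ≤ n * s ∧ |w - z| ≤ s := by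
      have hn : (0 : ℝ) < n + 1 := by positivity
      have hyz' : |y - z| / (n + 1) ≤ s := by
        rw [div_le_iff₀ hn]; push_cast at hyz; linarith
      refine ⟨y + (n / (n + 1)) * (z - y), ?_, ?_, ?_⟩
      · have hconv : Convex ℝ unitI := convex_Icc 0 1
        refine hconv.add_smul_sub_mem hy hz ⟨by positivity, ?_⟩
        rw [div_le_one hn]; linarith
      · have : y - (y + (n / (n + 1)) * (z - y)) = n * ((y - z) / (n + 1)) := by
          field_simp; ring
        rw [this, abs_mul, abs_div, abs_of_pos hn, Nat.abs_cast]
        gcongr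
      · have : y + (n / (n + 1)) * (z - y) - z = (y - z) / (n + 1) := by
          field_simp; ring
        rw [this, abs_div, abs_of_pos hn]
        exact hyz'
    have hsub : ballI z s ⊆ ballI w (2 * s) := by
      rintro t ⟨ht, hzt⟩
      refine ⟨ht, ?_⟩
      have := abs_sub_le w z t
      linarith
    calc μ (ballI z s) ≤ μ (ballI w (2 * s)) := measure_mono hsub
      _ ≤ c * μ (ballI w s) := h w hw
      _ ≤ c * (c ^ n * μ (ballI y s)) := by gcongr; exact ih y hy w hw hyw
      _ = c ^ (n + 1) * μ (ballI y s) := by ring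

lemma unitI_subset_iUnion_ballI {N : ℕ} (hN : 0 < N) :
    unitI ⊆ ⋃ k ∈ Finset.range (N + 1), ballI ((k : ℝ) / N) (1 / N) := by
  intro t ht
  have hN' : (0 : ℝ) < N := by exact_mod_cast hN
  have h0 : 0 ≤ t * N := mul_nonneg ht.1 hN'.le
  simp only [mem_iUnion, Finset.mem_range]
  refine ⟨⌊t * N⌋₊, ?_, ht, ?_⟩
  · have : (⌊t * N⌋₊ : ℝ) ≤ N := (Nat.floor_le h0).trans (by nlinarith [ht.2])
    have : ⌊t * N⌋₊ ≤ N := by exact_mod_cast this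
    omega
  · have h1 := Nat.floor_le h0
    have h2 := Nat.lt_floor_add_one (t * N)
    have : (⌊t * N⌋₊ : ℝ) / N - t = (⌊t * N⌋₊ - t * N) / N := by field_simp
    rw [this, abs_div, abs_of_pos hN']
    gcongr
    rw [abs_lt]
    constructor <;> linarith

/-- The scale restriction in the definition of doubling can be dropped. -/
lemma doublingOn_all_scales {μ : Measure ℝ} (h : DoublingOn μ) :
    ∃ D : ℝ, 0 < D ∧ ∀ x ∈ unitI, ∀ r : ℝ, 0 < r →
      μ (ballI x (2 * r)) ≤ ENNReal.ofReal D * μ (ballI x r) := by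
  obtain ⟨C, hC, r₀, hr₀, h⟩ := h
  obtain ⟨m, hm⟩ := exists_nat_one_div_lt hr₀
  obtain ⟨N, hN, hNr⟩ : ∃ N : ℕ, 0 < N ∧ 1 / (N : ℝ) < r₀ :=
    ⟨m + 1, m.succ_pos, by exact_mod_cast hm⟩
  have hN' : (0 : ℝ) < N := by exact_mod_cast hN
  have hs : (0 : ℝ) < 1 / N := by positivity
  have hI : ∀ y ∈ unitI,
      μ unitI ≤ ENNReal.ofReal ((N + 1) * C ^ N) * μ (ballI y (1 / N)) := by
    intro y hy
    have hk : ∀ k ∈ Finset.range (N + 1), μ (ballI ((k : ℝ) / N) (1 / N)) ≤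
        ENNReal.ofReal C ^ N * μ (ballI y (1 / N)) := by
      intro k hk
      have hkN : (k : ℝ) ≤ N := by
        exact_mod_cast Nat.lt_succ_iff.1 (Finset.mem_range.1 hk)
      have hkI : (k : ℝ) / N ∈ unitI := ⟨by positivity, (div_le_one hN').2 hkN⟩
      refine measure_ballI_le_pow μ (fun x hx => h x hx _ hs hNr) N y hy _ hkI ?_
      rw [mul_one_div_cancel hN'.ne', abs_le]
      constructor <;> linarith [hy.1, hy.2, hkI.1, hkI.2]
    calc μ unitI ≤ μ (⋃ k ∈ Finset.range (N + 1), ballI ((k : ℝ) / N) (1 / N)) :=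
          measure_mono (unitI_subset_iUnion_ballI hN)
      _ ≤ ∑ k ∈ Finset.range (N + 1), μ (ballI ((k : ℝ) / N) (1 / N)) :=
          measure_biUnion_finset_le _ _
      _ ≤ ∑ k ∈ Finset.range (N + 1), ENNReal.ofReal C ^ N * μ (ballI y (1 / N)) :=
          Finset.sum_le_sum hk
      _ = ENNReal.ofReal ((N + 1) * C ^ N) * μ (ballI y (1 / N)) := by
          rw [Finset.sum_const, Finset.card_range, nsmul_eq_mul,
            ENNReal.ofReal_mul (by positivity), ENNReal.ofReal_pow hC.le,
            ENNReal.ofReal_add hN'.le zero_le_one, ENNReal.ofReal_natCast, ENNReal.ofReal_one,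
            Nat.cast_add, Nat.cast_one, mul_assoc]
  have hK : 0 < (N + 1) * C ^ N := by positivity
  refine ⟨C + (N + 1) * C ^ N, by positivity, fun x hx r hr => ?_⟩
  rcases lt_or_ge r (1 / N) with hrN | hrN
  · refine (h x hx r hr (hrN.trans hNr)).trans ?_
    gcongr
    linarith
  · calc μ (ballI x (2 * r)) ≤ μ unitI := measure_mono fun _ hy => hy.1
      _ ≤ ENNReal.ofReal ((N + 1) * C ^ N) * μ (ballI x (1 / N)) := hI x hx
      _ ≤ ENNReal.ofReal (C + (N + 1) * C ^ N) * μ (ballI x r) := by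
          gcongr
          · linarith
          · exact ballI_mono hrN

lemma measure_right_part_le {μ : Measure ℝ} (hna : ∀ x : ℝ, μ {x} = 0) {c : ENNReal}
    (h : ∀ x ∈ unitI, ∀ ε : ℝ, 0 < ε → x + ε ∈ unitI → x - ε ∈ unitI →
      μ (Ioo x (x + ε)) ≤ c * μ (Ioo (x - ε) x))
    {x r : ℝ} (hx : x ∈ unitI) (hr : 0 < r) :
    μ (unitI ∩ Ico (x + r) (x + 2 * r)) ≤ c * μ (ballI x r) := by
  obtain ⟨hx0, hx1⟩ := hx
  rcases lt_or_ge (x + r) 1 with h1 | h1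
  · obtain ⟨δ, hδ, hδr, hδ1, hδ'⟩ : ∃ δ : ℝ, 0 < δ ∧ δ ≤ r ∧ δ ≤ 1 - (x + r) ∧
        (δ = r ∨ δ = 1 - (x + r)) :=
      ⟨min r (1 - (x + r)), lt_min hr (by linarith), min_le_left _ _, min_le_right _ _,
        min_choice _ _⟩
    have hsub : unitI ∩ Ico (x + r) (x + 2 * r) ⊆
        Ioo (x + r) (x + r + δ) ∪ ({x + r} ∪ {1}) := by
      rintro y ⟨⟨hy0, hy1⟩, hya, hyb⟩
      by_cases e1 : y = x + r
      · simp [e1]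
      by_cases e2 : y = 1
      · simp [e2]
      have l1 := lt_of_le_of_ne hya (Ne.symm e1)
      have l2 := lt_of_le_of_ne hy1 e2
      exact Or.inl ⟨l1, by rcases hδ' with e | e <;> linarith⟩
    have hsub' : Ioo (x + r - δ) (x + r) ⊆ ballI x r := by
      rintro y ⟨hya, hyb⟩
      exact ⟨⟨by linarith, by linarith⟩, abs_lt.2 ⟨by linarith, by linarith⟩⟩
    calc μ (unitI ∩ Ico (x + r) (x + 2 * r))
        ≤ μ (Ioo (x + r) (x + r + δ) ∪ ({x + r} ∪ {1})) := measure_mono hsub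
      _ = μ (Ioo (x + r) (x + r + δ)) :=
          measure_congr (union_ae_eq_left_of_ae_eq_empty
            (ae_eq_empty.2 (measure_union_null (hna _) (hna _))))
      _ ≤ c * μ (Ioo (x + r - δ) (x + r)) :=
          h _ ⟨by linarith, h1.le⟩ δ hδ ⟨by linarith, by linarith⟩ ⟨by linarith, by linarith⟩
      _ ≤ c * μ (ballI x r) := by gcongr
  · -- Here the right part is contained in `{1}`.
    have hsub : unitI ∩ Ico (x + r) (x + 2 * r) ⊆ {1} := by
      rintro y ⟨⟨_, hy1⟩, hya, _⟩
      exact le_antisymm hy1 (h1.trans hya)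
    rw [measure_mono_null hsub (hna 1)]
    exact zero_le

lemma measure_left_part_le {μ : Measure ℝ} (hna : ∀ x : ℝ, μ {x} = 0) {c : ENNReal}
    (h : ∀ x ∈ unitI, ∀ ε : ℝ, 0 < ε → x + ε ∈ unitI → x - ε ∈ unitI →
      μ (Ioo (x - ε) x) ≤ c * μ (Ioo x (x + ε)))
    {x r : ℝ} (hx : x ∈ unitI) (hr : 0 < r) :
    μ (unitI ∩ Ioc (x - 2 * r) (x - r)) ≤ c * μ (ballI x r) := by
  obtain ⟨hx0, hx1⟩ := hx
  rcases lt_or_ge 0 (x - r) with h1 | h1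
  · obtain ⟨δ, hδ, hδr, hδ1, hδ'⟩ : ∃ δ : ℝ, 0 < δ ∧ δ ≤ r ∧ δ ≤ x - r ∧
        (δ = r ∨ δ = x - r) :=
      ⟨min r (x - r), lt_min hr h1, min_le_left _ _, min_le_right _ _, min_choice _ _⟩
    have hsub : unitI ∩ Ioc (x - 2 * r) (x - r) ⊆
        Ioo (x - r - δ) (x - r) ∪ ({x - r} ∪ {0}) := by
      rintro y ⟨⟨hy0, hy1⟩, hya, hyb⟩
      by_cases e1 : y = x - r
      · simp [e1]
      by_cases e2 : y = 0
      · simp [e2]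
      have l1 := lt_of_le_of_ne hyb e1
      have l2 := lt_of_le_of_ne hy0 (Ne.symm e2)
      exact Or.inl ⟨by rcases hδ' with e | e <;> linarith, l1⟩
    have hsub' : Ioo (x - r) (x - r + δ) ⊆ ballI x r := by
      rintro y ⟨hya, hyb⟩
      exact ⟨⟨by linarith, by linarith⟩, abs_lt.2 ⟨by linarith, by linarith⟩⟩
    calc μ (unitI ∩ Ioc (x - 2 * r) (x - r))
        ≤ μ (Ioo (x - r - δ) (x - r) ∪ ({x - r} ∪ {0})) := measure_mono hsub
      _ = μ (Ioo (x - r - δ) (x - r)) :=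
          measure_congr (union_ae_eq_left_of_ae_eq_empty
            (ae_eq_empty.2 (measure_union_null (hna _) (hna _))))
      _ ≤ c * μ (Ioo (x - r) (x - r + δ)) :=
          h _ ⟨h1.le, by linarith⟩ δ hδ ⟨by linarith, by linarith⟩ ⟨by linarith, by linarith⟩
      _ ≤ c * μ (ballI x r) := by gcongr
  · -- Here the left part is contained in `{0}`.
    have hsub : unitI ∩ Ioc (x - 2 * r) (x - r) ⊆ {0} := by
      rintro y ⟨⟨hy0, _⟩, _, hyb⟩
      exact le_antisymm (hyb.trans h1) hy0
    rw [measure_mono_null hsub (hna 0)]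
    exact zero_le

/-- **Lemma 2.4**: a non-atomic Borel measure with support equal to `I` is doubling if
and only if measures of adjacent intervals of equal length are comparable. -/
theorem doubling_iff_adjacent (μ : Measure ℝ)
    (hna : ∀ x : ℝ, μ {x} = 0) (hz : μ unitIᶜ = 0)
    (hsupp : ∀ x ∈ unitI, ∀ r : ℝ, 0 < r → 0 < μ (ballI x r)) :
    DoublingOn μ ↔ ∃ C : ℝ, 1 < C ∧ ∀ x ∈ unitI, ∀ ε : ℝ, 0 < ε →
      x + ε ∈ unitI → x - ε ∈ unitI →
      μ (Set.Ioo x (x + ε)) ≤ ENNReal.ofReal C * μ (Set.Ioo (x - ε) x) ∧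
      μ (Set.Ioo (x - ε) x) ≤ ENNReal.ofReal C * μ (Set.Ioo x (x + ε)) := by
  constructor
  · intro hd
    obtain ⟨D, hD, hd⟩ := doublingOn_all_scales hd
    -- `4 * ρ` is reached from `ρ` by doubling twice.
    have key : ∀ y ∈ unitI, ∀ ρ : ℝ, 0 < ρ →
        μ (ballI y (4 * ρ)) ≤ ENNReal.ofReal (D ^ 2 + 2) * μ (ballI y ρ) := by
      intro y hy ρ hρ
      calc μ (ballI y (4 * ρ)) = μ (ballI y (2 * (2 * ρ))) := by congr 2; ring
        _ ≤ ENNReal.ofReal D * μ (ballI y (2 * ρ)) := hd y hy _ (by positivity)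
        _ ≤ ENNReal.ofReal D * (ENNReal.ofReal D * μ (ballI y ρ)) := by
            gcongr; exact hd y hy ρ hρ
        _ = ENNReal.ofReal (D ^ 2) * μ (ballI y ρ) := by
            rw [← mul_assoc, ← ENNReal.ofReal_mul hD.le, sq]
        _ ≤ ENNReal.ofReal (D ^ 2 + 2) * μ (ballI y ρ) := by gcongr; linarith
    refine ⟨D ^ 2 + 2, by nlinarith, ?_⟩
    rintro x ⟨hx0, hx1⟩ ε hε ⟨hp0, hp1⟩ ⟨hm0, hm1⟩
    constructor
    · refine (measure_mono ?_).trans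
        ((key (x - ε / 2) ⟨by linarith, by linarith⟩ (ε / 2) (by positivity)).trans ?_)
      · rintro y ⟨hya, hyb⟩
        exact ⟨⟨by linarith, by linarith⟩, abs_lt.2 ⟨by linarith, by linarith⟩⟩
      · gcongr
        rintro y ⟨_, hy⟩
        rw [abs_lt] at hy
        exact ⟨by linarith [hy.2], by linarith [hy.1]⟩
    · refine (measure_mono ?_).trans
        ((key (x + ε / 2) ⟨by linarith, by linarith⟩ (ε / 2) (by positivity)).trans ?_)
      · rintro y ⟨hya, hyb⟩
        exact ⟨⟨by linarith, by linarith⟩, abs_lt.2 ⟨by linarith, by linarith⟩⟩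
      · gcongr
        rintro y ⟨_, hy⟩
        rw [abs_lt] at hy
        exact ⟨by linarith [hy.2], by linarith [hy.1]⟩
  · rintro ⟨C, hC, h⟩
    refine ⟨1 + C + C, by linarith, 1, one_pos, fun x hx r hr _ => ?_⟩
    have hR := measure_right_part_le hna (fun x hx ε hε hp hm => (h x hx ε hε hp hm).1) hx hr
    have hL := measure_left_part_le hna (fun x hx ε hε hp hm => (h x hx ε hε hp hm).2) hx hr
    have hsub : ballI x (2 * r) ⊆ ballI x r ∪ unitI ∩ Ico (x + r) (x + 2 * r) ∪
        unitI ∩ Ioc (x - 2 * r) (x - r) := by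
      rintro y ⟨hyI, hy⟩
      rw [abs_lt] at hy
      by_cases h1 : x + r ≤ y
      · exact Or.inl (Or.inr ⟨hyI, h1, by linarith [hy.1]⟩)
      by_cases h2 : y ≤ x - r
      · exact Or.inr ⟨hyI, by linarith [hy.2], h2⟩
      exact Or.inl (Or.inl ⟨hyI, abs_lt.2 ⟨by linarith, by linarith⟩⟩)
    calc μ (ballI x (2 * r))
        ≤ μ (ballI x r) + μ (unitI ∩ Ico (x + r) (x + 2 * r)) +
            μ (unitI ∩ Ioc (x - 2 * r) (x - r)) :=
          (measure_mono hsub).trans ((measure_union_le _ _).trans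
            (by gcongr; exact measure_union_le _ _))
      _ ≤ μ (ballI x r) + ENNReal.ofReal C * μ (ballI x r) +
            ENNReal.ofReal C * μ (ballI x r) := by gcongr
      _ = ENNReal.ofReal (1 + C + C) * μ (ballI x r) := by
          rw [ENNReal.ofReal_add (by linarith) (by linarith),
            ENNReal.ofReal_add zero_le_one (by linarith), ENNReal.ofReal_one, add_mul, add_mul,
            one_mul]

end
end

section
/- Let f: [0,1] → [0,1] be a multimodal map of class C^3 with non-flat critical points, with all periodic points hyperbolic repelling, and topologically exact, and let μ_f be its maximal entropy measure (the unique f-invariant Borel probability measure of maximal entropy; it is non-atomic, has full support, and has constant Jacobian exp(h_top(f))). If μ_f is doubling, then f has no recurrent critical points. -/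
/-!
Why a doubling measure of maximal entropy excludes recurrent critical points.

Let `h` be the distribution function of `μ`, so that in the coordinate `t = h x` the map `f` is
piecewise affine with slope `± s`, `s = exp (htop f) > 1`. Since `μ` is doubling, so is the inverse
`H` of `h`: the Euclidean length `LL H t v` of the ball of radius `v` about `t` in the measure
coordinate at most multiplies by a constant when `v` doubles, and it grows by a definite factor when
`v` is multiplied by `s` (`DH`, `DH.LL_growth`). Put `RR = log LL`.

The map `f` sends the profile `v ↦ RR (h y) v` to `v ↦ RR (h (f y)) (s * v)`. If `η` is comparable
to the measure distance from `y` to the critical set, then for `v ≤ η` the two profiles have the same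
increments up to errors summable over the scales, by bounded distortion (`Dyn.S1`, where only a
bound of `(log |f'|)'` by the inverse distance to the critical points is needed). For `v ≥ η` the
second profile is `ℓ` times the first up to a bounded error, where `ℓ > 1` is the order of the
critical point (`Dyn.S2`).

For `θ < 1` consider the potential `FF (h y) u = ∑ θ ^ k (r (k + 1) - r k)`, where
`r k = RR (h y) (u * s ^ k)`. By the previous paragraph, passing from `(y, u)` to `(f y, s * u)`
loses at most a bounded multiple of `θ ^ K`, where `K` is the number of steps from `u` to the scale
`η`, while proximity to a critical point gives a gain of `(1 - 1 / ℓ) θ ^ K` times the potential at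
the scale `η`. By reverse doubling the potential at small scales is as large as desired once `θ` is
close to `1`, so the gain wins (`Dyn.main_step`). An endpoint of `[0,1]` mapped to an interior point
folds balls without being critical; the loss there is paid by a correction term measuring the
distance to the boundary, which an orbit can acquire only near a critical point.

Hence along any orbit the potential is nondecreasing up to a bounded error. At a critical point `c`,
however, `FF (h c) u ≤ FF (h (f c)) (s * u) / ℓ` up to a constant. If `c` is recurrent, an orbit
segment from `c` back close to `c` gives `FF (h c) (r / s ^ n) ≤ FF (h c) r / ℓ + C`, which is at
most `FF (h c) r - 1`. Iterating contradicts `FF ≥ 0` (`Dyn.no_recurrent`).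
-/

open Set MeasureTheory Metric Filter

noncomputable section

/-! ### The discounted potential of a sequence -/

/-- The discounted total increment `(1 - θ) ∑ θ ^ k r (k + 1) - r 0 = ∑ θ ^ k (r (k + 1) - r k)`
of a bounded sequence `r`. The first form is used because it makes the dependence on `r` explicitly
linear. -/
def Phi (θ : ℝ) (r : ℕ → ℝ) : ℝ := (1 - θ) * ∑' k, θ ^ k * r (k + 1) - r 0

lemma Phi_summable {θ : ℝ} (h0 : 0 < θ) (h1 : θ < 1) {r : ℕ → ℝ} {B : ℝ}
    (hr : ∀ k, |r k| ≤ B) : Summable fun k => θ ^ k * r k := by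
  refine Summable.of_norm_bounded (g := fun k => θ ^ k * B)
    ((summable_geometric_of_lt_one h0.le h1).mul_right B) fun k => ?_
  rw [Real.norm_eq_abs, abs_mul, abs_of_pos (pow_pos h0 k)]
  exact mul_le_mul_of_nonneg_left (hr k) (pow_pos h0 k).le

lemma Phi_succ {θ : ℝ} (h0 : 0 < θ) (h1 : θ < 1) {r : ℕ → ℝ} {B : ℝ}
    (hr : ∀ k, |r k| ≤ B) :
    Phi θ r = (r 1 - r 0) + θ * Phi θ (fun k => r (k + 1)) := by
  have hs := Phi_summable h0 h1 (r := fun k => r (k + 1)) (fun k => hr (k + 1))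
  unfold Phi
  rw [hs.tsum_eq_zero_add]
  have : ∑' k, θ ^ (k + 1) * r (k + 1 + 1) = θ * ∑' k, θ ^ k * r (k + 1 + 1) := by
    rw [← tsum_mul_left]
    exact tsum_congr fun k => by ring
  simp only [this]
  ring_nf

/-- Summation by parts: the first `K` increments, plus the discounted potential of the tail. -/
lemma Phi_split {θ : ℝ} (h0 : 0 < θ) (h1 : θ < 1) {B : ℝ} (K : ℕ) :
    ∀ {r : ℕ → ℝ}, (∀ k, |r k| ≤ B) →
    Phi θ r = ∑ k ∈ Finset.range K, θ ^ k * (r (k + 1) - r k)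
      + θ ^ K * Phi θ (fun k => r (k + K)) := by
  induction K with
  | zero => intro r hr; simp
  | succ K ih =>
    intro r hr
    rw [ih hr, Phi_succ h0 h1 (r := fun k => r (k + K)) (fun k => hr _), Finset.sum_range_succ]
    have e : (fun k => r (k + 1 + K)) = fun k => r (k + (K + 1)) := by
      funext k; congr 1; omega
    simp only [e, zero_add, add_comm 1 K, pow_succ]
    ring

/-- A bounded discrepancy between `g` and `l * r` costs at most twice the bound, uniformly in
the discount `θ`. -/
lemma Phi_compare {θ : ℝ} (h0 : 0 < θ) (h1 : θ < 1) {r g : ℕ → ℝ} {B C l : ℝ}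
    (hr : ∀ k, |r k| ≤ B) (hg : ∀ k, |g k| ≤ B) (hC : ∀ k, |g k - l * r k| ≤ C) :
    |Phi θ g - l * Phi θ r| ≤ 2 * C := by
  have hs := Phi_summable h0 h1 (r := fun k => r (k + 1)) (fun k => hr (k + 1))
  have hs' := Phi_summable h0 h1 (r := fun k => g (k + 1)) (fun k => hg (k + 1))
  have e : Phi θ g - l * Phi θ r
      = (1 - θ) * ∑' k, θ ^ k * (g (k + 1) - l * r (k + 1)) - (g 0 - l * r 0) := by
    unfold Phi
    have : ∑' k, θ ^ k * (g (k + 1) - l * r (k + 1))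
        = ∑' k, θ ^ k * g (k + 1) - l * ∑' k, θ ^ k * r (k + 1) := by
      rw [← tsum_mul_left, ← hs'.tsum_sub (hs.mul_left l)]
      exact tsum_congr fun k => by ring
    rw [this]; ring
  have hb : |∑' k, θ ^ k * (g (k + 1) - l * r (k + 1))| ≤ (1 - θ)⁻¹ * C := by
    have := tsum_of_norm_bounded (f := fun k => θ ^ k * (g (k + 1) - l * r (k + 1)))
      ((hasSum_geometric_of_lt_one h0.le h1).mul_right C) (fun k => by
        rw [Real.norm_eq_abs, abs_mul, abs_of_pos (pow_pos h0 k)]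
        exact mul_le_mul_of_nonneg_left (hC _) (pow_pos h0 k).le)
    simpa using this
  have hp : 0 < 1 - θ := by linarith
  rw [e]
  calc _ ≤ |(1 - θ) * ∑' k, θ ^ k * (g (k + 1) - l * r (k + 1))| + |g 0 - l * r 0| := abs_sub _ _
    _ ≤ C + C := by
      refine add_le_add ?_ (hC 0)
      rw [abs_mul, abs_of_pos hp]
      calc _ ≤ (1 - θ) * ((1 - θ)⁻¹ * C) := mul_le_mul_of_nonneg_left hb hp.le
        _ = C := by field_simp
    _ = 2 * C := by ring

lemma Phi_nonneg {θ : ℝ} (h0 : 0 < θ) (h1 : θ < 1) {r : ℕ → ℝ} {B : ℝ}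
    (hr : ∀ k, |r k| ≤ B) (hm : Monotone r) : 0 ≤ Phi θ r := by
  have hs := Phi_summable h0 h1 (r := fun k => r (k + 1)) (fun k => hr (k + 1))
  have h2 : (1 - θ)⁻¹ * r 0 ≤ ∑' k, θ ^ k * r (k + 1) := by
    refine hasSum_le (fun k => ?_) ((hasSum_geometric_of_lt_one h0.le h1).mul_right (r 0))
      hs.hasSum
    exact mul_le_mul_of_nonneg_left (hm (Nat.zero_le _)) (pow_pos h0 k).le
  have hp : 0 < 1 - θ := by linarith
  have := mul_le_mul_of_nonneg_left h2 hp.le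
  rw [← mul_assoc, mul_inv_cancel₀ hp.ne', one_mul] at this
  unfold Phi; linarith

lemma Phi_lower {θ : ℝ} (h0 : 0 < θ) (h1 : θ < 1) {r : ℕ → ℝ} {B : ℝ}
    (hr : ∀ k, |r k| ≤ B) (hm : Monotone r) (K : ℕ) : θ ^ K * (r K - r 0) ≤ Phi θ r := by
  rw [Phi_split h0 h1 K hr]
  have h3 : 0 ≤ θ ^ K * Phi θ (fun k => r (k + K)) :=
    mul_nonneg (pow_pos h0 K).le (Phi_nonneg h0 h1 (fun k => hr _)
      (fun a b hab => hm (by omega)))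
  have h4 : θ ^ K * (r K - r 0) ≤ ∑ k ∈ Finset.range K, θ ^ k * (r (k + 1) - r k) := by
    rw [← Finset.sum_range_sub, Finset.mul_sum]
    refine Finset.sum_le_sum fun k hk => ?_
    refine mul_le_mul_of_nonneg_right ?_ (by linarith [hm (Nat.le_succ k)])
    exact pow_le_pow_of_le_one h0.le h1.le (Finset.mem_range.1 hk).le
  linarith

/-- If the increments of `r` below the index `K` are those of `g` up to an error decaying
geometrically away from `K`, and `g ≈ l * r` beyond `K`, then `Phi θ r` exceeds `Phi θ g` by at most
a bounded multiple of `θ ^ K`. When `l > 1` there is moreover a gain proportional to the potential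
of the tail of `g`. -/
lemma Phi_step {θ γ ρ C l B : ℝ} (h0 : 1 / 2 ≤ θ) (h1 : θ < 1) (hγ0 : 0 < γ) (hρ : ρ < 1)
    (hγ : γ ≤ ρ * θ) (hC : 0 ≤ C) (hl : 1 ≤ l) {r g : ℕ → ℝ}
    (hr : ∀ k, |r k| ≤ B) (hg : ∀ k, |g k| ≤ B) (K : ℕ)
    (hlow : ∀ k, k < K → r (k + 1) - r k ≤ g (k + 1) - g k + C * γ ^ (K - 1 - k))
    (hhigh : ∀ k, K ≤ k → |g k - l * r k| ≤ C) :
    Phi θ r ≤ Phi θ g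
      + θ ^ K * (2 * C / (1 - ρ) + 2 * C - (1 - 1 / l) * Phi θ (fun k => g (k + K))) := by
  have hθ : 0 < θ := by linarith
  have hρ0 : 0 < ρ := by
    by_contra h
    nlinarith
  have hl0 : 0 < l := by linarith
  rw [Phi_split hθ h1 K hr, Phi_split hθ h1 K hg]
  have hcmp := Phi_compare hθ h1 (r := fun k => r (k + K)) (g := fun k => g (k + K))
    (C := C) (l := l) (fun k => hr _) (fun k => hg _) (fun k => hhigh _ (Nat.le_add_left _ _))
  have hr' : Phi θ (fun k => r (k + K)) ≤ (Phi θ (fun k => g (k + K)) + 2 * C) / l := by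
    rw [le_div_iff₀ hl0]
    have := (abs_le.1 hcmp).1
    linarith
  have hr'' : Phi θ (fun k => r (k + K)) ≤ 1 / l * Phi θ (fun k => g (k + K)) + 2 * C := by
    refine hr'.trans ?_
    have : 2 * C / l ≤ 2 * C := div_le_self (by linarith) hl
    rw [add_div]
    have e : Phi θ (fun k => g (k + K)) / l = 1 / l * Phi θ (fun k => g (k + K)) := by ring
    linarith
  have hsum : ∑ k ∈ Finset.range K, θ ^ k * (r (k + 1) - r k)
      ≤ ∑ k ∈ Finset.range K, θ ^ k * (g (k + 1) - g k) + θ ^ K * (2 * C / (1 - ρ)) := by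
    have a : ∀ k ∈ Finset.range K, θ ^ k * (r (k + 1) - r k)
        ≤ θ ^ k * (g (k + 1) - g k) + θ ^ K * (2 * C) * ρ ^ (K - 1 - k) := by
      intro k hk
      have hk := Finset.mem_range.1 hk
      have h2 := mul_le_mul_of_nonneg_left (hlow k hk) (pow_pos hθ k).le
      have h3 : γ ^ (K - 1 - k) ≤ ρ ^ (K - 1 - k) * θ ^ (K - 1 - k) := by
        rw [← mul_pow]; exact pow_le_pow_left₀ hγ0.le hγ _
      have h4 : θ ^ k * γ ^ (K - 1 - k) ≤ 2 * θ ^ K * ρ ^ (K - 1 - k) := by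
        calc _ ≤ θ ^ k * (ρ ^ (K - 1 - k) * θ ^ (K - 1 - k)) :=
              mul_le_mul_of_nonneg_left h3 (pow_pos hθ k).le
          _ = θ ^ (K - 1) * ρ ^ (K - 1 - k) := by
              have : K - 1 = k + (K - 1 - k) := by omega
              conv_rhs => rw [this, pow_add]
              have e2 : k + (K - 1 - k) - k = K - 1 - k := by omega
              rw [e2]
              ring
          _ ≤ _ := by
              refine mul_le_mul_of_nonneg_right ?_ (pow_pos hρ0 _).le
              have : K = (K - 1) + 1 := by omega
              conv_rhs => rw [this, pow_succ]
              have := pow_pos hθ (K - 1)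
              nlinarith
      have h5 := mul_le_mul_of_nonneg_left h4 hC
      nlinarith
    refine (Finset.sum_le_sum a).trans ?_
    rw [Finset.sum_add_distrib, ← Finset.mul_sum,
      Finset.sum_range_reflect (fun k => ρ ^ k) K]
    have hgeo : ∑ k ∈ Finset.range K, ρ ^ k ≤ (1 - ρ)⁻¹ := by
      have := Summable.sum_le_tsum (Finset.range K) (fun k _ => (pow_pos hρ0 k).le)
        (summable_geometric_of_lt_one hρ0.le hρ)
      rwa [tsum_geometric_of_lt_one hρ0.le hρ] at this
    have := mul_le_mul_of_nonneg_left hgeo (show 0 ≤ θ ^ K * (2 * C) by positivity)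
    have e : θ ^ K * (2 * C / (1 - ρ)) = θ ^ K * (2 * C) * (1 - ρ)⁻¹ := by
      rw [div_eq_mul_inv]; ring
    linarith
  have := mul_le_mul_of_nonneg_left hr'' (pow_pos hθ K).le
  nlinarith

/-! ### The measure coordinate -/

/-- `h` is the distribution function of a non-atomic probability measure with support `[0,1]`,
`H` is its inverse on `[0,1]` (extended by the constants `0` and `1`), and doubling the radius of a
ball in the measure coordinate multiplies its Euclidean length by at most `K`. -/
structure DH (h H : ℝ → ℝ) (K : ℝ) : Prop where
  mono : Monotone h
  smono : StrictMonoOn h (Icc 0 1)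
  cont : Continuous h
  zero : ∀ x ≤ 0, h x = 0
  one : ∀ x, 1 ≤ x → h x = 1
  Hmem : ∀ t, H t ∈ Icc (0 : ℝ) 1
  hH : ∀ t, h (H t) = max 0 (min 1 t)
  oneK : 1 ≤ K
  dbl : ∀ t ∈ Icc (0 : ℝ) 1, ∀ v > 0, H (t + 2 * v) - H (t - 2 * v) ≤ K * (H (t + v) - H (t - v))

/-- Doubling forces each dyadic block to the right of `[p, q]` to have a definite proportion of the
mass of `[p, q]`; `n` such blocks add up. -/
lemma block_sum {h : ℝ → ℝ} (hm : Monotone h) {C r₀ : ℝ} (hC : 0 ≤ C)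
    (hd : ∀ x ∈ Icc (0 : ℝ) 1, ∀ r, 0 < r → r < r₀ →
      h (x + 2 * r) - h (x - 2 * r) ≤ C * (h (x + r) - h (x - r)))
    {p q : ℝ} (hp : 0 ≤ p) (hpq : p < q) (n : ℕ) :
    q + 2 ^ (n + 1) * (q - p) ≤ 1 → 2 ^ n * (q - p) < r₀ →
    n * (h q - h p) ≤ C ^ 2 * (h (q + 2 ^ (n + 1) * (q - p)) - h q) := by
  induction n with
  | zero =>
    intro _ _
    have : h q ≤ h (q + 2 ^ (0 + 1) * (q - p)) := hm (by norm_num; linarith)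
    have := mul_nonneg (sq_nonneg C) (sub_nonneg.2 this)
    simpa using this
  | succ n ih =>
    intro h1 h2
    have hl : 0 < q - p := by linarith
    set X : ℝ := 2 ^ (n + 1) * (q - p) with hX
    have hXp : 0 < X := by positivity
    have e1 : (2 : ℝ) ^ (n + 1 + 1) * (q - p) = 2 * X := by rw [hX]; ring
    have e2 : (2 : ℝ) ^ n * (q - p) = X / 2 := by rw [hX]; ring
    rw [e1] at h1 ⊢
    rw [e2] at ih
    have hX2 : 2 * (q - p) ≤ X := by
      rw [hX]
      have : (1 : ℝ) ≤ 2 ^ n := one_le_pow₀ (by norm_num)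
      rw [pow_succ]; nlinarith
    have ih' := ih (by linarith) (by linarith)
    have a := hd (q + 3 / 2 * X) ⟨by linarith, by linarith⟩ (X / 2) (by linarith) (by linarith)
    have b := hd (q + 3 / 2 * X) ⟨by linarith, by linarith⟩ X (by linarith) (by linarith)
    have c : h q - h p ≤ h (q + 3 / 2 * X + 2 * X) - h (q + 3 / 2 * X - 2 * X) :=
      sub_le_sub (hm (by linarith)) (hm (by linarith))
    have e3 : q + 3 / 2 * X + X / 2 = q + 2 * X := by ring
    have e4 : q + 3 / 2 * X - X / 2 = q + X := by ring
    have e5 : 2 * (X / 2) = X := by ring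
    rw [e3, e4, e5] at a
    have d := mul_le_mul_of_nonneg_left a hC
    push_cast
    nlinarith

lemma exists_H {h : ℝ → ℝ} (hc : Continuous h) (zero : ∀ x ≤ 0, h x = 0)
    (one : ∀ x, 1 ≤ x → h x = 1) :
    ∃ H : ℝ → ℝ, (∀ t, H t ∈ Icc (0 : ℝ) 1) ∧ ∀ t, h (H t) = max 0 (min 1 t) := by
  have : ∀ t : ℝ, ∃ x ∈ Icc (0 : ℝ) 1, h x = max 0 (min 1 t) := by
    intro t
    have := intermediate_value_Icc (zero_le_one' ℝ) hc.continuousOn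
    rw [zero 0 le_rfl, one 1 le_rfl] at this
    exact this ⟨le_max_left _ _, max_le zero_le_one (min_le_left _ _)⟩
  choose H h1 h2 using this
  exact ⟨H, h1, h2⟩

/-- If the distribution function of a measure is doubling, then so is its inverse: by `block_sum`
an interval of measure comparable to that of its neighbour cannot be much longer than it. -/
lemma exists_DH {h : ℝ → ℝ} (hm : Monotone h) (hs : StrictMonoOn h (Icc 0 1)) (hc : Continuous h)
    (zero : ∀ x ≤ 0, h x = 0) (one : ∀ x, 1 ≤ x → h x = 1) {C r₀ : ℝ} (hC : 0 < C) (hr₀ : 0 < r₀)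
    (hd : ∀ x ∈ Icc (0 : ℝ) 1, ∀ r, 0 < r → r < r₀ →
      h (x + 2 * r) - h (x - 2 * r) ≤ C * (h (x + r) - h (x - r))) :
    ∃ H K, DH h H K := by
  obtain ⟨H, H1, H2⟩ := exists_H hc zero one
  obtain ⟨N, hN⟩ := exists_nat_gt (C ^ 2)
  have hP : (0 : ℝ) < 2 ^ N := by positivity
  refine ⟨H, max (1 + 2 * 2 ^ (N + 1)) (2 ^ N / r₀), hm, hs, hc, zero, one, H1, H2, ?_, ?_⟩
  · refine le_trans ?_ (le_max_left _ _)
    have : (0 : ℝ) < 2 ^ (N + 1) := by positivity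
    linarith
  intro t ht v hv
  have hlt : ∀ a b, h (H a) < h (H b) → H a < H b := fun a b hab => by
    by_contra hh
    exact absurd (hm (not_lt.1 hh)) (not_le.2 hab)
  by_cases hv1 : 1 < v
  · have e1 : H (t - v) = 0 := by
      refine hs.injOn (H1 _) ⟨le_rfl, zero_le_one⟩ ?_
      rw [H2, zero 0 le_rfl, max_eq_left]
      exact (min_le_right _ _).trans (by linarith [ht.2])
    have e2 : H (t + v) = 1 := by
      refine hs.injOn (H1 _) ⟨zero_le_one, le_rfl⟩ ?_
      rw [H2, one 1 le_rfl, min_eq_left (by linarith [ht.1]), max_eq_right zero_le_one]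
    rw [e1, e2]
    have : H (t + 2 * v) - H (t - 2 * v) ≤ 1 := by linarith [(H1 (t + 2 * v)).2, (H1 (t - 2 * v)).1]
    refine this.trans ?_
    rw [sub_zero, mul_one]
    refine le_trans ?_ (le_max_left _ _)
    have : (0 : ℝ) < 2 ^ (N + 1) := by positivity
    linarith
  push Not at hv1
  have hpv : v ≤ h (H (t + v)) - h (H (t - v)) := by
    rw [H2, H2]
    have := ht.1
    have := ht.2
    rcases le_total 1 (t + v) with h1 | h1 <;> rcases le_total 0 (t - v) with h2 | h2
    · rw [min_eq_left h1, min_eq_right (by linarith), max_eq_right h2, max_eq_right zero_le_one]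
      linarith
    · rw [min_eq_left h1, min_eq_right (by linarith), max_eq_left h2, max_eq_right zero_le_one]
      linarith
    · rw [min_eq_right h1, min_eq_right (by linarith), max_eq_right h2, max_eq_right (by linarith)]
      linarith
    · rw [min_eq_right h1, min_eq_right (by linarith), max_eq_left h2, max_eq_right (by linarith)]
      linarith
  have hpq : H (t - v) < H (t + v) := hlt _ _ (by linarith)
  have hright : h (H (t + 2 * v)) - h (H (t + v)) ≤ v := by
    rw [H2, H2]
    have := ht.1
    have := ht.2
    rw [max_eq_right (le_min zero_le_one (by linarith)),
      max_eq_right (le_min zero_le_one (by linarith))]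
    rcases le_total 1 (t + v) with h1 | h1
    · rw [min_eq_left h1, min_eq_left (by linarith)]; linarith
    · rw [min_eq_right h1]
      linarith [min_le_right 1 (t + 2 * v)]
  have hleft : h (H (t - v)) - h (H (t - 2 * v)) ≤ v := by
    rw [H2, H2]
    have := ht.1
    have := ht.2
    rw [min_eq_right (by linarith), min_eq_right (by linarith)]
    rcases le_total 0 (t - v) with h1 | h1
    · rw [max_eq_right h1]
      linarith [le_max_right 0 (t - 2 * v)]
    · rw [max_eq_left h1, max_eq_left (by linarith)]; linarith
  by_cases hl : r₀ / 2 ^ N ≤ H (t + v) - H (t - v)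
  · have : H (t + 2 * v) - H (t - 2 * v) ≤ 1 := by linarith [(H1 (t + 2 * v)).2, (H1 (t - 2 * v)).1]
    refine this.trans ?_
    have h3 := mul_le_mul_of_nonneg_right (le_max_right (1 + 2 * 2 ^ (N + 1)) (2 ^ N / r₀))
      (sub_pos.2 hpq).le
    refine le_trans ?_ h3
    have h4 := mul_le_mul_of_nonneg_left hl (show 0 ≤ 2 ^ N / r₀ by positivity)
    refine le_trans (le_of_eq ?_) h4
    field_simp
  push Not at hl
  have hlN : 2 ^ N * (H (t + v) - H (t - v)) < r₀ := by
    rw [lt_div_iff₀ hP] at hl; linarith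
  have hR : H (t + 2 * v) ≤ H (t + v) + 2 ^ (N + 1) * (H (t + v) - H (t - v)) := by
    by_contra hh
    push Not at hh
    have := block_sum hm hC.le hd (H1 (t - v)).1 hpq N (by linarith [(H1 (t + 2 * v)).2]) hlN
    have h5 : h (H (t + v) + 2 ^ (N + 1) * (H (t + v) - H (t - v))) ≤ h (H (t + 2 * v)) := hm hh.le
    have h6 := mul_le_mul_of_nonneg_left (h5) (sq_nonneg C)
    have h7 : (N : ℝ) * v ≤ N * (h (H (t + v)) - h (H (t - v))) :=
      mul_le_mul_of_nonneg_left hpv (Nat.cast_nonneg _)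
    have h8 := mul_le_mul_of_nonneg_left hright (sq_nonneg C)
    have h9 := mul_lt_mul_of_pos_right hN hv
    linarith
  have hL : H (t - v) - 2 ^ (N + 1) * (H (t + v) - H (t - v)) ≤ H (t - 2 * v) := by
    by_contra hh
    push Not at hh
    have := block_sum (h := fun x => -h (1 - x)) (fun a b hab => neg_le_neg (hm (by linarith)))
      hC.le (r₀ := r₀) (fun x hx r h1 h2 => by
        have := hd (1 - x) ⟨by linarith [hx.2], by linarith [hx.1]⟩ r h1 h2
        have e1 : 1 - (x + 2 * r) = 1 - x - 2 * r := by ring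
        have e2 : 1 - (x - 2 * r) = 1 - x + 2 * r := by ring
        have e3 : 1 - (x + r) = 1 - x - r := by ring
        have e4 : 1 - (x - r) = 1 - x + r := by ring
        simp only [e1, e2, e3, e4]
        linarith) (p := 1 - H (t + v)) (q := 1 - H (t - v)) (by linarith [(H1 (t + v)).2])
        (by linarith) N
    have e0 : 1 - H (t - v) - (1 - H (t + v)) = H (t + v) - H (t - v) := by ring
    rw [e0] at this
    have this := this (by linarith [(H1 (t - 2 * v)).1]) hlN
    have h5 : h (H (t - 2 * v)) ≤ h (H (t - v) - 2 ^ (N + 1) * (H (t + v) - H (t - v))) := hm hh.le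
    have e1 : 1 - (1 - H (t - v) + 2 ^ (N + 1) * (H (t + v) - H (t - v)))
      = H (t - v) - 2 ^ (N + 1) * (H (t + v) - H (t - v)) := by ring
    simp only [sub_sub_cancel, e1] at this
    have h6 := mul_le_mul_of_nonneg_left (h5) (sq_nonneg C)
    have h7 : (N : ℝ) * v ≤ N * (h (H (t + v)) - h (H (t - v))) :=
      mul_le_mul_of_nonneg_left hpv (Nat.cast_nonneg _)
    have h8 := mul_le_mul_of_nonneg_left hleft (sq_nonneg C)
    have h9 := mul_lt_mul_of_pos_right hN hv
    linarith
  have h3 := mul_le_mul_of_nonneg_right (le_max_left (1 + 2 * 2 ^ (N + 1)) (2 ^ N / r₀))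
      (sub_pos.2 hpq).le
  refine le_trans ?_ h3
  linarith

/-- Euclidean length of the ball of radius `v` about `t` in the measure coordinate. -/
def LL (H : ℝ → ℝ) (t v : ℝ) : ℝ := H (t + v) - H (t - v)

namespace DH
variable {h H : ℝ → ℝ} {K : ℝ}

lemma lt_of (D : DH h H K) {x y : ℝ} (hxy : h x < h y) : x < y := by
  by_contra hh
  exact absurd (D.mono (not_lt.1 hh)) (not_le.2 hxy)

lemma hH' (D : DH h H K) {t : ℝ} (ht : t ∈ Icc (0 : ℝ) 1) : h (H t) = t := by
  rw [D.hH, min_eq_right ht.2, max_eq_right ht.1]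

lemma h_mem (D : DH h H K) (y : ℝ) : h y ∈ Icc (0 : ℝ) 1 :=
  ⟨by rw [← D.zero (min y 0) (min_le_right _ _)]; exact D.mono (min_le_left _ _),
   by rw [← D.one (max y 1) (le_max_right _ _)]; exact D.mono (le_max_left _ _)⟩

lemma Hh (D : DH h H K) {y : ℝ} (hy : y ∈ Icc (0 : ℝ) 1) : H (h y) = y :=
  D.smono.injOn (D.Hmem _) hy (D.hH' (D.h_mem y))

lemma Hmono (D : DH h H K) : Monotone H := by
  intro a b hab
  by_contra hh
  have := D.smono (D.Hmem _) (D.Hmem _) (not_le.1 hh)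
  rw [D.hH, D.hH] at this
  exact absurd (max_le_max le_rfl (min_le_min le_rfl hab)) (not_le.2 this)

lemma H_of_nonpos (D : DH h H K) {t : ℝ} (ht : t ≤ 0) : H t = 0 := by
  refine D.smono.injOn (D.Hmem _) ⟨le_rfl, zero_le_one⟩ ?_
  rw [D.hH, D.zero 0 le_rfl, max_eq_left ((min_le_right _ _).trans ht)]

lemma H_of_one_le (D : DH h H K) {t : ℝ} (ht : 1 ≤ t) : H t = 1 := by
  refine D.smono.injOn (D.Hmem _) ⟨zero_le_one, le_rfl⟩ ?_
  rw [D.hH, D.one 1 le_rfl, min_eq_left ht, max_eq_right zero_le_one]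

lemma H_lt (D : DH h H K) {a b : ℝ} (hab : a < b) (hb : 0 < b) (ha : a < 1) : H a < H b := by
  refine D.lt_of ?_
  rw [D.hH, D.hH]
  rcases le_total 1 b with h1 | h1 <;> rcases le_total 0 a with h2 | h2
  · rw [min_eq_left h1, min_eq_right (by linarith), max_eq_right h2, max_eq_right zero_le_one]; linarith
  · rw [min_eq_left h1, min_eq_right (by linarith), max_eq_left h2, max_eq_right zero_le_one]; linarith
  · rw [min_eq_right h1, min_eq_right (by linarith), max_eq_right h2, max_eq_right (by linarith)]; linarith
  · rw [min_eq_right h1, min_eq_right (by linarith), max_eq_left h2, max_eq_right (by linarith)]; linarith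

lemma LL_pos (D : DH h H K) {t v : ℝ} (ht : t ∈ Icc (0 : ℝ) 1) (hv : 0 < v) : 0 < LL H t v :=
  sub_pos.2 (D.H_lt (by linarith) (by linarith [ht.1]) (by linarith [ht.2]))

lemma LL_le_one (D : DH h H K) (t v : ℝ) : LL H t v ≤ 1 := by
  have h1 := (D.Hmem (t + v)).2
  have h2 := (D.Hmem (t - v)).1
  unfold LL; linarith

lemma LL_nested (D : DH h H K) {t v t' v' : ℝ} (h1 : t' - v' ≤ t - v) (h2 : t + v ≤ t' + v') :
    LL H t v ≤ LL H t' v' := sub_le_sub (D.Hmono h2) (D.Hmono h1)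

lemma LL_one (D : DH h H K) {t v : ℝ} (ht : t ∈ Icc (0 : ℝ) 1) (hv : 1 ≤ v) : LL H t v = 1 := by
  unfold LL
  rw [D.H_of_one_le (by linarith [ht.1]), D.H_of_nonpos (by linarith [ht.2])]; ring

lemma LL_iter (D : DH h H K) {t v : ℝ} (ht : t ∈ Icc (0 : ℝ) 1) (hv : 0 < v) (n : ℕ) :
    LL H t (2 ^ n * v) ≤ K ^ n * LL H t v := by
  have hK := D.oneK
  induction n with
  | zero => simp
  | succ n ih =>
    have := D.dbl t ht (2 ^ n * v) (by positivity)
    have e : (2 : ℝ) ^ (n + 1) * v = 2 * (2 ^ n * v) := by ring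
    rw [e]
    calc _ ≤ K * LL H t (2 ^ n * v) := this
      _ ≤ K * (K ^ n * LL H t v) := mul_le_mul_of_nonneg_left ih (by linarith)
      _ = _ := by ring

lemma LL_compare (D : DH h H K) {t v t' v' : ℝ} (ht' : t' ∈ Icc (0 : ℝ) 1) (hv' : 0 < v') (n : ℕ)
    (h1 : t' - 2 ^ n * v' ≤ t - v) (h2 : t + v ≤ t' + 2 ^ n * v') :
    LL H t v ≤ K ^ n * LL H t' v' := by
  have hit := D.LL_iter ht' hv' n
  exact (D.LL_nested h1 h2).trans hit

/-- A ball is controlled by any interval of comparable size and position. -/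
lemma LL_le_interval (D : DH h H K) {t v a b : ℝ} (ha : 0 ≤ a) (hab : a < b) (hb : b ≤ 1) (n : ℕ)
    (h1 : (a + b) / 2 - 2 ^ n * ((b - a) / 2) ≤ t - v)
    (h2 : t + v ≤ (a + b) / 2 + 2 ^ n * ((b - a) / 2)) :
    LL H t v ≤ K ^ n * (H b - H a) := by
  have := D.LL_compare (t := t) (v := v) (t' := (a + b) / 2) (v' := (b - a) / 2)
    ⟨by linarith, by linarith⟩ (by linarith) n h1 h2
  have e1 : (a + b) / 2 + (b - a) / 2 = b := by ring
  have e2 : (a + b) / 2 - (b - a) / 2 = a := by ring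
  unfold LL at this ⊢
  rwa [e1, e2] at this

/-- Reverse doubling: the part of the larger ball outside the smaller one is comparable to the
smaller one. -/
lemma LL_growth (D : DH h H K) {s : ℝ} (hs : 1 < s) : ∃ κ > 0, ∀ t ∈ Icc (0 : ℝ) 1, ∀ v > 0,
    s * v ≤ 1 / 2 → (1 + κ) * LL H t v ≤ LL H t (s * v) := by
  have hK := D.oneK
  obtain ⟨n, hn⟩ := pow_unbounded_of_one_lt ((1 + (1 + s) / 2) / ((s - 1) / 2)) (one_lt_two)
  rw [div_lt_iff₀ (by linarith)] at hn
  have hKn : 0 < K ^ n := by positivity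
  refine ⟨(K ^ n)⁻¹, by positivity, fun t ht v hv hsv => ?_⟩
  have hvs : v < s * v := by nlinarith
  have hn' : (1 + (1 + s) / 2) * v < 2 ^ n * ((s * v - v) / 2) := by nlinarith
  have key : (K ^ n)⁻¹ * LL H t v ≤ LL H t (s * v) - LL H t v := by
    rw [inv_mul_le_iff₀ hKn]
    rcases le_total t (1 / 2) with h1 | h1
    · have := D.LL_le_interval (t := t) (v := v) (a := t + v) (b := t + s * v)
        (by linarith [ht.1]) (by linarith) (by linarith) n
        (by have e : (t + s * v - (t + v)) / 2 = (s * v - v) / 2 := by ring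
            rw [e]; linarith)
        (by have e : (t + s * v - (t + v)) / 2 = (s * v - v) / 2 := by ring
            rw [e]; nlinarith)
      refine this.trans (mul_le_mul_of_nonneg_left ?_ hKn.le)
      have := D.Hmono (show t - s * v ≤ t - v by linarith)
      unfold LL; linarith
    · have := D.LL_le_interval (t := t) (v := v) (a := t - s * v) (b := t - v)
        (by linarith [ht.1]) (by linarith) (by linarith [ht.2]) n
        (by have e : (t - v - (t - s * v)) / 2 = (s * v - v) / 2 := by ring
            rw [e]; nlinarith)
        (by have e : (t - v - (t - s * v)) / 2 = (s * v - v) / 2 := by ring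
            rw [e]; linarith)
      refine this.trans (mul_le_mul_of_nonneg_left ?_ hKn.le)
      have := D.Hmono (show t + v ≤ t + s * v by linarith)
      unfold LL; linarith
  linarith

lemma LL_lower (D : DH h H K) {v₁ : ℝ} (hv₁ : 0 < v₁) : ∃ c > 0, ∀ t ∈ Icc (0 : ℝ) 1, ∀ v, v₁ ≤ v →
    c ≤ LL H t v := by
  have hK := D.oneK
  obtain ⟨n, hn⟩ := pow_unbounded_of_one_lt (1 / v₁) (one_lt_two)
  rw [div_lt_iff₀ hv₁] at hn
  have hKn : 0 < K ^ n := by positivity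
  refine ⟨(K ^ n)⁻¹, by positivity, fun t ht v hv => ?_⟩
  have hv0 : 0 < v := by linarith
  have := D.LL_iter ht hv0 n
  rw [D.LL_one ht (by
    have : (0 : ℝ) < 2 ^ n := by positivity
    nlinarith)] at this
  rwa [inv_le_iff_one_le_mul₀' hKn]

lemma LL_scale (D : DH h H K) (s : ℝ) : ∃ K' ≥ 1, ∀ t ∈ Icc (0 : ℝ) 1, ∀ v > 0,
    LL H t (s * v) ≤ K' * LL H t v := by
  have hK := D.oneK
  obtain ⟨n, hn⟩ := pow_unbounded_of_one_lt s (one_lt_two)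
  refine ⟨K ^ n, one_le_pow₀ hK, fun t ht v hv => ?_⟩
  have : s * v ≤ 2 ^ n * v := by nlinarith
  exact D.LL_compare ht hv n (by linarith) (by linarith)

end DH

/-! ### The distribution function of a doubling measure -/

/-- The measure coordinate of a doubling measure of maximal entropy. -/
lemma measure_setup {f : ℝ → ℝ} {μ : Measure ℝ} {s : ℝ} (hμ : IsMaxEntropyLike f μ s)
    (hd : DoublingOn μ) : ∃ h H K, DH h H K ∧
      ∀ y z, μ (Icc y z) = ENNReal.ofReal (h z - h y) := by
  obtain ⟨hprob, hsupp, -, hna, hfull, -⟩ := hμ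
  set h := ProbabilityTheory.cdf μ with hh
  have hm : Monotone h := h.mono
  have hcont : Continuous h := by
    rw [continuous_iff_continuousAt]
    intro x
    rw [hm.continuousAt_iff_leftLim_eq_rightLim, h.rightLim_eq]
    have h1 := h.measure_singleton x
    rw [hh, ProbabilityTheory.measure_cdf, hna, ← hh] at h1
    have h2 := ENNReal.ofReal_eq_zero.1 h1.symm
    have h3 := hm.leftLim_le (le_refl x)
    linarith
  have hll : ∀ x, Function.leftLim h x = h x := fun x => by
    have := hm.continuousAt_iff_leftLim_eq_rightLim.1 (hcont.continuousAt (x := x))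
    rw [this, h.rightLim_eq]
  have hIcc : ∀ y z, μ (Icc y z) = ENNReal.ofReal (h z - h y) := fun y z => by
    have h1 := h.measure_Icc y z
    rw [hh, ProbabilityTheory.measure_cdf, ← hh, hll] at h1
    exact h1
  have hIoo : ∀ y z, μ (Ioo y z) = ENNReal.ofReal (h z - h y) := fun y z => by
    have h1 := h.measure_Ioo (a := y) (b := z)
    rw [hh, ProbabilityTheory.measure_cdf, ← hh, hll] at h1
    exact h1
  have hball : ∀ x r, μ (ballI x r) = ENNReal.ofReal (h (x + r) - h (x - r)) := fun x r => by
    rw [← hIoo]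
    have e : ballI x r = Ioo (x - r) (x + r) ∩ unitI := by
      ext y
      simp only [ballI, mem_ofPred_eq, mem_inter_iff, mem_Ioo, abs_lt]
      constructor
      · rintro ⟨a, b, c⟩; exact ⟨⟨by linarith, by linarith⟩, a⟩
      · rintro ⟨⟨b, c⟩, a⟩; exact ⟨a, by linarith, by linarith⟩
    rw [e]
    refine le_antisymm (measure_mono inter_subset_left) ?_
    calc μ (Ioo (x - r) (x + r)) ≤ μ (Ioo (x - r) (x + r) ∩ unitI ∪ unitIᶜ) := by
          refine measure_mono fun y hy => ?_
          by_cases h1 : y ∈ unitI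
          · exact Or.inl ⟨hy, h1⟩
          · exact Or.inr h1
      _ ≤ _ := (measure_union_le _ _).trans (by rw [hsupp, add_zero])
  have hzero : ∀ x ≤ 0, h x = 0 := by
    intro x hx
    rw [hh, ProbabilityTheory.cdf_eq_real, measureReal_def, ENNReal.toReal_eq_zero_iff]
    left
    have h1 : μ (Iic x) ≤ μ (unitIᶜ ∪ {0}) := measure_mono fun y hy => by
      rcases lt_or_eq_of_le (le_trans hy hx) with h2 | h2
      · exact Or.inl fun h3 => absurd h3.1 (not_le.2 h2)
      · exact Or.inr h2
    have h2 := h1.trans (measure_union_le _ _)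
    rw [hsupp, hna, add_zero] at h2
    exact le_antisymm h2 bot_le
  have hone : ∀ x, 1 ≤ x → h x = 1 := by
    intro x hx
    have h1 : μ (Iic x) = 1 := by
      refine le_antisymm prob_le_one ?_
      calc (1 : ENNReal) = μ univ := measure_univ.symm
        _ ≤ μ (Iic x ∪ unitIᶜ) := measure_mono fun y _ => by
          by_cases h2 : y ∈ unitI
          · exact Or.inl (h2.2.trans hx)
          · exact Or.inr h2
        _ ≤ _ := (measure_union_le _ _).trans (by rw [hsupp, add_zero])
    rw [hh, ProbabilityTheory.cdf_eq_real, measureReal_def, h1, ENNReal.toReal_one]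
  have hs : StrictMonoOn h (Icc 0 1) := by
    intro a ha b hb hab
    have h1 := hfull ((a + b) / 2) ⟨by linarith [ha.1, hb.1], by linarith [ha.2, hb.2]⟩ ((b - a) / 2)
      (by linarith)
    rw [hball, ENNReal.ofReal_pos] at h1
    have e1 : (a + b) / 2 + (b - a) / 2 = b := by ring
    have e2 : (a + b) / 2 - (b - a) / 2 = a := by ring
    rw [e1, e2] at h1
    linarith
  obtain ⟨C, hC, r₀, hr₀, hd⟩ := hd
  obtain ⟨H, K, D⟩ := exists_DH hm hs hcont hzero hone hC hr₀ (fun x hx r h1 h2 => by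
    have h3 := hd x hx r h1 h2
    have h4 : h (x - r) ≤ h (x + r) := hm (by linarith)
    rw [hball, hball, ← ENNReal.ofReal_mul hC.le,
      ENNReal.ofReal_le_ofReal_iff (mul_nonneg hC.le (by linarith))] at h3
    exact h3)
  exact ⟨h, H, K, D, hIcc⟩

/-! ### Non-flat critical points and constant Jacobian -/

lemma mono_of_noncrit {f : ℝ → ℝ} (hf : ContinuousOn f unitI) {y z : ℝ} (hy : 0 ≤ y) (hyz : y ≤ z)
    (hz : z ≤ 1) (hc : ∀ w ∈ Ioo y z, w ∉ Crit f) :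
    StrictMonoOn f (Icc y z) ∨ StrictAntiOn f (Icc y z) := by
  have hsub : Icc y z ⊆ unitI := fun w hw => ⟨hy.trans hw.1, hw.2.trans hz⟩
  have key : ∀ a ∈ Icc y z, ∀ b ∈ Icc y z, a < b → f a ≠ f b := by
    intro a ha b hb hab hfab
    obtain ⟨c, hc1, hc2⟩ := exists_deriv_eq_zero hab
      (hf.mono ((Icc_subset_Icc ha.1 hb.2).trans hsub)) hfab
    exact hc c ⟨ha.1.trans_lt hc1.1, hc1.2.trans_le hb.2⟩
      ⟨hsub ⟨ha.1.trans hc1.1.le, hc1.2.le.trans hb.2⟩, hc2⟩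
  refine (hf.mono hsub).strictMonoOn_of_injOn_Icc' hyz fun a ha b hb hab => ?_
  rcases lt_trichotomy a b with h1 | h1 | h1
  · exact absurd hab (key a ha b hb h1)
  · exact h1
  · exact absurd hab.symm (key b hb a ha h1)

/-- On an interval without interior critical points, the constant Jacobian makes `f` affine of
slope `± s` in the measure coordinate. -/
lemma jac_of_noncrit {f h H : ℝ → ℝ} {μ : Measure ℝ} {s K : ℝ} (hs : 0 < s) (D : DH h H K)
    (hμ : IsMaxEntropyLike f μ s) (hI : ∀ y z, μ (Icc y z) = ENNReal.ofReal (h z - h y))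
    (hf : ContinuousOn f unitI) {y z : ℝ} (hy : 0 ≤ y) (hyz : y ≤ z)
    (hz : z ≤ 1) (hc : ∀ w ∈ Ioo y z, w ∉ Crit f) :
    (StrictMonoOn f (Icc y z) ∧ h (f z) - h (f y) = s * (h z - h y)) ∨
    (StrictAntiOn f (Icc y z) ∧ h (f y) - h (f z) = s * (h z - h y)) := by
  have hsub : Icc y z ⊆ unitI := fun w hw => ⟨hy.trans hw.1, hw.2.trans hz⟩
  have hfc := hf.mono hsub
  have hyy : y ∈ Icc y z := ⟨le_rfl, hyz⟩
  have hzz : z ∈ Icc y z := ⟨hyz, le_rfl⟩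
  have hh := D.mono hyz
  rcases mono_of_noncrit hf hy hyz hz hc with hm | hm
  · left
    refine ⟨hm, ?_⟩
    have e : f '' Icc y z = Icc (f y) (f z) := by
      refine subset_antisymm ?_ (intermediate_value_Icc hyz hfc)
      rintro _ ⟨w, hw, rfl⟩
      exact ⟨hm.monotoneOn hyy hw hw.1, hm.monotoneOn hw hzz hw.2⟩
    have h1 := hμ.2.2.2.2.2 _ measurableSet_Icc hsub hm.injOn
    have h2 := D.mono (hm.monotoneOn hyy hzz hyz)
    rw [e, hI, hI, ← ENNReal.ofReal_mul hs.le] at h1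
    exact (ENNReal.ofReal_eq_ofReal_iff (by linarith) (mul_nonneg hs.le (by linarith))).1 h1
  · right
    refine ⟨hm, ?_⟩
    have e : f '' Icc y z = Icc (f z) (f y) := by
      refine subset_antisymm ?_ (intermediate_value_Icc' hyz hfc)
      rintro _ ⟨w, hw, rfl⟩
      exact ⟨hm.antitoneOn hw hzz hw.2, hm.antitoneOn hyy hw hw.1⟩
    have h1 := hμ.2.2.2.2.2 _ measurableSet_Icc hsub hm.injOn
    have h2 := D.mono (hm.antitoneOn hyy hzz hyz)
    rw [e, hI, hI, ← ENNReal.ofReal_mul hs.le] at h1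
    exact (ENNReal.ofReal_eq_ofReal_iff (by linarith) (mul_nonneg hs.le (by linarith))).1 h1

/-- Bi-Lipschitz control at a point of nonzero derivative. -/
lemma bilip_at {φ : ℝ → ℝ} {c d : ℝ} (hφ : HasDerivAt φ d c) (hd : d ≠ 0) :
    ∃ a > 0, ∃ A > 0, ∀ᶠ z in nhds c, a * |z - c| ≤ |φ z - φ c| ∧ |φ z - φ c| ≤ A * |z - c| := by
  have h1 := (hasDerivAt_iff_isLittleO.1 hφ).def (c := |d| / 2) (by positivity)
  refine ⟨|d| / 2, by positivity, 2 * |d|, by positivity, h1.mono fun z hz => ?_⟩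
  simp only [Real.norm_eq_abs, smul_eq_mul] at hz
  have h2 : |(z - c) * d| = |d| * |z - c| := by rw [abs_mul, mul_comm]
  have h3 := abs_sub_abs_le_abs_sub ((z - c) * d) (φ z - φ c)
  have h4 := abs_sub_abs_le_abs_sub (φ z - φ c) ((z - c) * d)
  rw [abs_sub_comm ((z - c) * d)] at h3
  have h5 : 0 ≤ |d| * |z - c| := by positivity
  constructor <;> nlinarith

lemma log_relation {f φ ψ : ℝ → ℝ} {ℓ x : ℝ}
    (h : |ψ (f x)| = |φ x| ^ ℓ) (hx : φ x ≠ 0) : ψ (f x) ≠ 0 ∧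
    Real.log (ψ (f x)) = ℓ * Real.log (φ x) := by
  have hp : 0 < |φ x| := abs_pos.2 hx
  constructor
  · rw [← abs_pos, h]; positivity
  · rw [← Real.log_abs, h, Real.log_rpow hp, Real.log_abs]

/-- Formula for the logarithmic derivative near a non-flat critical point. -/
lemma nonflat_local {f : ℝ → ℝ} {ℓ c : ℝ} (hf : ContDiffOn ℝ 1 f unitI)
    (hn : NonflatAt f ℓ c) : ∃ φ ψ : ℝ → ℝ, IsC3Diffeo φ ∧ IsC3Diffeo ψ ∧ φ c = 0 ∧ ∃ δ > 0,
    ∀ z ∈ Ioo (0 : ℝ) 1, |z - c| < δ → z ≠ c → φ z ≠ 0 ∧ deriv f z ≠ 0 ∧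
      Real.log (deriv f z) = Real.log ℓ + (ℓ - 1) * Real.log (φ z) + Real.log (deriv φ z)
        - Real.log (deriv ψ (f z)) := by
  obtain ⟨hℓ, φ, ψ, hφ, hψ, hφc, hψc, U, hU, hUeq⟩ := hn
  obtain ⟨δ, hδ, hδU⟩ := Metric.mem_nhdsWithin_iff.1 hU
  refine ⟨φ, ψ, hφ, hψ, hφc, δ, hδ, fun z hz hzc hne => ?_⟩
  have hφz : ∀ w, w ≠ c → φ w ≠ 0 := fun w hw h0 => hw (hφ.2.1.1 (h0.trans hφc.symm))
  have hev : ∀ᶠ w in nhds z, w ∈ Ioo (0 : ℝ) 1 ∧ |w - c| < δ ∧ w ≠ c := by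
    refine (isOpen_Ioo.eventually_mem hz).and (Filter.Eventually.and ?_ (isOpen_ne.eventually_mem hne))
    exact (isOpen_lt (by fun_prop) continuous_const).eventually_mem (show z ∈ {w | |w - c| < δ} from hzc)
  have hrel : ∀ w, w ∈ Ioo (0 : ℝ) 1 ∧ |w - c| < δ ∧ w ≠ c →
      ψ (f w) ≠ 0 ∧ Real.log (ψ (f w)) = ℓ * Real.log (φ w) := by
    rintro w ⟨h1, h2, h3⟩
    exact log_relation (hUeq w (hδU ⟨by rwa [mem_ball, Real.dist_eq], h1.1.le, h1.2.le⟩))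
      (hφz w h3)
  obtain ⟨hψ0, hlog⟩ := hrel z ⟨hz, hzc, hne⟩
  have hfd : DifferentiableAt ℝ f z :=
    (hf.differentiableOn one_ne_zero).differentiableAt (Icc_mem_nhds hz.1 hz.2)
  have hφd : DifferentiableAt ℝ φ z := hφ.1.differentiable (by norm_num) z
  have hψd : DifferentiableAt ℝ ψ (f z) := hψ.1.differentiable (by norm_num) _
  have d1 : HasDerivAt (fun w => Real.log (ψ (f w))) (deriv ψ (f z) * deriv f z / ψ (f z)) z :=
    (hψd.hasDerivAt.comp z hfd.hasDerivAt).log hψ0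
  have d2 : HasDerivAt (fun w => ℓ * Real.log (φ w)) (ℓ * (deriv φ z / φ z)) z :=
    (hφd.hasDerivAt.log (hφz z hne)).const_mul ℓ
  have d3 := (d2.congr_of_eventuallyEq (hev.mono fun w hw => (hrel w hw).2)).unique d1
  have hφ0 := hφz z hne
  have hφ' := hφ.2.2 z
  have hψ' := hψ.2.2 (f z)
  have hℓ0 : ℓ ≠ 0 := by linarith
  have hder : deriv f z = ℓ * ψ (f z) * deriv φ z / (φ z * deriv ψ (f z)) := by
    field_simp at d3 ⊢
    linarith
  have hne' : deriv f z ≠ 0 := by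
    rw [hder]
    exact div_ne_zero (mul_ne_zero (mul_ne_zero hℓ0 hψ0) hφ') (mul_ne_zero hφ0 hψ')
  refine ⟨hφ0, hne', ?_⟩
  rw [hder, Real.log_div (mul_ne_zero (mul_ne_zero hℓ0 hψ0) hφ') (mul_ne_zero hφ0 hψ'),
    Real.log_mul (mul_ne_zero hℓ0 hψ0) hφ', Real.log_mul hℓ0 hψ0, Real.log_mul hφ0 hψ', hlog]
  ring

/-- Non-flat critical points are isolated. -/
lemma crit_finite {f : ℝ → ℝ} (hf : C3Nonflat f) : (Crit f).Finite := by
  obtain ⟨ℓ, h1, h2, h3⟩ := hf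
  by_contra hinf
  have hinf : (Crit f).Infinite := hinf
  obtain ⟨c, hc, hacc⟩ := hinf.exists_accPt_of_subset_isCompact (isCompact_Icc (a := (0:ℝ)) (b := 1))
    (fun x hx => hx.1)
  have hIoo : ∀ δ > 0, ∃ z ∈ Crit f, z ∈ Ioo (0 : ℝ) 1 ∧ |z - c| < δ ∧ z ≠ c := by
    intro δ hδ
    have hfr := accPt_iff_frequently.1 hacc
    have e1 : ∀ e : ℝ, ∀ᶠ y in nhds c, y ≠ c → y ≠ e := fun e => by
      by_cases h : e = c
      · exact Eventually.of_forall fun y hy => h ▸ hy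
      · exact (isOpen_ne.eventually_mem (Ne.symm h)).mono fun y hy _ => hy
    obtain ⟨y, ⟨hy1, hy2⟩, h5, h6, h7⟩ :=
      (hfr.and_eventually ((e1 0).and ((e1 1).and (Metric.ball_mem_nhds c hδ)))).exists
    exact ⟨y, hy2, ⟨lt_of_le_of_ne hy2.1.1 (h5 hy1).symm, lt_of_le_of_ne hy2.1.2 (h6 hy1)⟩,
      by rwa [Real.dist_eq] at h7, hy1⟩
  by_cases hcc : c ∈ Crit f
  · obtain ⟨φ, ψ, -, -, -, δ, hδ, hz⟩ := nonflat_local h1 (h3 c hcc)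
    obtain ⟨z, hz1, hz2, hz3, hz4⟩ := hIoo δ hδ
    exact (hz z hz2 hz3 hz4).2.1 hz1.2
  · have hd : deriv f c ≠ 0 := fun h => hcc ⟨hc, h⟩
    have hud : UniqueDiffOn ℝ unitI := uniqueDiffOn_Icc zero_lt_one
    have e : derivWithin f unitI c = deriv f c :=
      (differentiableAt_of_deriv_ne_zero hd).derivWithin (hud c hc)
    have hcont := (h1.continuousOn_derivWithin hud le_rfl) c hc
    have hne := hcont.eventually_ne (e.trans_ne hd)
    obtain ⟨δ, hδ, hδU⟩ := Metric.mem_nhdsWithin_iff.1 hne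
    obtain ⟨z, hz1, hz2, hz3, hz4⟩ := hIoo δ hδ
    have := hδU ⟨by rwa [mem_ball, Real.dist_eq], hz1.1⟩
    refine this ?_
    change derivWithin f (Icc 0 1) z = 0
    rw [derivWithin_of_mem_nhds (Icc_mem_nhds hz2.1 hz2.2)]
    exact hz1.2

/-! ### Power laws and distortion -/

/-- Power-law behaviour at every point, with an exponent `> 1` at critical points. -/
lemma power_law {f : ℝ → ℝ} (hf : C3Nonflat f) (hc : ContinuousOn f unitI)
    {b : ℝ} (hb : b ∈ unitI) :
    ∃ ℓ : ℝ, 1 ≤ ℓ ∧ (b ∈ Crit f → 1 < ℓ) ∧ ∃ a > 0, ∃ A > 0, ∃ δ > 0, ∀ z ∈ unitI, |z - b| < δ →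
      a * |z - b| ^ ℓ ≤ |f z - f b| ∧ |f z - f b| ≤ A * |z - b| ^ ℓ := by
  obtain ⟨ℓ, h1, h2, h3⟩ := hf
  by_cases hcr : b ∈ Crit f
  · obtain ⟨hℓ, φ, ψ, hφ, hψ, hφc, hψc, U, hU, hUeq⟩ := h3 b hcr
    refine ⟨ℓ b, hℓ.le, fun _ => hℓ, ?_⟩
    have hℓ0 : 0 ≤ ℓ b := by linarith
    obtain ⟨a, ha, A, hA, e1⟩ := bilip_at (hφ.1.differentiable (by norm_num) b).hasDerivAt (hφ.2.2 b)
    obtain ⟨a', ha', A', hA', e2⟩ :=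
      bilip_at (hψ.1.differentiable (by norm_num) (f b)).hasDerivAt (hψ.2.2 (f b))
    have e3 := (hc b hb).eventually e2
    obtain ⟨δ, hδ, hδU⟩ := Metric.mem_nhdsWithin_iff.1
      (((show ∀ᶠ x in nhdsWithin b unitI, x ∈ U from hU).and (nhdsWithin_le_nhds e1)).and e3)
    refine ⟨a ^ ℓ b / A', by positivity, A ^ ℓ b / a', by positivity, δ, hδ, fun z hz hzb => ?_⟩
    obtain ⟨⟨h5, h6⟩, h7⟩ := hδU ⟨by rwa [mem_ball, Real.dist_eq], hz⟩
    have h8 := hUeq z h5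
    rw [hφc, sub_zero] at h6
    rw [hψc, sub_zero] at h7
    have l1 : (a * |z - b|) ^ ℓ b ≤ |φ z| ^ ℓ b := Real.rpow_le_rpow (by positivity) h6.1 hℓ0
    have l2 : |φ z| ^ ℓ b ≤ (A * |z - b|) ^ ℓ b := Real.rpow_le_rpow (by positivity) h6.2 hℓ0
    rw [Real.mul_rpow ha.le (abs_nonneg _)] at l1
    rw [Real.mul_rpow hA.le (abs_nonneg _)] at l2
    constructor
    · rw [div_mul_eq_mul_div, div_le_iff₀ hA']; linarith
    · rw [div_mul_eq_mul_div, le_div_iff₀ ha']; linarith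
  · have hd : deriv f b ≠ 0 := fun h => hcr ⟨hb, h⟩
    obtain ⟨a, ha, A, hA, e1⟩ := bilip_at (differentiableAt_of_deriv_ne_zero hd).hasDerivAt hd
    obtain ⟨δ, hδ, hδU⟩ := Metric.mem_nhds_iff.1 e1
    refine ⟨1, le_rfl, fun h => absurd h hcr, a, ha, A, hA, δ, hδ, fun z _ hzb => ?_⟩
    rw [Real.rpow_one]
    exact hδU (by rwa [mem_ball, Real.dist_eq])

/-- The logarithmic derivative of `f'` exists at `z` and is at most `C / min 1 (dist z (Crit f))` in
absolute value (`Real.log` is even, so no absolute value is needed inside it). The distance is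
replaced by its lower bounds `d`, which also covers the case of no critical point. -/
def DLprop (f : ℝ → ℝ) (C : ℝ) (z : ℝ) : Prop :=
  DifferentiableAt ℝ (fun w => Real.log (deriv f w)) z ∧
    ∀ d, 0 < d → d ≤ 1 → (∀ w ∈ Crit f, d ≤ |z - w|) →
      |deriv (fun w => Real.log (deriv f w)) z| * d ≤ C

lemma DL_crit {f : ℝ → ℝ} {ℓ c : ℝ} (hf : ContDiffOn ℝ 1 f unitI) (hc : c ∈ Crit f)
    (hn : NonflatAt f ℓ c) :
    ∃ δ > 0, ∃ C, ∀ z ∈ Ioo (0 : ℝ) 1, |z - c| < δ → z ∉ Crit f → DLprop f C z := by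
  have hℓ := hn.1
  obtain ⟨φ, ψ, hφ, hψ, hφc, δ, hδ, hz⟩ := nonflat_local hf hn
  have hud : UniqueDiffOn ℝ unitI := uniqueDiffOn_Icc zero_lt_one
  obtain ⟨a, ha, A, hA, e1⟩ := bilip_at (hφ.1.differentiable (by norm_num) c).hasDerivAt (hφ.2.2 c)
  have hφ2 : ContDiff ℝ 2 (deriv φ) := ((contDiff_succ_iff_deriv (n := 2)).1 hφ.1).2.2
  have hψ2 : ContDiff ℝ 2 (deriv ψ) := ((contDiff_succ_iff_deriv (n := 2)).1 hψ.1).2.2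
  have cφ1 : Continuous (deriv φ) := hφ2.continuous
  have cψ1 : Continuous (deriv ψ) := hψ2.continuous
  have cφ2 : Continuous (deriv (deriv φ)) := hφ2.continuous_deriv (by norm_num)
  have cψ2 : Continuous (deriv (deriv ψ)) := hψ2.continuous_deriv (by norm_num)
  have cf1 := hf.continuousOn_derivWithin hud le_rfl
  -- the bounded part of the derivative
  have hQ : ContinuousWithinAt (fun z => |deriv φ z| + |deriv (deriv φ) z / deriv φ z
      - deriv (deriv ψ) (f z) * derivWithin f unitI z / deriv ψ (f z)|) unitI c := by
    have q1 : ContinuousWithinAt f unitI c := hf.continuousOn c hc.1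
    have q2 := cf1 c hc.1
    have q3 : ContinuousWithinAt (fun z => deriv (deriv ψ) (f z)) unitI c :=
      cψ2.continuousAt.comp_continuousWithinAt q1
    have q4 : ContinuousWithinAt (fun z => deriv ψ (f z)) unitI c :=
      cψ1.continuousAt.comp_continuousWithinAt q1
    exact (cφ1.continuousWithinAt.abs).add (((cφ2.continuousWithinAt.div cφ1.continuousWithinAt
      (hφ.2.2 c)).sub ((q3.mul q2).div q4 (hψ.2.2 _))).abs)
  obtain ⟨Q, hQ'⟩ : ∃ Q, ∀ᶠ z in nhdsWithin c unitI, (|deriv φ z| + |deriv (deriv φ) z / deriv φ z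
      - deriv (deriv ψ) (f z) * derivWithin f unitI z / deriv ψ (f z)|) ≤ Q :=
    ⟨_, (hQ.eventually_lt_const (lt_add_one _)).mono fun z h => h.le⟩
  obtain ⟨δ', hδ', hU⟩ := Metric.mem_nhdsWithin_iff.1 (hQ'.and (nhdsWithin_le_nhds e1))
  refine ⟨min δ δ', lt_min hδ hδ', (ℓ - 1) * (Q / a) + Q, fun z hz1 hz2 hz3 => ?_⟩
  have hzI : z ∈ unitI := ⟨hz1.1.le, hz1.2.le⟩
  have hne : z ≠ c := fun h => hz3 (h ▸ hc)
  have hz4 : |z - c| < δ := hz2.trans_le (min_le_left _ _)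
  obtain ⟨hφ0, hf0, -⟩ := hz z hz1 hz4 hne
  obtain ⟨hQz, hlip, -⟩ := hU ⟨by rw [mem_ball, Real.dist_eq]; exact hz2.trans_le (min_le_right _ _), hzI⟩
  rw [hφc, sub_zero] at hlip
  have hev : ∀ᶠ w in nhds z, w ∈ Ioo (0 : ℝ) 1 ∧ |w - c| < δ ∧ w ≠ c := by
    refine (isOpen_Ioo.eventually_mem hz1).and (Filter.Eventually.and ?_ (isOpen_ne.eventually_mem hne))
    exact (isOpen_lt (by fun_prop) continuous_const).eventually_mem (show z ∈ {w | |w - c| < δ} from hz4)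
  have hfd : HasDerivAt f (derivWithin f unitI z) z := by
    have : DifferentiableAt ℝ f z :=
      (hf.differentiableOn one_ne_zero).differentiableAt (Icc_mem_nhds hz1.1 hz1.2)
    rw [this.derivWithin (hud z hzI)]
    exact this.hasDerivAt
  have hφd : HasDerivAt φ (deriv φ z) z := (hφ.1.differentiable (by norm_num) z).hasDerivAt
  have hφd2 : HasDerivAt (deriv φ) (deriv (deriv φ) z) z :=
    (hφ2.differentiable (by norm_num) z).hasDerivAt
  have hψd2 : HasDerivAt (deriv ψ) (deriv (deriv ψ) (f z)) (f z) :=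
    (hψ2.differentiable (by norm_num) (f z)).hasDerivAt
  have hD := (((hφd.log hφ0).const_mul (ℓ - 1)).const_add (Real.log ℓ)).add (hφd2.log (hφ.2.2 z))
    |>.sub ((hψd2.comp z hfd).log (hψ.2.2 (f z)))
  have hD' := hD.congr_of_eventuallyEq (f₁ := fun w => Real.log (deriv f w))
    (hev.mono fun w hw => (hz w hw.1 hw.2.1 hw.2.2).2.2)
  refine ⟨hD'.differentiableAt, fun d hd hd1 hdc => ?_⟩
  rw [hD'.deriv]
  have hdz := hdc c hc
  have hzc : 0 < |z - c| := by rw [abs_pos]; exact sub_ne_zero.2 hne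
  have t1 : |deriv φ z| ≤ Q := by linarith [abs_nonneg (deriv (deriv φ) z / deriv φ z
      - deriv (deriv ψ) (f z) * derivWithin f unitI z / deriv ψ (f z))]
  have t2 : |deriv (deriv φ) z / deriv φ z
      - deriv (deriv ψ) (f z) * derivWithin f unitI z / deriv ψ (f z)| ≤ Q := by
    linarith [abs_nonneg (deriv φ z)]
  have hQ0 : 0 ≤ Q := (abs_nonneg _).trans t1
  have t3 : |deriv φ z / φ z| * d ≤ Q / a := by
    rw [abs_div, div_mul_eq_mul_div, div_le_div_iff₀ (abs_pos.2 hφ0) ha]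
    have : a * d ≤ |φ z| := (mul_le_mul_of_nonneg_left hdz ha.le).trans hlip
    calc |deriv φ z| * d * a = |deriv φ z| * (a * d) := by ring
      _ ≤ Q * |φ z| := mul_le_mul t1 this (by positivity) hQ0
  have e : (ℓ - 1) * (deriv φ z / φ z) + deriv (deriv φ) z / deriv φ z
      - deriv (deriv ψ) (f z) * derivWithin f unitI z / deriv ψ (f z)
      = (ℓ - 1) * (deriv φ z / φ z) + (deriv (deriv φ) z / deriv φ z
      - deriv (deriv ψ) (f z) * derivWithin f unitI z / deriv ψ (f z)) := by ring
  calc _ ≤ ((ℓ - 1) * |deriv φ z / φ z| + Q) * d := by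
        refine mul_le_mul_of_nonneg_right ?_ hd.le
        show |(ℓ - 1) * (deriv φ z / φ z) + deriv (deriv φ) z / deriv φ z
          - deriv (deriv ψ) (f z) * derivWithin f unitI z / deriv ψ (f z)| ≤ _
        rw [e]
        refine (abs_add_le _ _).trans (add_le_add ?_ t2)
        rw [abs_mul, abs_of_pos (by linarith : 0 < ℓ - 1)]
    _ = (ℓ - 1) * (|deriv φ z / φ z| * d) + Q * d := by ring
    _ ≤ _ := add_le_add (mul_le_mul_of_nonneg_left t3 (by linarith))
        (mul_le_of_le_one_right hQ0 hd1)

lemma DL_noncrit {f : ℝ → ℝ} {c : ℝ} (hf : C3Nonflat f) (hcI : c ∈ unitI) (hc : c ∉ Crit f) :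
    ∃ δ > 0, ∃ C, ∀ z ∈ Ioo (0 : ℝ) 1, |z - c| < δ → z ∉ Crit f → DLprop f C z := by
  have hfin := crit_finite hf
  obtain ⟨ℓ, h1, h3, -⟩ := hf
  have hVe : unitI \ Crit f = unitI ∩ (Crit f)ᶜ := rfl
  set V := unitI \ Crit f with hV
  have hopen : IsOpen (Crit f)ᶜ := hfin.isClosed.isOpen_compl
  have hud : UniqueDiffOn ℝ V := by
    rw [hVe]; exact (uniqueDiffOn_Icc zero_lt_one).inter hopen
  have hcV : c ∈ V := ⟨hcI, hc⟩
  have k1 : ContDiffOn ℝ 2 (derivWithin f V) V := h3.derivWithin hud (by norm_num)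
  have k2 : ContinuousOn (derivWithin (derivWithin f V) V) V :=
    k1.continuousOn_derivWithin hud (by norm_num)
  have hdne : ∀ z ∈ V, derivWithin f V z ≠ 0 := by
    intro z hz
    have hd : deriv f z ≠ 0 := fun h => hz.2 ⟨hz.1, h⟩
    rw [(differentiableAt_of_deriv_ne_zero hd).derivWithin (hud z hz)]
    exact hd
  have k3 := ((k2 c hcV).div (k1.continuousOn c hcV) (hdne c hcV)).abs
  obtain ⟨C, hC⟩ : ∃ C, ∀ᶠ z in nhdsWithin c V,
      |derivWithin (derivWithin f V) V z / derivWithin f V z| ≤ C :=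
    ⟨_, (k3.eventually_lt_const (lt_add_one _)).mono fun z h => h.le⟩
  obtain ⟨δ, hδ, hU⟩ := Metric.mem_nhdsWithin_iff.1 hC
  refine ⟨δ, hδ, C, fun z hz1 hz2 hz3 => ?_⟩
  have hzV : z ∈ V := ⟨⟨hz1.1.le, hz1.2.le⟩, hz3⟩
  have hWopen : IsOpen (Ioo (0 : ℝ) 1 ∩ (Crit f)ᶜ) := isOpen_Ioo.inter hopen
  have hWV : Ioo (0 : ℝ) 1 ∩ (Crit f)ᶜ ⊆ V := fun w hw => ⟨⟨hw.1.1.le, hw.1.2.le⟩, hw.2⟩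
  have hzW : z ∈ Ioo (0 : ℝ) 1 ∩ (Crit f)ᶜ := ⟨hz1, hz3⟩
  have hVn : V ∈ nhds z := mem_of_superset (hWopen.mem_nhds hzW) hWV
  have hD : HasDerivAt (derivWithin f V) (derivWithin (derivWithin f V) V z) z := by
    have := (k1.differentiableOn (by norm_num)).differentiableAt hVn
    rw [derivWithin_of_mem_nhds (f := derivWithin f V) hVn]
    exact this.hasDerivAt
  have hD' := (hD.log (hdne z hzV)).congr_of_eventuallyEq (f₁ := fun w => Real.log (deriv f w))
    ((hWopen.eventually_mem hzW).mono fun w hw => by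
      show Real.log (deriv f w) = Real.log (derivWithin f V w)
      rw [derivWithin_of_mem_nhds (mem_of_superset (hWopen.mem_nhds hw) hWV)])
  refine ⟨hD'.differentiableAt, fun d hd hd1 _ => ?_⟩
  rw [hD'.deriv]
  have hb := hU ⟨by rwa [mem_ball, Real.dist_eq], hzV⟩
  exact (mul_le_of_le_one_right (abs_nonneg _) hd1).trans hb

lemma DL_global {f : ℝ → ℝ} (hf : C3Nonflat f) :
    ∃ C > 0, ∀ z ∈ Ioo (0 : ℝ) 1, z ∉ Crit f → DLprop f C z := by
  have key : ∃ C, ∀ z ∈ unitI, z ∈ Ioo (0 : ℝ) 1 → z ∉ Crit f → DLprop f C z := by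
    refine (isCompact_Icc (a := (0 : ℝ)) (b := 1)).induction_on
      (p := fun A => ∃ C, ∀ z ∈ A, z ∈ Ioo (0 : ℝ) 1 → z ∉ Crit f → DLprop f C z) ?_ ?_ ?_ ?_
    · exact ⟨0, fun z hz => absurd hz (notMem_empty z)⟩
    · rintro A B hAB ⟨C, hC⟩; exact ⟨C, fun z hz => hC z (hAB hz)⟩
    · rintro A B ⟨C, hC⟩ ⟨C', hC'⟩
      refine ⟨max C C', fun z hz h1 h2 => ?_⟩
      rcases hz with hz | hz
      · exact ⟨(hC z hz h1 h2).1, fun d a b c => ((hC z hz h1 h2).2 d a b c).trans (le_max_left _ _)⟩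
      · exact ⟨(hC' z hz h1 h2).1, fun d a b c => ((hC' z hz h1 h2).2 d a b c).trans (le_max_right _ _)⟩
    · intro c hc
      obtain ⟨δ, hδ, C, hC⟩ : ∃ δ > 0, ∃ C, ∀ z ∈ Ioo (0 : ℝ) 1, |z - c| < δ → z ∉ Crit f →
          DLprop f C z := by
        by_cases hcr : c ∈ Crit f
        · obtain ⟨ℓ, h1, h3, h4⟩ := hf
          exact DL_crit h1 hcr (h4 c hcr)
        · exact DL_noncrit hf hc hcr
      refine ⟨ball c δ, nhdsWithin_le_nhds (ball_mem_nhds c hδ), C, fun z hz h1 h2 => ?_⟩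
      rw [mem_ball, Real.dist_eq] at hz
      exact hC z h1 hz h2
  obtain ⟨C, hC⟩ := key
  refine ⟨max C 1, by positivity, fun z hz h2 => ?_⟩
  have := hC z ⟨hz.1.le, hz.2.le⟩ hz h2
  exact ⟨this.1, fun d a b c => (this.2 d a b c).trans (le_max_left _ _)⟩

/-! ### The map in the measure coordinate -/

/-- The hypotheses on `f` used below, expressed in the measure coordinate `h`. -/
structure Dyn (f h H : ℝ → ℝ) (K s : ℝ) : Prop extends DH h H K where
  s1 : 1 < s
  fc : ContinuousOn f unitI
  maps : MapsTo f unitI unitI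
  nf : C3Nonflat f
  jac : ∀ y z, 0 ≤ y → y ≤ z → z ≤ 1 → (∀ w ∈ Ioo y z, w ∉ Crit f) →
    (StrictMonoOn f (Icc y z) ∧ h (f z) - h (f y) = s * (h z - h y)) ∨
    (StrictAntiOn f (Icc y z) ∧ h (f y) - h (f z) = s * (h z - h y))
  lip : ∀ y ∈ unitI, ∀ z ∈ unitI, |h (f z) - h (f y)| ≤ s * |h z - h y|

/-- `f` is `s`-Lipschitz in the measure coordinate: cut at the critical points in between. -/
lemma lip_of_jac {f h : ℝ → ℝ} {s : ℝ} (hm : Monotone h) (hfin : (Crit f).Finite)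
    (jac : ∀ y z, 0 ≤ y → y ≤ z → z ≤ 1 → (∀ w ∈ Ioo y z, w ∉ Crit f) →
    (StrictMonoOn f (Icc y z) ∧ h (f z) - h (f y) = s * (h z - h y)) ∨
    (StrictAntiOn f (Icc y z) ∧ h (f y) - h (f z) = s * (h z - h y))) :
    ∀ y ∈ unitI, ∀ z ∈ unitI, |h (f z) - h (f y)| ≤ s * |h z - h y| := by
  have key : ∀ n : ℕ, ∀ y z, 0 ≤ y → y ≤ z → z ≤ 1 → (Crit f ∩ Ioo y z).ncard ≤ n →
      |h (f z) - h (f y)| ≤ s * (h z - h y) := by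
    intro n
    induction n with
    | zero =>
      intro y z hy hyz hz hn
      have he : Crit f ∩ Ioo y z = ∅ :=
        (ncard_eq_zero (hfin.subset inter_subset_left)).1 (Nat.le_zero.1 hn)
      have hh := hm hyz
      rcases jac y z hy hyz hz (fun w hw hc => by
        have : w ∈ Crit f ∩ Ioo y z := ⟨hc, hw⟩
        rw [he] at this; exact this) with ⟨h1, h2⟩ | ⟨h1, h2⟩
      · rw [← h2]
        rw [abs_of_nonneg]
        exact sub_nonneg.2 (hm (h1.monotoneOn ⟨le_rfl, hyz⟩ ⟨hyz, le_rfl⟩ hyz))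
      · rw [← h2, abs_sub_comm]
        rw [abs_of_nonneg]
        exact sub_nonneg.2 (hm (h1.antitoneOn ⟨le_rfl, hyz⟩ ⟨hyz, le_rfl⟩ hyz))
    | succ n ih =>
      intro y z hy hyz hz hn
      by_cases he : (Crit f ∩ Ioo y z) = ∅
      · exact ih y z hy hyz hz (by rw [he]; simp)
      obtain ⟨w, hw1, hw2⟩ := nonempty_iff_ne_empty.2 he
      have hf2 : (Crit f ∩ Ioo y z).Finite := hfin.subset inter_subset_left
      have l1 : (Crit f ∩ Ioo y w).ncard < (Crit f ∩ Ioo y z).ncard := by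
        refine ncard_lt_ncard ⟨fun x hx => ⟨hx.1, hx.2.1, hx.2.2.trans hw2.2⟩, fun hs => ?_⟩ hf2
        exact lt_irrefl _ (hs ⟨hw1, hw2⟩).2.2
      have l2 : (Crit f ∩ Ioo w z).ncard < (Crit f ∩ Ioo y z).ncard := by
        refine ncard_lt_ncard ⟨fun x hx => ⟨hx.1, hw2.1.trans hx.2.1, hx.2.2⟩, fun hs => ?_⟩ hf2
        exact lt_irrefl _ (hs ⟨hw1, hw2⟩).2.1
      have a := ih y w hy hw2.1.le (hw2.2.le.trans hz) (by omega)
      have b := ih w z (hy.trans hw2.1.le) hw2.2.le hz (by omega)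
      calc |h (f z) - h (f y)| ≤ |h (f z) - h (f w)| + |h (f w) - h (f y)| := abs_sub_le _ _ _
        _ ≤ _ := by linarith
  intro y hy z hz
  rcases le_total y z with hyz | hyz
  · rw [abs_of_nonneg (sub_nonneg.2 (hm hyz))]
    exact key _ y z hy.1 hyz hz.2 le_rfl
  · rw [abs_sub_comm, abs_sub_comm (h z), abs_of_nonneg (sub_nonneg.2 (hm hyz))]
    exact key _ z y hz.1 hyz hy.2 le_rfl

/-- A map which does not expand the measure coordinate cannot blow small intervals up to `[0,1]`. -/
lemma one_lt_of_exact {f h H : ℝ → ℝ} {K s : ℝ} (D : DH h H K) (hex : TopExact f)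
    (maps : MapsTo f unitI unitI)
    (lip : ∀ y ∈ unitI, ∀ z ∈ unitI, |h (f z) - h (f y)| ≤ s * |h z - h y|) : 1 < s := by
  by_contra hs1
  push Not at hs1
  have hit : ∀ n : ℕ, ∀ y ∈ unitI, ∀ z ∈ unitI, |h (f^[n] z) - h (f^[n] y)| ≤ |h z - h y| := by
    intro n
    induction n with
    | zero => intro y _ z _; simp
    | succ n ih =>
      intro y hy z hz
      rw [Function.iterate_succ_apply, Function.iterate_succ_apply]
      refine (ih _ (maps hy) _ (maps hz)).trans ((lip y hy z hz).trans ?_)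
      exact mul_le_of_le_one_left (abs_nonneg _) hs1
  have hhalf : h (H (1 / 2)) = 1 / 2 := D.hH' ⟨by norm_num, by norm_num⟩
  have hpos : 0 < H (1 / 2) := D.lt_of (by rw [hhalf, D.zero 0 le_rfl]; norm_num)
  obtain ⟨n, hn, hU⟩ := hex (Iio (H (1 / 2)) ∩ unitI) ⟨0, hpos, le_rfl, zero_le_one⟩
    inter_subset_right ⟨_, isOpen_Iio, rfl⟩
  have h0 : (0 : ℝ) ∈ f^[n] '' (Iio (H (1 / 2)) ∩ unitI) := by rw [hU]; exact ⟨le_rfl, zero_le_one⟩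
  have h1 : (1 : ℝ) ∈ f^[n] '' (Iio (H (1 / 2)) ∩ unitI) := by rw [hU]; exact ⟨zero_le_one, le_rfl⟩
  obtain ⟨y, hy, hy0⟩ := h0
  obtain ⟨z, hz, hz1⟩ := h1
  have := hit n y hy.2 z hz.2
  rw [hy0, hz1, D.zero 0 le_rfl, D.one 1 le_rfl] at this
  have a1 := D.mono (le_of_lt hy.1)
  have a2 := D.mono (le_of_lt hz.1)
  rw [hhalf] at a1 a2
  have a3 := (D.h_mem y).1
  have a4 := (D.h_mem z).1
  have : |h z - h y| ≤ 1 / 2 := abs_le.2 ⟨by linarith, by linarith⟩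
  norm_num at *
  linarith

lemma exists_Dyn {f : ℝ → ℝ} {μ : Measure ℝ} {s : ℝ} (hs : 0 < s) (hmm : Multimodal f)
    (hc3 : C3Nonflat f) (hex : TopExact f) (hμ : IsMaxEntropyLike f μ s) (hd : DoublingOn μ) :
    ∃ h H K, Dyn f h H K s := by
  obtain ⟨h, H, K, D, hI⟩ := measure_setup hμ hd
  have jac := fun y z hy hyz hz hc => jac_of_noncrit (y := y) (z := z) hs D hμ hI hmm.1 hy hyz hz hc
  have lip := lip_of_jac D.mono (crit_finite hc3) jac
  exact ⟨h, H, K, D, one_lt_of_exact D hex hmm.2.1 lip, hmm.1, hmm.2.1, hc3, jac, lip⟩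

/-- Singular points: critical points, and endpoints not mapped to endpoints. Around any other point
of `[0,1]`, small balls of `[0,1]` in the measure coordinate are mapped onto balls. -/
def SS (f : ℝ → ℝ) : Set ℝ := Crit f ∪ {e | (e = 0 ∨ e = 1) ∧ f e ≠ 0 ∧ f e ≠ 1}

lemma SS_sub (f : ℝ → ℝ) : SS f ⊆ unitI := by
  rintro b (hb | ⟨rfl | rfl, -⟩)
  · exact hb.1
  · exact ⟨le_rfl, zero_le_one⟩
  · exact ⟨zero_le_one, le_rfl⟩

lemma SS_finite {f : ℝ → ℝ} (hf : C3Nonflat f) : (SS f).Finite :=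
  (crit_finite hf).union ((Set.toFinite ({0, 1} : Set ℝ)).subset fun _ he => he.1)

namespace Dyn
variable {f h H : ℝ → ℝ} {K s : ℝ}

lemma jac' (D : Dyn f h H K s) {y z : ℝ} (hy : y ∈ unitI) (hz : z ∈ unitI)
    (hc : ∀ w ∈ Ioo (min y z) (max y z), w ∉ Crit f) : |h (f z) - h (f y)| = s * |h z - h y| := by
  have hs := D.s1
  have key : ∀ y z, y ∈ unitI → z ∈ unitI → y ≤ z → (∀ w ∈ Ioo y z, w ∉ Crit f) →
      |h (f z) - h (f y)| = s * |h z - h y| := by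
    intro y z hy hz hyz hc
    have h0 : 0 ≤ s * (h z - h y) := mul_nonneg (by linarith) (sub_nonneg.2 (D.mono hyz))
    rw [abs_of_nonneg (sub_nonneg.2 (D.mono hyz))]
    rcases D.jac y z hy.1 hyz hz.2 hc with ⟨-, h2⟩ | ⟨-, h2⟩
    · rw [h2, abs_of_nonneg h0]
    · rw [abs_sub_comm, h2, abs_of_nonneg h0]
  rcases le_total y z with h1 | h1
  · rw [min_eq_left h1, max_eq_right h1] at hc
    exact key y z hy hz h1 hc
  · rw [min_eq_right h1, max_eq_left h1] at hc
    rw [abs_sub_comm, abs_sub_comm (h z)]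
    exact key z y hz hy h1 hc

lemma pq (D : Dyn f h H K s) {y v : ℝ} (hy : y ∈ unitI) (hv : 0 < v) :
    H (h y - v) ≤ y ∧ y ≤ H (h y + v) ∧ H (h y - v) < H (h y + v) := by
  have h1 := D.Hmono (show h y - v ≤ h y by linarith)
  have h2 := D.Hmono (show h y ≤ h y + v by linarith)
  rw [D.Hh hy] at h1 h2
  have := D.LL_pos (D.h_mem y) hv
  exact ⟨h1, h2, sub_pos.1 this⟩

lemma mem_ball (D : Dyn f h H K s) {y v w : ℝ} (hv : 0 < v) (hw : w ∈ Ioo (H (h y - v)) (H (h y + v))) :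
    w ∈ Ioo (0 : ℝ) 1 ∧ |h w - h y| < v := by
  have a := D.Hmem (h y - v)
  have b := D.Hmem (h y + v)
  have hw1 : w ∈ Ioo (0 : ℝ) 1 := ⟨a.1.trans_lt hw.1, hw.2.trans_le b.2⟩
  have h1 := D.smono a ⟨hw1.1.le, hw1.2.le⟩ hw.1
  have h2 := D.smono ⟨hw1.1.le, hw1.2.le⟩ b hw.2
  rw [D.hH] at h1 h2
  have hy := D.h_mem y
  refine ⟨hw1, abs_lt.2 ⟨?_, ?_⟩⟩
  · have := (le_max_right 0 (min 1 (h y - v))).trans_lt h1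
    rw [min_eq_right (by linarith [hy.2])] at this
    linarith
  · have h3 : h w < min 1 (h y + v) := by
      rwa [max_eq_right (le_min zero_le_one (by linarith [hy.1]))] at h2
    linarith [min_le_right 1 (h y + v)]

/-- A ball without singular points in its interior is mapped onto the ball of radius `s` times as
large, so the mean value theorem relates the two lengths. Balls may stick out of `[0,1]`. -/
lemma ball_image (D : Dyn f h H K s) {y v : ℝ} (hy : y ∈ unitI) (hv : 0 < v)
    (hS : ∀ b ∈ SS f, v ≤ |h b - h y|) :
    ∃ ξ ∈ Ioo (H (h y - v)) (H (h y + v)),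
      LL H (h (f y)) (s * v) = |deriv f ξ| * LL H (h y) v := by
  have hs := D.s1
  have hyI := D.h_mem y
  obtain ⟨h1, h2, h3⟩ := D.pq hy hv
  have hnc : ∀ w ∈ Ioo (H (h y - v)) (H (h y + v)), w ∉ Crit f := fun w hw hc =>
    absurd (hS w (Or.inl hc)) (not_le.2 (D.mem_ball hv hw).2)
  set p := H (h y - v) with hp
  set q := H (h y + v) with hq
  have hpI : p ∈ unitI := D.Hmem _
  have hqI : q ∈ unitI := D.Hmem _
  obtain ⟨ξ, hξ, hξ2⟩ := exists_deriv_eq_slope f h3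
    (D.fc.mono fun w hw => ⟨hpI.1.trans hw.1, hw.2.trans hqI.2⟩)
    (fun w hw => by
      have : deriv f w ≠ 0 := fun h0 => hnc w hw
        ⟨⟨hpI.1.trans hw.1.le, hw.2.le.trans hqI.2⟩, h0⟩
      exact (differentiableAt_of_deriv_ne_zero this).differentiableWithinAt)
  refine ⟨ξ, hξ, ?_⟩
  have hpq0 : 0 < q - p := by linarith
  have hLq : LL H (h y) v = q - p := rfl
  have hslope : |deriv f ξ| * (q - p) = |f q - f p| := by
    rw [hξ2, abs_div, abs_of_pos hpq0, div_mul_cancel₀ _ hpq0.ne']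
  rw [hLq, hslope]
  have j1 := D.jac p y hpI.1 h1 hy.2 (fun w hw => hnc w ⟨hw.1, hw.2.trans_le h2⟩)
  have j2 := D.jac y q hy.1 h2 hqI.2 (fun w hw => hnc w ⟨h1.trans_lt hw.1, hw.2⟩)
  have hhp : h p = max 0 (h y - v) := by
    rw [hp, D.hH, min_eq_right (by linarith [hyI.2])]
  have hhq : h q = min 1 (h y + v) := by
    rw [hq, D.hH, max_eq_right (le_min zero_le_one (by linarith [hyI.1]))]
  have hpp : p ∈ Icc p q := ⟨le_rfl, h3.le⟩
  have hqq : q ∈ Icc p q := ⟨h3.le, le_rfl⟩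
  -- endpoints inside the ball are sent to endpoints
  have hend0 : h y < v → p = 0 ∧ (f 0 = 0 ∨ f 0 = 1) := by
    intro hlt
    refine ⟨D.H_of_nonpos (by linarith), ?_⟩
    by_contra hcon
    push Not at hcon
    have := hS 0 (Or.inr ⟨Or.inl rfl, hcon⟩)
    rw [D.zero 0 le_rfl, zero_sub, abs_neg, abs_of_nonneg hyI.1] at this
    linarith
  have hend1 : 1 - h y < v → q = 1 ∧ (f 1 = 0 ∨ f 1 = 1) := by
    intro hlt
    refine ⟨D.H_of_one_le (by linarith), ?_⟩
    by_contra hcon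
    push Not at hcon
    have := hS 1 (Or.inr ⟨Or.inr rfl, hcon⟩)
    rw [D.one 1 le_rfl, abs_of_nonneg (by linarith [hyI.2])] at this
    linarith
  have hfp := D.maps hpI
  have hfq := D.maps hqI
  rcases D.jac p q hpI.1 h3.le hqI.2 hnc with ⟨hm, -⟩ | ⟨hm, -⟩
  · have hlt := hm hpp hqq h3
    have e1 : h (f y) - h (f p) = s * (h y - h p) := by
      rcases j1 with ⟨-, e⟩ | ⟨hm', e⟩
      · exact e
      · rcases h1.eq_or_lt with e0 | e0
        · rw [e0]; ring
        · exact absurd (hm' ⟨le_rfl, h1⟩ ⟨h1, le_rfl⟩ e0) (not_lt.2 (hm hpp ⟨h1, h2⟩ e0).le)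
    have e2 : h (f q) - h (f y) = s * (h q - h y) := by
      rcases j2 with ⟨-, e⟩ | ⟨hm', e⟩
      · exact e
      · rcases h2.eq_or_lt with e0 | e0
        · rw [e0]; ring
        · exact absurd (hm' ⟨le_rfl, h2⟩ ⟨h2, le_rfl⟩ e0) (not_lt.2 (hm ⟨h1, h2⟩ hqq e0).le)
    have r : H (h (f y) + s * v) = f q := by
      by_cases hc : h y + v ≤ 1
      · rw [min_eq_right hc] at hhq
        have : h (f y) + s * v = h (f q) := by rw [hhq] at e2; linarith
        rw [this, D.Hh hfq]
      · push Not at hc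
        obtain ⟨hq1, hf1⟩ := hend1 (by linarith)
        rw [hq1] at hlt hfq ⊢
        have hf1' : f 1 = 1 := by
          rcases hf1 with e | e
          · rw [e] at hlt; exact absurd hlt (not_lt.2 hfp.1)
          · exact e
        rw [hf1']
        refine D.H_of_one_le ?_
        rw [hq1, hf1', D.one 1 le_rfl] at e2
        nlinarith
    have l : H (h (f y) - s * v) = f p := by
      by_cases hc : 0 ≤ h y - v
      · rw [max_eq_right hc] at hhp
        have : h (f y) - s * v = h (f p) := by rw [hhp] at e1; linarith
        rw [this, D.Hh hfp]
      · push Not at hc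
        obtain ⟨hq1, hf1⟩ := hend0 (by linarith)
        rw [hq1] at hlt hfp ⊢
        have hf1' : f 0 = 0 := by
          rcases hf1 with e | e
          · exact e
          · rw [e] at hlt; exact absurd hlt (not_lt.2 hfq.2)
        rw [hf1']
        refine D.H_of_nonpos ?_
        rw [hq1, hf1', D.zero 0 le_rfl] at e1
        nlinarith
    unfold LL
    rw [r, l, abs_of_pos (by linarith)]
  · have hlt := hm hpp hqq h3
    have e1 : h (f p) - h (f y) = s * (h y - h p) := by
      rcases j1 with ⟨hm', e⟩ | ⟨-, e⟩
      · rcases h1.eq_or_lt with e0 | e0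
        · rw [e0]; ring
        · exact absurd (hm' ⟨le_rfl, h1⟩ ⟨h1, le_rfl⟩ e0) (not_lt.2 (hm hpp ⟨h1, h2⟩ e0).le)
      · exact e
    have e2 : h (f y) - h (f q) = s * (h q - h y) := by
      rcases j2 with ⟨hm', e⟩ | ⟨-, e⟩
      · rcases h2.eq_or_lt with e0 | e0
        · rw [e0]; ring
        · exact absurd (hm' ⟨le_rfl, h2⟩ ⟨h2, le_rfl⟩ e0) (not_lt.2 (hm ⟨h1, h2⟩ hqq e0).le)
      · exact e
    have r : H (h (f y) - s * v) = f q := by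
      by_cases hc : h y + v ≤ 1
      · rw [min_eq_right hc] at hhq
        have : h (f y) - s * v = h (f q) := by rw [hhq] at e2; linarith
        rw [this, D.Hh hfq]
      · push Not at hc
        obtain ⟨hq1, hf1⟩ := hend1 (by linarith)
        rw [hq1] at hlt hfq ⊢
        have hf1' : f 1 = 0 := by
          rcases hf1 with e | e
          · exact e
          · rw [e] at hlt; exact absurd hlt (not_lt.2 hfp.2)
        rw [hf1']
        refine D.H_of_nonpos ?_
        rw [hq1, hf1', D.one 1 le_rfl, D.zero 0 le_rfl] at e2
        nlinarith
    have l : H (h (f y) + s * v) = f p := by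
      by_cases hc : 0 ≤ h y - v
      · rw [max_eq_right hc] at hhp
        have : h (f y) + s * v = h (f p) := by rw [hhp] at e1; linarith
        rw [this, D.Hh hfp]
      · push Not at hc
        obtain ⟨hq1, hf1⟩ := hend0 (by linarith)
        rw [hq1] at hlt hfp ⊢
        have hf1' : f 0 = 1 := by
          rcases hf1 with e | e
          · rw [e] at hlt; exact absurd hlt (not_lt.2 hfq.1)
          · exact e
        rw [hf1']
        refine D.H_of_one_le ?_
        rw [hq1, hf1', D.zero 0 le_rfl, D.one 1 le_rfl] at e1
        nlinarith
    unfold LL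
    rw [r, l, abs_sub_comm, abs_of_pos (by linarith)]

/-- Away from the critical points, the distance to the boundary of `[0,1]` expands by `s` in the
measure coordinate. -/
lemma bdry_image (D : Dyn f h H K s) {y v : ℝ} (hy : y ∈ unitI) (hv : 0 < v)
    (hS : ∀ b ∈ Crit f, v ≤ |h b - h y|) (h0 : v ≤ h y) (h1 : v ≤ 1 - h y) :
    s * v ≤ h (f y) ∧ s * v ≤ 1 - h (f y) := by
  obtain ⟨a1, a2, a3⟩ := D.pq hy hv
  have hnc : ∀ w ∈ Ioo (H (h y - v)) (H (h y + v)), w ∉ Crit f := fun w hw hc =>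
    absurd (hS w hc) (not_le.2 (D.mem_ball hv hw).2)
  have hhp : h (H (h y - v)) = h y - v := D.hH' ⟨by linarith, by linarith [(D.h_mem y).2]⟩
  have hhq : h (H (h y + v)) = h y + v := D.hH' ⟨by linarith [(D.h_mem y).1], by linarith⟩
  have hpI : H (h y - v) ∈ unitI := D.Hmem _
  have hqI : H (h y + v) ∈ unitI := D.Hmem _
  have j := D.jac _ _ hpI.1 a3.le hqI.2 hnc
  have j1 := D.lip y hy _ hpI
  have j2 := D.lip y hy _ hqI
  rw [hhp, show h y - v - h y = -v by ring, abs_neg, abs_of_pos hv] at j1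
  rw [hhq, show h y + v - h y = v by ring, abs_of_pos hv] at j2
  have k1 := D.h_mem (f (H (h y - v)))
  have k2 := D.h_mem (f (H (h y + v)))
  have j1 := abs_le.1 j1
  have j2 := abs_le.1 j2
  rw [hhp, hhq] at j
  have := k1.1; have := k1.2; have := k2.1; have := k2.2
  rcases j with ⟨-, j⟩ | ⟨-, j⟩
  · constructor <;> linarith [j1.1, j1.2, j2.1, j2.2]
  · constructor <;> linarith [j1.1, j1.2, j2.1, j2.2]

end Dyn

/-! ### Transport of profiles -/

/-- Logarithm of the length of the ball of radius `v` about `t`. -/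
def RR (H : ℝ → ℝ) (t v : ℝ) : ℝ := Real.log (LL H t v)

namespace DH
variable {h H : ℝ → ℝ} {K : ℝ}

lemma RR_nonpos (D : DH h H K) {t v : ℝ} (ht : t ∈ Icc (0 : ℝ) 1) (hv : 0 < v) : RR H t v ≤ 0 :=
  Real.log_nonpos (D.LL_pos ht hv).le (D.LL_le_one t v)

lemma RR_mono (D : DH h H K) {t v v' : ℝ} (ht : t ∈ Icc (0 : ℝ) 1) (hv : 0 < v) (hvv : v ≤ v') :
    RR H t v ≤ RR H t v' :=
  Real.log_le_log (D.LL_pos ht hv) (D.LL_nested (by linarith) (by linarith))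

lemma RR_abs (D : DH h H K) {t v v' : ℝ} (ht : t ∈ Icc (0 : ℝ) 1) (hv : 0 < v) (hvv : v ≤ v') :
    |RR H t v'| ≤ |RR H t v| := by
  rw [abs_of_nonpos (D.RR_nonpos ht hv), abs_of_nonpos (D.RR_nonpos ht (hv.trans_le hvv))]
  linarith [D.RR_mono ht hv hvv]

lemma RR_scale (D : DH h H K) (s : ℝ) (hs : 0 < s) : ∃ C ≥ 0, ∀ t ∈ Icc (0 : ℝ) 1, ∀ v > 0,
    RR H t (s * v) - RR H t v ≤ C := by
  obtain ⟨K', hK', hk⟩ := D.LL_scale s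
  refine ⟨Real.log K', Real.log_nonneg hK', fun t ht v hv => ?_⟩
  have h1 := Real.log_le_log (D.LL_pos ht (mul_pos hs hv)) (hk t ht v hv)
  rw [Real.log_mul (by linarith) (D.LL_pos ht hv).ne'] at h1
  unfold RR; linarith

lemma RR_near (D : DH h H K) {t t' v : ℝ} (ht : t ∈ Icc (0 : ℝ) 1) (ht' : t' ∈ Icc (0 : ℝ) 1)
    (hv : 0 < v) (htt : |t - t'| ≤ 2 * v) : |RR H t v - RR H t' v| ≤ 2 * Real.log K := by
  have hK := D.oneK
  have key : ∀ t t', t ∈ Icc (0 : ℝ) 1 → t' ∈ Icc (0 : ℝ) 1 → |t - t'| ≤ 2 * v →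
      RR H t v - RR H t' v ≤ 2 * Real.log K := by
    intro t t' ht ht' htt
    have h0 := abs_le.1 htt
    have h1 := D.LL_compare (t := t) (v := v) ht' hv 2 (by linarith [h0.1]) (by linarith [h0.2])
    have h2 := Real.log_le_log (D.LL_pos ht hv) h1
    rw [Real.log_mul (by positivity) (D.LL_pos ht' hv).ne', Real.log_pow] at h2
    unfold RR
    push_cast at h2
    linarith
  refine abs_le.2 ⟨?_, key t t' ht ht' htt⟩
  linarith [key t' t ht' ht (by rwa [abs_sub_comm])]

/-- A one-sided interval is comparable to the ball of the same measure. -/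
lemma LL_side (D : DH h H K) {x z : ℝ} (hx : x ∈ Icc (0 : ℝ) 1) (hz : z ∈ Icc (0 : ℝ) 1)
    (hne : z ≠ x) :
    |z - x| ≤ LL H (h x) |h z - h x| ∧ LL H (h x) |h z - h x| ≤ K ^ 2 * |z - x| := by
  have hxm := D.h_mem x
  have hzm := D.h_mem z
  rcases lt_or_gt_of_ne hne with hlt | hlt
  · have h1 := D.smono hz hx hlt
    rw [abs_of_neg (sub_neg.2 h1), abs_of_neg (sub_neg.2 hlt)]
    constructor
    · have a := D.Hmono (show h x - -(h z - h x) ≤ h z by linarith)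
      have b := D.Hmono (show h x ≤ h x + -(h z - h x) by linarith)
      rw [D.Hh hz] at a
      rw [D.Hh hx] at b
      unfold LL; linarith
    · have := D.LL_le_interval (t := h x) (v := -(h z - h x)) hzm.1 h1 hxm.2 2
        (by linarith) (by linarith)
      rw [D.Hh hz, D.Hh hx] at this
      linarith
  · have h1 := D.smono hx hz hlt
    rw [abs_of_pos (sub_pos.2 h1), abs_of_pos (sub_pos.2 hlt)]
    constructor
    · have a := D.Hmono (show h z ≤ h x + (h z - h x) by linarith)
      have b := D.Hmono (show h x - (h z - h x) ≤ h x by linarith)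
      rw [D.Hh hz] at a
      rw [D.Hh hx] at b
      unfold LL; linarith
    · have := D.LL_le_interval (t := h x) (v := (h z - h x)) hxm.1 h1 hzm.2 2
        (by linarith) (by linarith)
      rw [D.Hh hz, D.Hh hx] at this
      linarith

lemma RR_side (D : DH h H K) {x z : ℝ} (hx : x ∈ Icc (0 : ℝ) 1) (hz : z ∈ Icc (0 : ℝ) 1)
    (hne : z ≠ x) : abs (RR H (h x) (|h z - h x|) - Real.log (|z - x|)) ≤ 2 * Real.log K := by
  have hK := D.oneK
  obtain ⟨h1, h2⟩ := D.LL_side hx hz hne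
  have hp : 0 < |z - x| := abs_pos.2 (sub_ne_zero.2 hne)
  have h3 := Real.log_le_log hp h1
  have h4 := Real.log_le_log (hp.trans_le h1) h2
  rw [Real.log_mul (by positivity) hp.ne', Real.log_pow] at h4
  push_cast at h4
  have := Real.log_nonneg hK
  unfold RR
  exact abs_le.2 ⟨by linarith, by linarith⟩

end DH

namespace Dyn
variable {f h H : ℝ → ℝ} {K s : ℝ}

/-- Below the scale `η` of the distance to the singular set, increments of `RR` are preserved by
`f` up to the distortion of `f`, which is governed by the bound on `(log |f'|)'`. -/
lemma S1 (D : Dyn f h H K s) : ∃ C > 0, ∀ y ∈ unitI, ∀ η > 0, (∀ b ∈ SS f, 2 * η ≤ |h b - h y|) →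
    ∀ v v', 0 < v → v ≤ v' → v' ≤ η →
    RR H (h y) v' - RR H (h y) v ≤ RR H (h (f y)) (s * v') - RR H (h (f y)) (s * v)
      + C * (LL H (h y) v' / LL H (h y) η) := by
  have hK := D.oneK
  obtain ⟨C, hC, hDL⟩ := DL_global D.nf
  refine ⟨C * K ^ 3, by positivity, fun y hy η hη hS v v' hv hvv hv' => ?_⟩
  have hyI := D.h_mem y
  have hv'0 := hv.trans_le hvv
  obtain ⟨ξ, hξ, e1⟩ := D.ball_image hy hv (fun b hb => (by linarith : v ≤ 2 * η).trans (hS b hb))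
  obtain ⟨ξ', hξ', e2⟩ := D.ball_image hy hv'0 (fun b hb => (by linarith : v' ≤ 2 * η).trans (hS b hb))
  have hsub : ξ ∈ Ioo (H (h y - v')) (H (h y + v')) :=
    ⟨(D.Hmono (by linarith)).trans_lt hξ.1, hξ.2.trans_le (D.Hmono (by linarith))⟩
  have hLη := D.LL_pos hyI hη
  set d := LL H (h y) η / K ^ 3 with hd
  have hd0 : 0 < d := by positivity
  have hd1 : d ≤ 1 := by
    rw [hd, div_le_one (by positivity)]
    exact (D.LL_le_one _ _).trans (one_le_pow₀ hK)
  have hdist : ∀ z ∈ Ioo (H (h y - v')) (H (h y + v')), ∀ w ∈ Crit f, d ≤ |z - w| := by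
    intro z hz w hw
    have hzv := abs_lt.1 (D.mem_ball hv'0 hz).2
    have hzI := (D.mem_ball hv'0 hz).1
    have hwy := hS w (Or.inl hw)
    have hwI := D.h_mem w
    rw [hd, div_le_iff₀ (by positivity), mul_comm]
    rcases le_total 0 (h w - h y) with h0 | h0
    · rw [abs_of_nonneg h0] at hwy
      have := D.LL_le_interval (t := h y) (v := η) (a := h y + η) (b := h y + 2 * η)
        (by linarith [hyI.1]) (by linarith) (by linarith [hwI.2]) 3 (by linarith) (by linarith)
      refine this.trans (mul_le_mul_of_nonneg_left ?_ (by positivity))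
      have a := D.Hmono (show h y + 2 * η ≤ h w by linarith)
      have b := D.Hmono (show h z ≤ h y + η by linarith [hzv.2])
      rw [D.Hh hw.1] at a
      rw [D.Hh ⟨hzI.1.le, hzI.2.le⟩] at b
      rw [abs_sub_comm]
      exact le_trans (by linarith) (le_abs_self _)
    · rw [abs_of_nonpos h0] at hwy
      have := D.LL_le_interval (t := h y) (v := η) (a := h y - 2 * η) (b := h y - η)
        (by linarith [hwI.1]) (by linarith) (by linarith [hyI.2]) 3 (by linarith) (by linarith)
      refine this.trans (mul_le_mul_of_nonneg_left ?_ (by positivity))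
      have a := D.Hmono (show h w ≤ h y - 2 * η by linarith)
      have b := D.Hmono (show h y - η ≤ h z by linarith [hzv.1])
      rw [D.Hh hw.1] at a
      rw [D.Hh ⟨hzI.1.le, hzI.2.le⟩] at b
      exact le_trans (by linarith) (le_abs_self _)
  have hnc : ∀ z ∈ Ioo (H (h y - v')) (H (h y + v')), z ∉ Crit f := fun z hz hc => by
    have := hdist z hz z hc
    rw [sub_self, abs_zero] at this
    linarith
  have hmv := (convex_Ioo (H (h y - v')) (H (h y + v'))).norm_image_sub_le_of_norm_deriv_le
    (f := fun w => Real.log (deriv f w)) (C := C / d)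
    (fun z hz => (hDL z (D.mem_ball hv'0 hz).1 (hnc z hz)).1)
    (fun z hz => by
      rw [Real.norm_eq_abs, le_div_iff₀ hd0]
      exact (hDL z (D.mem_ball hv'0 hz).1 (hnc z hz)).2 d hd0 hd1 (hdist z hz)) hsub hξ'
  rw [Real.norm_eq_abs, Real.norm_eq_abs] at hmv
  have hξξ : |ξ' - ξ| ≤ LL H (h y) v' := by
    unfold LL
    exact abs_le.2 ⟨by linarith [hξ'.1, hsub.2], by linarith [hξ'.2, hsub.1]⟩
  have hb : C / d * |ξ' - ξ| ≤ C * K ^ 3 * (LL H (h y) v' / LL H (h y) η) := by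
    calc _ ≤ C / d * LL H (h y) v' := mul_le_mul_of_nonneg_left hξξ (by positivity)
      _ = _ := by rw [hd]; field_simp
  have hne : ∀ z ∈ Ioo (H (h y - v')) (H (h y + v')), deriv f z ≠ 0 := fun z hz h0 =>
    hnc z hz ⟨⟨(D.mem_ball hv'0 hz).1.1.le, (D.mem_ball hv'0 hz).1.2.le⟩, h0⟩
  have r1 : RR H (h (f y)) (s * v) = Real.log (deriv f ξ) + RR H (h y) v := by
    unfold RR
    rw [e1, Real.log_mul (abs_ne_zero.2 (hne ξ hsub)) (D.LL_pos hyI hv).ne', Real.log_abs]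
  have r2 : RR H (h (f y)) (s * v') = Real.log (deriv f ξ') + RR H (h y) v' := by
    unfold RR
    rw [e2, Real.log_mul (abs_ne_zero.2 (hne ξ' hξ')) (D.LL_pos hyI hv'0).ne', Real.log_abs]
  have := (abs_le.1 (hmv.trans hb)).1
  rw [r1, r2]
  linarith

/-- For small `v` there is a point at measure distance `v` from `b`, on the side of `b` with more
room, with no critical point strictly in between. -/
lemma S2_side (D : Dyn f h H K s) {b : ℝ} (hb : b ∈ unitI) {δ : ℝ} (hδ : 0 < δ) :
    ∃ v₁ > 0, ∀ v, 0 < v → v < v₁ → ∃ z ∈ unitI, z ≠ b ∧ |h z - h b| = v ∧ |z - b| < δ ∧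
      ∀ w ∈ Ioo (min b z) (max b z), w ∉ Crit f := by
  have hbm := D.h_mem b
  have hfin := (crit_finite D.nf)
  have hev : ∀ᶠ w in nhds b, w ≠ b → w ∉ Crit f := by
    have : IsClosed (Crit f \ {b}) := (hfin.subset sdiff_subset).isClosed
    refine (this.isOpen_compl.eventually_mem (show b ∉ Crit f \ {b} from fun hh => hh.2 rfl)).mono ?_
    intro w hw hne hc
    exact hw ⟨hc, hne⟩
  obtain ⟨ε, hε, hball⟩ := Metric.mem_nhds_iff.1 hev
  rcases le_total (h b) (1 / 2) with hh | hh
  · have hb1 : b < 1 := D.lt_of (by rw [D.one 1 le_rfl]; linarith)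
    set e := min (min δ ε) (1 - b) with he
    have he0 : 0 < e := lt_min (lt_min hδ hε) (by linarith)
    have he1 : e ≤ δ := (min_le_left _ _).trans (min_le_left _ _)
    have he2 : e ≤ ε := (min_le_left _ _).trans (min_le_right _ _)
    have he3 : e ≤ 1 - b := min_le_right _ _
    have hbe : b + e ∈ unitI := ⟨by linarith [hb.1], by linarith⟩
    refine ⟨h (b + e) - h b, sub_pos.2 (D.smono hb hbe (by linarith)), fun v hv hv1 => ?_⟩
    have hbeI := D.h_mem (b + e)
    have hz : h (H (h b + v)) = h b + v := D.hH' ⟨by linarith [hbm.1], by linarith [hbeI.2]⟩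
    have z1 : b < H (h b + v) := D.lt_of (by rw [hz]; linarith)
    have z2 : H (h b + v) < b + e := D.lt_of (by rw [hz]; linarith)
    refine ⟨H (h b + v), D.Hmem _, z1.ne', ?_, ?_, ?_⟩
    · rw [hz, add_sub_cancel_left, abs_of_pos hv]
    · rw [abs_of_pos (by linarith)]; linarith
    · rw [min_eq_left z1.le, max_eq_right z1.le]
      intro w hw
      exact hball (by rw [Metric.mem_ball, Real.dist_eq, abs_of_pos (by linarith [hw.1])]; linarith [hw.2])
        hw.1.ne'
  · have hb1 : 0 < b := D.lt_of (by rw [D.zero 0 le_rfl]; linarith)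
    set e := min (min δ ε) b with he
    have he0 : 0 < e := lt_min (lt_min hδ hε) (by linarith)
    have he1 : e ≤ δ := (min_le_left _ _).trans (min_le_left _ _)
    have he2 : e ≤ ε := (min_le_left _ _).trans (min_le_right _ _)
    have he3 : e ≤ b := min_le_right _ _
    have hbe : b - e ∈ unitI := ⟨by linarith, by linarith [hb.2]⟩
    refine ⟨h b - h (b - e), sub_pos.2 (D.smono hbe hb (by linarith)), fun v hv hv1 => ?_⟩
    have hbeI := D.h_mem (b - e)
    have hz : h (H (h b - v)) = h b - v := D.hH' ⟨by linarith [hbeI.1], by linarith [hbm.2]⟩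
    have z1 : H (h b - v) < b := D.lt_of (by rw [hz]; linarith)
    have z2 : b - e < H (h b - v) := D.lt_of (by rw [hz]; linarith)
    refine ⟨H (h b - v), D.Hmem _, z1.ne, ?_, ?_, ?_⟩
    · rw [hz, sub_sub_cancel_left, abs_neg, abs_of_pos hv]
    · rw [abs_of_neg (by linarith)]; linarith
    · rw [min_eq_right z1.le, max_eq_left z1.le]
      intro w hw
      exact hball (by rw [Metric.mem_ball, Real.dist_eq, abs_of_neg (by linarith [hw.2])]; linarith [hw.1])
        hw.2.ne

/-- Seen from a scale at which `b` is visible, the map `f` multiplies `RR` by the exponent of the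
power law at `b`, up to a bounded error. -/
lemma S2 (D : Dyn f h H K s) {b : ℝ} (hb : b ∈ unitI) :
    ∃ ℓ : ℝ, 1 ≤ ℓ ∧ (b ∈ Crit f → 1 < ℓ) ∧ ∃ C, ∀ y ∈ unitI, ∀ v > 0, |h y - h b| ≤ 2 * v →
      |RR H (h (f y)) (s * v) - ℓ * RR H (h y) v| ≤ C := by
  have hs := D.s1
  have hK := Real.log_nonneg D.oneK
  obtain ⟨ℓ, hℓ, hℓc, a, ha, A, hA, δ, hδ, hpow⟩ := power_law D.nf D.fc hb
  refine ⟨ℓ, hℓ, hℓc, ?_⟩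
  obtain ⟨v₁, hv₁, hside⟩ := D.S2_side hb hδ
  obtain ⟨c, hc, hlow⟩ := D.LL_lower hv₁
  have hbI := D.h_mem b
  have hfbI := D.h_mem (f b)
  have main : ∃ C, ∀ v > 0, |RR H (h (f b)) (s * v) - ℓ * RR H (h b) v| ≤ C := by
    refine ⟨max (2 * Real.log K + (|Real.log a| + |Real.log A|) + ℓ * (2 * Real.log K))
      ((1 + ℓ) * |Real.log c|), fun v hv => ?_⟩
    have hsv : 0 < s * v := by positivity
    by_cases hvv : v < v₁
    · refine le_trans ?_ (le_max_left _ _)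
      obtain ⟨z, hz, hzb, hzv, hzδ, hnc⟩ := hside v hv hvv
      have hj := D.jac' hb hz hnc
      rw [hzv] at hj
      obtain ⟨p1, p2⟩ := hpow z hz hzδ
      have hzb' : 0 < |z - b| := abs_pos.2 (sub_ne_zero.2 hzb)
      have hfz : 0 < |f z - f b| := lt_of_lt_of_le (by positivity) p1
      have hfzb : f z ≠ f b := sub_ne_zero.1 (abs_pos.1 hfz)
      have r1 := D.RR_side (D.maps hb) (D.maps hz) hfzb
      have r2 := D.RR_side hb hz hzb
      rw [hj] at r1
      rw [hzv] at r2
      have hpw : 0 < |z - b| ^ ℓ := by positivity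
      have q1 := Real.log_le_log (by positivity) p1
      have q2 := Real.log_le_log hfz p2
      rw [Real.log_mul ha.ne' hpw.ne', Real.log_rpow hzb'] at q1
      rw [Real.log_mul hA.ne' hpw.ne', Real.log_rpow hzb'] at q2
      have n1 := neg_abs_le (Real.log a)
      have n2 := le_abs_self (Real.log A)
      have n3 := abs_nonneg (Real.log a)
      have n4 := abs_nonneg (Real.log A)
      have r1 := abs_le.1 r1
      have r2 := abs_le.1 r2
      have m1 := mul_le_mul_of_nonneg_left r2.1 (by linarith : 0 ≤ ℓ)
      have m2 := mul_le_mul_of_nonneg_left r2.2 (by linarith : 0 ≤ ℓ)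
      exact abs_le.2 ⟨by linarith [r1.1], by linarith [r1.2]⟩
    · push Not at hvv
      refine le_trans ?_ (le_max_right _ _)
      have hsv1 : v₁ ≤ s * v := by nlinarith
      have l1 := Real.log_le_log hc (hlow _ hbI v hvv)
      have l2 := Real.log_le_log hc (hlow _ hfbI _ hsv1)
      have l3 := D.RR_nonpos hbI hv
      have l4 := D.RR_nonpos hfbI hsv
      have n1 := neg_abs_le (Real.log c)
      unfold RR at *
      exact abs_le.2 ⟨by nlinarith, by nlinarith⟩
  obtain ⟨C, hC⟩ := main
  refine ⟨C + 2 * Real.log K + ℓ * (2 * Real.log K), fun y hy v hv hyb => ?_⟩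
  have n1 := abs_le.1 (D.RR_near (D.h_mem y) hbI hv hyb)
  have n2 := abs_le.1 (D.RR_near (D.h_mem (f y)) hfbI (show 0 < s * v by positivity)
    ((D.lip b hb y hy).trans (by nlinarith)))
  have n3 := abs_le.1 (hC v hv)
  have m1 := mul_le_mul_of_nonneg_left n1.1 (by linarith : 0 ≤ ℓ)
  have m2 := mul_le_mul_of_nonneg_left n1.2 (by linarith : 0 ≤ ℓ)
  exact abs_le.2 ⟨by linarith [n2.1, n3.1], by linarith [n2.2, n3.2]⟩

end Dyn

/-! ### Counting scales and uniform constants -/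

/-- Distance to the boundary of the unit interval, in the measure coordinate. -/
def dd (h : ℝ → ℝ) (y : ℝ) : ℝ := min (h y) (1 - h y)

/-- The number of steps of the geometric sequence `u, u * s, u * s ^ 2, …` needed to exceed `d`. -/
def NN (s u d : ℝ) : ℕ := sInf {k : ℕ | d < u * s ^ k}

lemma NN_spec {s u : ℝ} (hs : 1 < s) (hu : 0 < u) (d : ℝ) : d < u * s ^ NN s u d := by
  have : {k : ℕ | d < u * s ^ k}.Nonempty := by
    obtain ⟨n, hn⟩ := pow_unbounded_of_one_lt (d / u) hs
    exact ⟨n, by rw [div_lt_iff₀ hu] at hn; simpa [mul_comm] using hn⟩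
  exact Nat.sInf_mem this

lemma NN_le {s u d : ℝ} {k : ℕ} (h : d < u * s ^ k) : NN s u d ≤ k := Nat.sInf_le h

lemma NN_lt {s u d : ℝ} {k : ℕ} (h : k < NN s u d) : u * s ^ k ≤ d := by
  by_contra hh
  exact absurd (NN_le (not_le.1 hh)) (not_le.2 h)

lemma NN_mono {s u d d' : ℝ} (hs : 1 < s) (hu : 0 < u) (hd : d ≤ d') : NN s u d ≤ NN s u d' :=
  NN_le (hd.trans_lt (NN_spec hs hu d'))

lemma NN_scale {s u d : ℝ} (hs : 1 < s) : NN s (s * u) (s * d) = NN s u d := by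
  unfold NN
  congr 1
  ext k
  simp only [mem_ofPred_eq, mul_assoc]
  exact mul_lt_mul_iff_right₀ (by linarith)

lemma NN_succ {s u d : ℝ} (hs : 1 < s) (hu : 0 < u) (hd : u ≤ d) :
    NN s (s * u) d + 1 ≤ NN s u d := by
  have h1 := NN_spec hs hu d
  cases hn : NN s u d with
  | zero => rw [hn] at h1; simp at h1; linarith
  | succ m =>
    rw [hn] at h1
    have : NN s (s * u) d ≤ m := NN_le (by rw [pow_succ] at h1; linarith)
    omega

namespace Dyn
variable {f h H : ℝ → ℝ} {K s : ℝ}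

/-- Reverse doubling, iterated. -/
lemma growth (D : Dyn f h H K s) : ∃ κ > 0, ∀ t ∈ Icc (0 : ℝ) 1, ∀ j : ℕ, ∀ v > 0,
    v * s ^ j ≤ 1 / 2 → (1 + κ) ^ j * LL H t v ≤ LL H t (v * s ^ j) := by
  have hs := D.s1
  obtain ⟨κ, hκ, hg⟩ := D.LL_growth D.s1
  refine ⟨κ, hκ, fun t ht j => ?_⟩
  induction j with
  | zero => intro v hv _; simp
  | succ j ih =>
    intro v hv hj
    have e : s * (v * s ^ j) = v * s ^ (j + 1) := by ring
    have hp : 0 < v * s ^ j := by positivity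
    have h1 := hg t ht _ hp (by rw [e]; exact hj)
    rw [e] at h1
    have h2 := ih v hv (by nlinarith)
    calc (1 + κ) ^ (j + 1) * LL H t v = (1 + κ) * ((1 + κ) ^ j * LL H t v) := by ring
      _ ≤ (1 + κ) * LL H t (v * s ^ j) := mul_le_mul_of_nonneg_left h2 (by linarith)
      _ ≤ _ := h1

lemma dd_pos (D : Dyn f h H K s) {x : ℝ} (hx : x ∈ unitI) (h0 : x ≠ 0) (h1 : x ≠ 1) :
    0 < dd h x := by
  have a := D.smono (⟨le_rfl, zero_le_one⟩ : (0:ℝ) ∈ Icc (0:ℝ) 1) hx (lt_of_le_of_ne hx.1 h0.symm)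
  have b := D.smono hx (⟨zero_le_one, le_rfl⟩ : (1:ℝ) ∈ Icc (0:ℝ) 1) (lt_of_le_of_ne hx.2 h1)
  rw [D.zero 0 le_rfl] at a
  rw [D.one 1 le_rfl] at b
  exact lt_min a (by linarith)

lemma dd_nonneg (D : Dyn f h H K s) (x : ℝ) : 0 ≤ dd h x :=
  le_min (D.h_mem x).1 (by linarith [(D.h_mem x).2])

/-- Uniform constants for the local behaviour of `f` at the singular set. -/
lemma S2_unif (D : Dyn f h H K s) : ∃ C ≥ 0, ∃ lam > 0, ∃ ε > 0, ∀ b ∈ SS f,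
    (∃ ℓ : ℝ, 1 ≤ ℓ ∧ (b ∈ Crit f → 1 / ℓ ≤ 1 - lam) ∧
      ∀ y ∈ unitI, ∀ v > 0, |h y - h b| ≤ 2 * v →
      |RR H (h (f y)) (s * v) - ℓ * RR H (h y) v| ≤ C) ∧
    (f b ≠ 0 → f b ≠ 1 → 2 * ε ≤ dd h (f b)) := by
  have key : ∀ b : ℝ, ∃ C lam ε : ℝ, 0 < lam ∧ 0 < ε ∧ (b ∈ SS f →
    (∃ ℓ : ℝ, 1 ≤ ℓ ∧ (b ∈ Crit f → 1 / ℓ ≤ 1 - lam) ∧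
      ∀ y ∈ unitI, ∀ v > 0, |h y - h b| ≤ 2 * v →
      |RR H (h (f y)) (s * v) - ℓ * RR H (h y) v| ≤ C) ∧
    (f b ≠ 0 → f b ≠ 1 → 2 * ε ≤ dd h (f b))) := by
    classical
    intro b
    by_cases hb : b ∈ SS f
    · have hbI := SS_sub f hb
      obtain ⟨ℓ, h1, h2, C, h3⟩ := D.S2 hbI
      refine ⟨C, if b ∈ Crit f then 1 - 1 / ℓ else 1,
        if f b ≠ 0 ∧ f b ≠ 1 then dd h (f b) / 2 else 1, ?_, ?_,
        fun _ => ⟨⟨ℓ, h1, ?_, h3⟩, ?_⟩⟩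
      · split_ifs with hc
        · have := h2 hc
          have : 1 / ℓ < 1 := by rw [div_lt_one (by linarith)]; exact this
          linarith
        · exact one_pos
      · split_ifs with hc
        · have := D.dd_pos (D.maps hbI) hc.1 hc.2
          positivity
        · exact one_pos
      · intro hc; rw [if_pos hc]; linarith
      · intro a1 a2; rw [if_pos ⟨a1, a2⟩]; linarith
    · exact ⟨0, 1, 1, one_pos, one_pos, fun hh => absurd hh hb⟩
  choose C lam ε hl he hk using key
  have hfin := SS_finite D.nf
  have e1 : ∃ c : ℝ, 0 ≤ c ∧ ∀ b ∈ SS f, C b ≤ c := by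
    obtain ⟨c, hc⟩ := (hfin.image C).bddAbove
    exact ⟨max c 0, le_max_right _ _, fun b hb => (hc ⟨b, hb, rfl⟩).trans (le_max_left _ _)⟩
  have low : ∀ g : ℝ → ℝ, (∀ b, 0 < g b) → ∃ c > 0, ∀ b ∈ SS f, c ≤ g b := by
    intro g hg
    rcases (SS f).eq_empty_or_nonempty with h0 | h0
    · exact ⟨1, one_pos, fun b hb => by rw [h0] at hb; exact hb.elim⟩
    · obtain ⟨a, ha, hmin⟩ := Set.exists_min_image (SS f) g hfin h0
      exact ⟨g a, hg a, hmin⟩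
  obtain ⟨c, hc0, hc⟩ := e1
  obtain ⟨m, hm0, hm⟩ := low lam hl
  obtain ⟨e, he0, he1⟩ := low ε he
  refine ⟨c, hc0, m, hm0, e, he0, fun b hb => ?_⟩
  obtain ⟨⟨ℓ, h1, h2, h3⟩, h4⟩ := hk b hb
  exact ⟨⟨ℓ, h1, fun hh => (h2 hh).trans (by linarith [hm b hb]),
    fun y hy v hv hv' => (h3 y hy v hv hv').trans (hc b hb)⟩,
    fun a1 a2 => le_trans (by linarith [he1 b hb]) (h4 a1 a2)⟩

/-- Below the scale `η` the profile at `y` grows no faster than the profile at `f y`. -/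
lemma low_scales (D : Dyn f h H K s) : ∃ C > 0, ∃ γ > 0, γ < 1 ∧ ∀ y ∈ unitI, ∀ η, η ≤ 1 / 2 →
    (∀ b ∈ SS f, 2 * η ≤ |h b - h y|) → ∀ u > 0, ∀ k < NN s u η,
    RR H (h y) (u * s ^ (k + 1)) - RR H (h y) (u * s ^ k) ≤
      RR H (h (f y)) (s * u * s ^ (k + 1)) - RR H (h (f y)) (s * u * s ^ k)
        + C * γ ^ (NN s u η - 1 - k) := by
  have hs := D.s1
  obtain ⟨C, hC, h1⟩ := D.S1
  obtain ⟨κ, hκ, h2⟩ := D.growth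
  obtain ⟨C', hC', h3⟩ := D.RR_scale s (by linarith)
  refine ⟨C * (1 + κ) + C', by positivity, (1 + κ)⁻¹, by positivity,
    inv_lt_one_of_one_lt₀ (by linarith), fun y hy η hη hS u hu k hk => ?_⟩
  have hyI := D.h_mem y
  have hfyI := D.h_mem (f y)
  have hk1 := NN_lt hk
  have huk : 0 < u * s ^ k := by positivity
  have hmono : u * s ^ k ≤ u * s ^ (k + 1) := by rw [pow_succ]; nlinarith
  rcases Nat.lt_or_ge (k + 1) (NN s u η) with hlt | hge
  · have hk2 := NN_lt hlt
    have a := h1 y hy η (huk.trans_le hk1) hS _ _ huk hmono hk2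
    obtain ⟨j, hj⟩ : ∃ j, NN s u η = k + 2 + j := ⟨NN s u η - (k + 2), by omega⟩
    have hk3 := NN_lt (show k + 1 + j < NN s u η by omega)
    have e : u * s ^ (k + 1) * s ^ j = u * s ^ (k + 1 + j) := by ring
    have b := h2 (h y) hyI j (u * s ^ (k + 1)) (by positivity) (by rw [e]; linarith)
    rw [e] at b
    have hη0 : 0 < η := huk.trans_le hk1
    have c : LL H (h y) (u * s ^ (k + 1 + j)) ≤ LL H (h y) η :=
      D.LL_nested (by linarith) (by linarith)
    have hLη := D.LL_pos hyI hη0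
    have d : LL H (h y) (u * s ^ (k + 1)) / LL H (h y) η ≤ ((1 + κ)⁻¹) ^ j := by
      rw [inv_pow, div_le_iff₀ hLη, ← div_eq_inv_mul, le_div_iff₀ (by positivity)]
      linarith
    have e2 : NN s u η - 1 - k = j + 1 := by omega
    rw [e2, pow_succ (1 + κ)⁻¹]
    have e3 : (C * (1 + κ) + C') * ((1 + κ)⁻¹ ^ j * (1 + κ)⁻¹) =
      C * (1 + κ)⁻¹ ^ j + C' * ((1 + κ)⁻¹ ^ j * (1 + κ)⁻¹) := by
      field_simp
    rw [e3]
    have e4 : 0 ≤ C' * ((1 + κ)⁻¹ ^ j * (1 + κ)⁻¹) := by positivity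
    have e5 := mul_le_mul_of_nonneg_left d hC.le
    rw [← mul_assoc s, ← mul_assoc s] at a
    linarith
  · have e2 : NN s u η - 1 - k = 0 := by omega
    rw [e2, pow_zero, mul_one]
    have a := h3 (h y) hyI _ huk
    have e : s * (u * s ^ k) = u * s ^ (k + 1) := by ring
    rw [e] at a
    have b := D.RR_mono hfyI (v := s * u * s ^ k) (v' := s * u * s ^ (k + 1)) (by positivity)
      (by nlinarith)
    have : 0 ≤ C * (1 + κ) := by positivity
    linarith

end Dyn

/-! ### The three local situations -/

namespace Dyn
variable {f h H : ℝ → ℝ} {K s : ℝ}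

/-- For every `y` there is a scale `η` below which `f` transports profiles with small error and
above which it multiplies them by some `l ≥ 1`. The final disjunction records what `η` is: half the
distance to a nearby critical point, half the distance to a nearby singular endpoint, or a fixed
scale `δ` if no singular point is near; with the effect on the distance to the boundary. -/
lemma local_step (D : Dyn f h H K s) : ∃ C > 0, ∃ γ > 0, γ < 1 ∧ ∃ lam > 0, ∃ δ > 0, ∃ ε > 0,
    ∀ y ∈ unitI, ∃ η ≥ 0, ∃ l ≥ (1 : ℝ),
    (∀ u > 0, ∀ k < NN s u η, RR H (h y) (u * s ^ (k + 1)) - RR H (h y) (u * s ^ k) ≤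
      RR H (h (f y)) (s * u * s ^ (k + 1)) - RR H (h (f y)) (s * u * s ^ k)
        + C * γ ^ (NN s u η - 1 - k)) ∧
    (∀ u > 0, ∀ k, NN s u η ≤ k →
      |RR H (h (f y)) (s * u * s ^ k) - l * RR H (h y) (u * s ^ k)| ≤ C) ∧
    ((1 / l ≤ 1 - lam ∧ (s * η ≤ dd h (f y) ∨ ε ≤ dd h (f y))) ∨
     (dd h y ≤ 2 * η ∧ ε ≤ dd h (f y)) ∨
     (δ ≤ η ∧ s * min (2 * δ) (dd h y) ≤ dd h (f y))) := by
  have hs := D.s1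
  obtain ⟨C₁, hC₁, γ, hγ, hγ1, hlow⟩ := D.low_scales
  obtain ⟨C₂, hC₂, lam, hlam, ε, hε, hSS⟩ := D.S2_unif
  set δ := min ε (1 / 4) / (2 * s) with hδ
  have hδ0 : 0 < δ := by have := lt_min hε (show (0:ℝ) < 1 / 4 by norm_num); positivity
  have hδe : 2 * s * δ = min ε (1 / 4) := by rw [hδ]; field_simp
  have hδ1 : 2 * s * δ ≤ ε := hδe.trans_le (min_le_left _ _)
  have hδ2 : 2 * s * δ ≤ 1 / 4 := hδe.trans_le (min_le_right _ _)
  have hδ3 : δ ≤ 1 / 8 := by nlinarith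
  obtain ⟨c, hc, hLL⟩ := D.LL_lower hδ0
  have hlc := abs_nonneg (Real.log c)
  refine ⟨C₁ + C₂ + 2 * |Real.log c|, by positivity, γ, hγ, hγ1, lam, hlam, δ, hδ0, ε, hε,
    fun y hy => ?_⟩
  have hyI := D.h_mem y
  have hfyI := D.h_mem (f y)
  have low' : ∀ η, η ≤ 1 / 2 → (∀ b ∈ SS f, 2 * η ≤ |h b - h y|) →
      ∀ u > 0, ∀ k < NN s u η, RR H (h y) (u * s ^ (k + 1)) - RR H (h y) (u * s ^ k) ≤
      RR H (h (f y)) (s * u * s ^ (k + 1)) - RR H (h (f y)) (s * u * s ^ k)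
        + (C₁ + C₂ + 2 * |Real.log c|) * γ ^ (NN s u η - 1 - k) := by
    intro η h1 h2 u hu k hk
    have a := hlow y hy η h1 h2 u hu k hk
    have b : 0 ≤ γ ^ (NN s u η - 1 - k) := by positivity
    nlinarith
  by_cases hfar : ∀ b ∈ SS f, 2 * δ ≤ |h b - h y|
  · refine ⟨δ, hδ0.le, 1, le_rfl, low' δ (by linarith) hfar, ?_, Or.inr (Or.inr ⟨le_rfl, ?_⟩)⟩
    · intro u hu k hk
      have h1 := NN_spec hs hu δ
      have h2 : u * s ^ NN s u δ ≤ u * s ^ k :=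
        mul_le_mul_of_nonneg_left (pow_le_pow_right₀ hs.le hk) hu.le
      have h3 : δ ≤ u * s ^ k := by linarith
      have hp : 0 < u * s ^ k := by linarith
      have h4 : δ ≤ s * u * s ^ k := by rw [mul_assoc]; nlinarith
      have l1 := Real.log_le_log hc (hLL _ hyI _ h3)
      have l2 := Real.log_le_log hc (hLL _ hfyI _ h4)
      have l3 := D.RR_nonpos hyI hp
      have l4 := D.RR_nonpos hfyI (hδ0.trans_le h4)
      have n1 := neg_abs_le (Real.log c)
      unfold RR at *
      exact abs_le.2 ⟨by linarith, by linarith⟩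
    · rcases (D.dd_nonneg y).eq_or_lt with h0 | h0
      · rw [← h0, min_eq_right (by positivity), mul_zero]; exact D.dd_nonneg _
      · have := D.bdry_image hy (v := min (2 * δ) (dd h y)) (lt_min (by positivity) h0)
          (fun b hb => (min_le_left _ _).trans (hfar b (Or.inl hb)))
          ((min_le_right _ _).trans (min_le_left _ _)) ((min_le_right _ _).trans (min_le_right _ _))
        exact le_min this.1 this.2
  · push Not at hfar
    obtain ⟨b₀, hb₀, hb₀'⟩ := hfar
    obtain ⟨b, hb, hmin⟩ := Set.exists_min_image (SS f) (fun b => |h b - h y|)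
      (SS_finite D.nf) ⟨b₀, hb₀⟩
    have hbd : |h b - h y| < 2 * δ := (hmin b₀ hb₀).trans_lt hb₀'
    have hbI := SS_sub f hb
    obtain ⟨⟨ℓ, hℓ, hℓc, hS2⟩, hdd⟩ := hSS b hb
    set η := |h b - h y| / 2 with hη
    have hη2 : |h b - h y| = 2 * η := by rw [hη]; ring
    have hη0 : 0 ≤ η := by positivity
    have hηδ : η < δ := by linarith
    have hlip := D.lip b hbI y hy
    rw [abs_sub_comm (h y), hη2] at hlip
    have far_dd : f b ≠ 0 → f b ≠ 1 → ε ≤ dd h (f y) := by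
      intro a1 a2
      have h1 := hdd a1 a2
      have h2 : 2 * ε ≤ h (f b) := h1.trans (min_le_left _ _)
      have h3 : 2 * ε ≤ 1 - h (f b) := h1.trans (min_le_right _ _)
      have h4 := abs_le.1 hlip
      have h5 : s * (2 * η) ≤ 2 * s * δ := by nlinarith
      exact le_min (by linarith [h4.1]) (by linarith [h4.2])
    refine ⟨η, hη0, ℓ, hℓ, low' η (by linarith) (fun b' hb' => by rw [← hη2]; exact hmin b' hb'),
      ?_, ?_⟩
    · intro u hu k hk
      have h1 := NN_spec hs hu η
      have h2 : u * s ^ NN s u η ≤ u * s ^ k :=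
        mul_le_mul_of_nonneg_left (pow_le_pow_right₀ hs.le hk) hu.le
      have h3 := hS2 y hy (u * s ^ k) (by positivity)
        (by rw [abs_sub_comm, hη2]; linarith)
      rw [← mul_assoc] at h3
      linarith
    · by_cases hbc : b ∈ Crit f
      · refine Or.inl ⟨hℓc hbc, ?_⟩
        by_cases hfb : f b = 0 ∨ f b = 1
        · left
          have hj := D.jac' hbI hy (fun w hw hwc => by
            have h1 := hmin w (Or.inl hwc)
            have hwI : w ∈ Icc (0:ℝ) 1 := hwc.1
            rcases le_total b y with hby | hby
            · rw [min_eq_left hby, max_eq_right hby] at hw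
              have a1 := D.smono hbI hwI hw.1
              have a2 := D.smono hwI hy hw.2
              rw [abs_of_neg (by linarith), abs_of_neg (by linarith)] at h1
              linarith
            · rw [min_eq_right hby, max_eq_left hby] at hw
              have a1 := D.smono hy hwI hw.1
              have a2 := D.smono hwI hbI hw.2
              rw [abs_of_pos (by linarith), abs_of_pos (by linarith)] at h1
              linarith)
          rw [abs_sub_comm (h y), hη2] at hj
          have h5 : s * η ≤ s * δ := mul_le_mul_of_nonneg_left hηδ.le (by linarith)
          have h6 : 0 ≤ s * η := by positivity
          rcases hfb with hfb | hfb
          · rw [hfb, D.zero 0 le_rfl, sub_zero, abs_of_nonneg hfyI.1] at hj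
            exact le_min (by linarith) (by linarith)
          · rw [hfb, D.one 1 le_rfl, abs_sub_comm, abs_of_nonneg (by linarith [hfyI.2])] at hj
            exact le_min (by linarith) (by linarith)
        · push Not at hfb
          exact Or.inr (far_dd hfb.1 hfb.2)
      · have hbE := hb.resolve_left hbc
        refine Or.inr (Or.inl ⟨?_, far_dd hbE.2.1 hbE.2.2⟩)
        rw [← hη2]
        rcases hbE.1 with rfl | rfl
        · rw [D.zero 0 le_rfl, zero_sub, abs_neg, abs_of_nonneg hyI.1]
          exact min_le_left _ _
        · rw [D.one 1 le_rfl, abs_of_nonneg (by linarith [hyI.2])]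
          exact min_le_right _ _

end Dyn

/-! ### The potential along one step -/

/-- The potential `Phi θ` of the profile of logarithmic lengths of the balls of radii
`u, u * s, u * s ^ 2, …` about `t` in the measure coordinate. -/
def FF (H : ℝ → ℝ) (s θ t u : ℝ) : ℝ := Phi θ (fun k => RR H t (u * s ^ k))

namespace Dyn
variable {f h H : ℝ → ℝ} {K s : ℝ}

lemma prof_mono (D : Dyn f h H K s) {t u : ℝ} (ht : t ∈ Icc (0 : ℝ) 1) (hu : 0 < u) :
    Monotone (fun k : ℕ => RR H t (u * s ^ k)) := fun a b hab =>
  D.RR_mono ht (by have := D.s1; positivity)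
    (mul_le_mul_of_nonneg_left (pow_le_pow_right₀ D.s1.le hab) hu.le)

lemma prof_bdd (D : Dyn f h H K s) {t u : ℝ} (ht : t ∈ Icc (0 : ℝ) 1) (hu : 0 < u) (k : ℕ) :
    |RR H t (u * s ^ k)| ≤ |RR H t u| :=
  D.RR_abs ht hu (le_mul_of_one_le_right hu.le (one_le_pow₀ D.s1.le))

lemma FF_nonneg (D : Dyn f h H K s) {θ t u : ℝ} (h0 : 0 < θ) (h1 : θ < 1)
    (ht : t ∈ Icc (0 : ℝ) 1) (hu : 0 < u) : 0 ≤ FF H s θ t u :=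
  Phi_nonneg h0 h1 (D.prof_bdd ht hu) (D.prof_mono ht hu)

/-- Two profiles that are proportional up to a bounded error have proportional potentials. -/
lemma FF_compare (D : Dyn f h H K s) {θ t t' u u' l C : ℝ} (h0 : 0 < θ) (h1 : θ < 1)
    (ht : t ∈ Icc (0 : ℝ) 1) (ht' : t' ∈ Icc (0 : ℝ) 1) (hu : 0 < u) (hu' : 0 < u')
    (hC : ∀ k : ℕ, |RR H t' (u' * s ^ k) - l * RR H t (u * s ^ k)| ≤ C) :
    |FF H s θ t' u' - l * FF H s θ t u| ≤ 2 * C :=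
  Phi_compare h0 h1 (B := max (|RR H t u|) (|RR H t' u'|))
    (fun k => (D.prof_bdd ht hu k).trans (le_max_left _ _))
    (fun k => (D.prof_bdd ht' hu' k).trans (le_max_right _ _)) hC

lemma FF_near (D : Dyn f h H K s) {θ t t' u : ℝ} (h0 : 0 < θ) (h1 : θ < 1)
    (ht : t ∈ Icc (0 : ℝ) 1) (ht' : t' ∈ Icc (0 : ℝ) 1) (hu : 0 < u) (htt : |t - t'| ≤ u) :
    |FF H s θ t u - FF H s θ t' u| ≤ 4 * Real.log K := by
  have := D.FF_compare (l := 1) h0 h1 ht' ht hu hu (C := 2 * Real.log K) (fun k => by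
    have hk := one_le_pow₀ (n := k) D.s1.le
    rw [one_mul]
    exact D.RR_near ht ht' (by positivity) (by nlinarith))
  rw [one_mul] at this
  linarith

/-- The basic inequality: along an orbit the potential, corrected by the boundary term
`M * θ ^ NN s u (dd h y)`, is nondecreasing up to an error which decays as `u → 0`.
Passing near a critical point yields a gain, because the potential exceeds the large number `B` at
small scales; the gain pays for the distortion and for a new boundary term. The boundary term pays
for the loss at a singular endpoint, where no gain is available. The order of the quantifiers
matters: `M` does not depend on `B`, and `θ` is chosen last, close to `1`. -/
lemma main_step (D : Dyn f h H K s) : ∃ M ≥ 0, ∀ B₀ : ℝ, ∃ B ≥ B₀, ∃ θ, 0 < θ ∧ θ < 1 ∧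
    (∃ v > 0, ∀ t ∈ Icc (0 : ℝ) 1, ∀ u > 0, u ≤ v → B ≤ FF H s θ t u) ∧
    ∃ C ≥ 0, ∃ ε > 0, ∀ y ∈ unitI, ∀ u > 0,
      FF H s θ (h y) u - M * θ ^ NN s u (dd h y) ≤
        FF H s θ (h (f y)) (s * u) - M * θ ^ NN s (s * u) (dd h (f y)) + C * θ ^ NN s u ε := by
  have hs := D.s1
  obtain ⟨C, hC, γ, hγ, hγ1, lam, hlam, δ, hδ, ε, hε, hloc⟩ := D.local_step
  obtain ⟨κ, hκ, hgr⟩ := D.growth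
  set ρ := (1 + γ) / 2 with hρ
  have hρ1 : ρ < 1 := by rw [hρ]; linarith
  have hργ : γ < ρ := by rw [hρ]; linarith
  have hρ0 : 0 < 1 - ρ := by linarith
  set C₁ := 2 * C / (1 - ρ) + 2 * C with hC₁
  have hC₁0 : 0 < C₁ := by positivity
  refine ⟨2 * C₁, by positivity, fun B₀ => ?_⟩
  set B := max B₀ (3 * C₁ / lam) with hB
  have hB1 : 3 * C₁ ≤ lam * B := by
    have : 3 * C₁ / lam ≤ B := le_max_right _ _
    rw [div_le_iff₀ hlam] at this; linarith
  have hB0 : 0 ≤ B := le_trans (by positivity) (le_max_right B₀ (3 * C₁ / lam))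
  obtain ⟨j₀, hj₀⟩ := pow_unbounded_of_one_lt 2 hs
  have hlog : 0 < Real.log (1 + κ) := Real.log_pos (by linarith)
  obtain ⟨K₀, hK₀⟩ := exists_nat_ge (2 * B / Real.log (1 + κ))
  rw [div_le_iff₀ hlog] at hK₀
  have hθex : ∃ θ : ℝ, θ < 1 ∧ 1 / 2 < θ ∧ 1 / 2 < θ ^ K₀ ∧ 1 / 2 < θ ^ j₀ ∧ γ < ρ * θ := by
    have e1 : ∀ n : ℕ, ∀ᶠ θ : ℝ in nhdsWithin 1 (Iio 1), 1 / 2 < θ ^ n := fun n =>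
      ((continuous_pow n).continuousAt.eventually_const_lt (by norm_num)).filter_mono
        nhdsWithin_le_nhds
    have e2 : ∀ᶠ θ : ℝ in nhdsWithin 1 (Iio 1), γ < ρ * θ :=
      ((continuous_const.mul continuous_id).continuousAt.eventually_const_lt
        (by simpa using hργ)).filter_mono nhdsWithin_le_nhds
    have e3 : ∀ᶠ θ : ℝ in nhdsWithin 1 (Iio 1), θ < 1 := eventually_mem_nhdsWithin
    obtain ⟨θ, a1, a2, a3, a4, a5⟩ := (e3.and ((e1 1).and ((e1 K₀).and ((e1 j₀).and e2)))).exists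
    exact ⟨θ, a1, by simpa using a2, a3, a4, a5⟩
  obtain ⟨θ, hθ1, hθ2, hθK, hθj, hθγ⟩ := hθex
  have hθ0 : 0 < θ := by linarith
  have hbig : ∀ t ∈ Icc (0 : ℝ) 1, ∀ u > 0, u ≤ 1 / 2 / s ^ K₀ → B ≤ FF H s θ t u := by
    intro t ht u hu huv
    have h1 := Phi_lower hθ0 hθ1 (D.prof_bdd ht hu) (D.prof_mono ht hu) K₀
    have h2 : u * s ^ K₀ ≤ 1 / 2 := by rwa [le_div_iff₀ (by positivity)] at huv
    have h3 := hgr t ht K₀ u hu h2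
    have hL := D.LL_pos ht hu
    have h4 := Real.log_le_log (by positivity) h3
    rw [Real.log_mul (by positivity) hL.ne', Real.log_pow] at h4
    have h5 : 2 * B ≤ RR H t (u * s ^ K₀) - RR H t (u * s ^ 0) := by
      rw [pow_zero, mul_one]; unfold RR; linarith
    unfold FF
    nlinarith
  refine ⟨B, le_max_left _ _, θ, hθ0, hθ1, ⟨1 / 2 / s ^ K₀, by positivity, hbig⟩,
    5 * C₁, by positivity, ?_⟩
  set v := 1 / 2 / s ^ K₀ with hv
  have hv0 : 0 < v := by positivity
  refine ⟨min (v / s) (min (ε / s) δ), by positivity, fun y hy u hu => ?_⟩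
  have hyI := D.h_mem y
  have hfyI := D.h_mem (f y)
  have hsu : 0 < s * u := by positivity
  obtain ⟨η, hη, l, hl, hlow, hhigh, hcase⟩ := hloc y hy
  set W := θ ^ NN s u (min (v / s) (min (ε / s) δ)) with hW
  have pw : ∀ {a b : ℕ}, a ≤ b → θ ^ b ≤ θ ^ a := fun hab =>
    pow_le_pow_of_le_one hθ0.le hθ1.le hab
  have hWd : ∀ d, min (v / s) (min (ε / s) δ) ≤ d → θ ^ NN s u d ≤ W := fun d hd =>
    pw (NN_mono hs hu hd)
  have hω' : ∀ d, s * d ≤ dd h (f y) → θ ^ NN s (s * u) (dd h (f y)) ≤ θ ^ NN s u d := by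
    intro d hd
    rw [← NN_scale hs (u := u) (d := d)]
    exact pw (NN_mono hs hsu hd)
  have hωε : ε ≤ dd h (f y) → θ ^ NN s (s * u) (dd h (f y)) ≤ W := fun hd =>
    (hω' (ε / s) (by rw [mul_div_cancel₀ _ (by linarith)]; exact hd)).trans
      (hWd _ ((min_le_right _ _).trans (min_le_left _ _)))
  have step := Phi_step (l := l) hθ2.le hθ1 hγ hρ1 hθγ.le hC.le hl
    (B := max (|RR H (h y) u|) (|RR H (h (f y)) (s * u)|))
    (r := fun k => RR H (h y) (u * s ^ k)) (g := fun k => RR H (h (f y)) (s * u * s ^ k))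
    (fun k => (D.prof_bdd hyI hu k).trans (le_max_left _ _))
    (fun k => (D.prof_bdd hfyI hsu k).trans (le_max_right _ _)) (NN s u η)
    (hlow u hu) (hhigh u hu)
  have eZ : Phi θ (fun k => RR H (h (f y)) (s * u * s ^ (k + NN s u η))) =
      FF H s θ (h (f y)) (s * u * s ^ NN s u η) := by
    unfold FF; congr 1; funext k; congr 1; ring
  have eQ : Phi θ (fun k => RR H (h y) (u * s ^ k)) = FF H s θ (h y) u := rfl
  have eP : Phi θ (fun k => RR H (h (f y)) (s * u * s ^ k)) = FF H s θ (h (f y)) (s * u) := rfl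
  rw [← hC₁, eZ, eQ, eP] at step
  have hZ0 : 0 ≤ FF H s θ (h (f y)) (s * u * s ^ NN s u η) :=
    D.FF_nonneg hθ0 hθ1 hfyI (by positivity)
  have hT0 : 0 < θ ^ NN s u η := by positivity
  have hW0 : 0 < W := by positivity
  have hω0 : 0 < θ ^ NN s u (dd h y) := by positivity
  have hspec := NN_spec hs hu η
  have hl1 : 0 ≤ 1 - 1 / l := by
    have : 1 / l ≤ 1 := by rw [div_le_one (by linarith)]; exact hl
    linarith
  have step' : FF H s θ (h y) u ≤ FF H s θ (h (f y)) (s * u) + θ ^ NN s u η * C₁ := by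
    have : 0 ≤ θ ^ NN s u η * ((1 - 1 / l) * FF H s θ (h (f y)) (s * u * s ^ NN s u η)) := by
      positivity
    linarith
  have hWle : θ ^ NN s u (dd h y) * C₁ ≥ 0 := by positivity
  have hWC : 0 < W * C₁ := by positivity
  rcases hcase with ⟨hll, hor⟩ | ⟨hdy, hfy⟩ | ⟨hδη, hfy⟩
  · have hor' : θ ^ NN s (s * u) (dd h (f y)) ≤ θ ^ NN s u η ∨
        θ ^ NN s (s * u) (dd h (f y)) ≤ W := hor.imp (hω' η) hωε
    rcases le_or_gt (s * u * s ^ NN s u η) v with hle | hgt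
    · have hZ := hbig _ hfyI (s * u * s ^ NN s u η) (by positivity) hle
      have h1 : lam * B ≤ (1 - 1 / l) * FF H s θ (h (f y)) (s * u * s ^ NN s u η) :=
        mul_le_mul (by linarith) hZ hB0 hl1
      have h2 : θ ^ NN s u η * (C₁ - (1 - 1 / l) * FF H s θ (h (f y)) (s * u * s ^ NN s u η)) ≤
        θ ^ NN s u η * (-(2 * C₁)) := mul_le_mul_of_nonneg_left (by linarith) hT0.le
      rcases hor' with h3 | h3
      · have := mul_le_mul_of_nonneg_left h3 hC₁0.le
        linarith
      · have := mul_le_mul_of_nonneg_left h3 hC₁0.le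
        have : 0 < θ ^ NN s u η * C₁ := by positivity
        linarith
    · have hTW : θ ^ NN s u η ≤ W := by
        refine le_trans (pw (NN_le ?_)) (hWd (v / s) (min_le_left _ _))
        rw [div_lt_iff₀ (by linarith)]; linarith
      have h3 : θ ^ NN s (s * u) (dd h (f y)) ≤ W := hor'.elim (fun h => h.trans hTW) id
      have a1 := mul_le_mul_of_nonneg_left h3 hC₁0.le
      have a2 := mul_le_mul_of_nonneg_left hTW hC₁0.le
      linarith
  · have h3 := mul_le_mul_of_nonneg_left (hωε hfy) hC₁0.le
    -- the term at `y` pays for the bounded distortion loss, since `dd h y ≤ 2 * η`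
    have h4 : NN s u (dd h y) ≤ NN s u η + j₀ := by
      apply NN_le
      rw [pow_add, ← mul_assoc]
      have : 0 < u * s ^ NN s u η := by positivity
      nlinarith
    have h5 := pw h4
    rw [pow_add] at h5
    have h6 : θ ^ NN s u η * (1 / 2) ≤ θ ^ NN s u (dd h y) :=
      le_trans (mul_le_mul_of_nonneg_left hθj.le hT0.le) h5
    have h7 := mul_le_mul_of_nonneg_left h6 hC₁0.le
    linarith
  · have hTW : θ ^ NN s u η ≤ W :=
      hWd η (((min_le_right _ _).trans (min_le_right _ _)).trans hδη)
    have a2 := mul_le_mul_of_nonneg_left hTW hC₁0.le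
    have h3 := hω' _ hfy
    rcases min_choice (2 * δ) (dd h y) with he | he
    · rw [he] at h3
      have := h3.trans (hWd (2 * δ)
        (((min_le_right _ _).trans (min_le_right _ _)).trans (by linarith)))
      have a1 := mul_le_mul_of_nonneg_left this hC₁0.le
      linarith
    · rw [he] at h3
      have a1 := mul_le_mul_of_nonneg_left h3 hC₁0.le
      linarith

end Dyn

/-! ### Orbits returning to a critical point -/

namespace Dyn
variable {f h H : ℝ → ℝ} {K s : ℝ}

lemma iter_mem (D : Dyn f h H K s) {y : ℝ} (hy : y ∈ unitI) (n : ℕ) : f^[n] y ∈ unitI := by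
  induction n with
  | zero => exact hy
  | succ n ih => rw [Function.iterate_succ_apply']; exact D.maps ih

/-- The errors of the basic inequality along an orbit form a geometric series dominated by the
last one. -/
lemma iterate_step (D : Dyn f h H K s) {θ M C ε : ℝ} (h0 : 0 < θ) (h1 : θ < 1) (hC : 0 ≤ C)
    (hstep : ∀ y ∈ unitI, ∀ u > 0,
      FF H s θ (h y) u - M * θ ^ NN s u (dd h y) ≤
        FF H s θ (h (f y)) (s * u) - M * θ ^ NN s (s * u) (dd h (f y)) + C * θ ^ NN s u ε)
    {y u : ℝ} (hy : y ∈ unitI) (hu : 0 < u) (n : ℕ) (hn : s ^ n * u ≤ ε) :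
    FF H s θ (h y) u - M * θ ^ NN s u (dd h y) ≤
      FF H s θ (h (f^[n] y)) (s ^ n * u) - M * θ ^ NN s (s ^ n * u) (dd h (f^[n] y))
        + C / (1 - θ) * θ ^ NN s (s ^ n * u) ε := by
  have hs := D.s1
  have hθ : 0 < 1 - θ := by linarith
  induction n with
  | zero =>
    simp only [pow_zero, one_mul, Function.iterate_zero, id]
    have : 0 ≤ C / (1 - θ) * θ ^ NN s u ε := by positivity
    linarith
  | succ n ih =>
    have hp : 0 < s ^ n * u := by positivity
    have e : s ^ (n + 1) * u = s * (s ^ n * u) := by ring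
    rw [e] at hn ⊢
    have hn' : s ^ n * u ≤ ε := by nlinarith
    have a := ih hn'
    have b := hstep _ (D.iter_mem hy n) _ hp
    rw [Function.iterate_succ_apply']
    have c := pow_le_pow_of_le_one h0.le h1.le (NN_succ hs hp hn')
    rw [pow_succ] at c
    set X := θ ^ NN s (s * (s ^ n * u)) ε with hX
    have hX0 : 0 < X := by positivity
    have d : (C / (1 - θ) + C) * θ ^ NN s (s ^ n * u) ε ≤ (C / (1 - θ) + C) * (X * θ) :=
      mul_le_mul_of_nonneg_left c (by positivity)
    have e1 : (C / (1 - θ) + C) * θ ≤ C / (1 - θ) := by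
      rw [div_add' _ _ _ hθ.ne', div_mul_eq_mul_div]
      refine div_le_div_of_nonneg_right ?_ hθ.le
      nlinarith [mul_nonneg hC (sq_nonneg (1 - θ))]
    have e2 := mul_le_mul_of_nonneg_right e1 hX0.le
    linarith

/-- At a recurrent critical point `c`, leaving `c` divides the potential by `ℓ > 1`, and returning
to `c` loses only a bounded amount. As the potential is large at small scales, each return would
decrease it by at least `1`, although it is nonnegative. -/
theorem no_recurrent (D : Dyn f h H K s) {c : ℝ} (hc : c ∈ Crit f) : ¬ RecurrentPt f c := by
  intro hrec
  have hs := D.s1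
  have hcI : c ∈ unitI := hc.1
  have hhc := D.h_mem c
  have hlogK := Real.log_nonneg D.oneK
  obtain ⟨ℓ, -, hℓ, A, hA⟩ := D.S2 hcI
  have hℓ := hℓ hc
  have hA0 : 0 ≤ A := (abs_nonneg _).trans (hA c hcI 1 one_pos (by simp))
  obtain ⟨M, hM, hmain⟩ := D.main_step
  set C₂ := 2 * A + M + 1 + 4 * Real.log K with hC₂
  have hC₂0 : 0 ≤ C₂ := by positivity
  obtain ⟨B, hB, θ, hθ0, hθ1, ⟨v, hv, hbig⟩, C, hC, ε, hε, hstep⟩ :=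
    hmain ((C₂ + ℓ) / (ℓ - 1))
  have hθ : 0 < 1 - θ := by linarith
  have hB' : C₂ + ℓ ≤ (ℓ - 1) * B := by
    rw [ge_iff_le, div_le_iff₀ (by linarith)] at hB; linarith
  obtain ⟨k₁, hk₁⟩ : ∃ k : ℕ, C / (1 - θ) * θ ^ k < 1 := by
    have h1 : Tendsto (fun k : ℕ => C / (1 - θ) * θ ^ k) atTop (nhds (C / (1 - θ) * 0)) :=
      (tendsto_pow_atTop_nhds_zero_of_lt_one hθ0.le hθ1).const_mul _
    rw [mul_zero] at h1
    exact (h1.eventually_lt_const one_pos).exists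
  have small : ∀ r, 0 < r → r ≤ ε / s ^ k₁ → C / (1 - θ) * θ ^ NN s r ε ≤ 1 := by
    intro r hr hrε
    rw [le_div_iff₀ (by positivity)] at hrε
    have : k₁ ≤ NN s r ε := by
      by_contra hlt
      have h1 := NN_spec hs hr ε
      have h2 : r * s ^ NN s r ε ≤ r * s ^ k₁ :=
        mul_le_mul_of_nonneg_left (pow_le_pow_right₀ hs.le (not_le.1 hlt).le) hr.le
      linarith
    refine le_trans (mul_le_mul_of_nonneg_left
      (pow_le_pow_of_le_one hθ0.le hθ1.le this) (by positivity)) hk₁.le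
  set r₀ := min v (ε / s ^ k₁) with hr₀
  have hr₀0 : 0 < r₀ := by positivity
  have dec : ∀ r, 0 < r → r ≤ r₀ → ∃ r', 0 < r' ∧ r' ≤ r₀ ∧
      FF H s θ (h c) r' ≤ FF H s θ (h c) r - 1 := by
    intro r hr hrr
    have hrv : r ≤ v := hrr.trans (min_le_left _ _)
    have hre : r ≤ ε / s ^ k₁ := hrr.trans (min_le_right _ _)
    have hrε : r ≤ ε := hre.trans (div_le_self hε.le (one_le_pow₀ hs.le))
    obtain ⟨τ, hτ, hcont⟩ := Metric.continuousAt_iff.1 (D.cont.continuousAt (x := c)) r hr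
    obtain ⟨n, hn, hnc⟩ := hrec τ hτ 1
    have hhn := hcont (x := f^[n] c) (by rw [Real.dist_eq]; exact hnc)
    rw [Real.dist_eq] at hhn
    obtain ⟨m, rfl⟩ : ∃ m, n = m + 1 := ⟨n - 1, by omega⟩
    rw [Function.iterate_succ_apply] at hhn
    have hfc := D.maps hcI
    set u := r / s ^ (m + 1) with hu
    have hu0 : 0 < u := by positivity
    have hur : u ≤ r := div_le_self hr.le (one_le_pow₀ hs.le)
    have hsu : 0 < s * u := by positivity
    have e : s ^ m * (s * u) = r := by rw [hu, pow_succ]; field_simp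
    have hit := D.iterate_step hθ0 hθ1 hC hstep hfc hsu m (by rw [e]; exact hrε)
    rw [e] at hit
    have a1 := small r hr hre
    have a2 := abs_le.1 (D.FF_compare (θ := θ) (l := ℓ) (C := A) hθ0 hθ1 hhc (D.h_mem (f c)) hu0 hsu
      (fun k => by
        have := hA c hcI (u * s ^ k) (by positivity) (by rw [sub_self, abs_zero]; positivity)
        rwa [← mul_assoc] at this))
    have a3 := abs_le.1 (D.FF_near hθ0 hθ1 (D.h_mem (f^[m] (f c))) hhc hr hhn.le)
    have a4 : M * θ ^ NN s (s * u) (dd h (f c)) ≤ M :=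
      mul_le_of_le_one_right hM (pow_le_one₀ hθ0.le hθ1.le)
    have a5 : 0 ≤ M * θ ^ NN s r (dd h (f^[m] (f c))) := by positivity
    have a6 := hbig (h c) hhc r hr hrv
    have a7 : ℓ * FF H s θ (h c) u ≤ FF H s θ (h c) r + C₂ := by
      rw [hC₂]; linarith [a2.1, a3.2]
    refine ⟨u, hu0, hur.trans hrr, ?_⟩
    have a8 := mul_le_mul_of_nonneg_left a6 (by linarith : 0 ≤ ℓ - 1)
    have a9 : ℓ * FF H s θ (h c) u ≤ ℓ * (FF H s θ (h c) r - 1) := by linarith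
    exact le_of_mul_le_mul_left a9 (by linarith)
  have all : ∀ m : ℕ, ∃ r, 0 < r ∧ r ≤ r₀ ∧ FF H s θ (h c) r ≤ FF H s θ (h c) r₀ - m := by
    intro m
    induction m with
    | zero => exact ⟨r₀, hr₀0, le_rfl, by simp⟩
    | succ m ih =>
      obtain ⟨r, b1, b2, b3⟩ := ih
      obtain ⟨r', c1, c2, c3⟩ := dec r b1 b2
      exact ⟨r', c1, c2, by push_cast; linarith⟩
  obtain ⟨m, hm⟩ := exists_nat_gt (FF H s θ (h c) r₀)
  obtain ⟨r, b1, -, b3⟩ := all m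
  have := D.FF_nonneg hθ0 hθ1 hhc b1
  linarith

end Dyn

/-- **Proposition 4.1**: if the maximal entropy measure of `f` is doubling then `f` has
no recurrent critical points. -/
theorem doubling_implies_no_recurrent (f : ℝ → ℝ) (μ : Measure ℝ)
    (hmm : Multimodal f) (hc3 : C3Nonflat f) (hrep : AllPeriodicRepelling f)
    (hex : TopExact f) (hμ : IsMaxEntropyLike f μ (Real.exp (htop f)))
    (hdoub : DoublingOn μ) :
    ∀ c ∈ Crit f, ¬ RecurrentPt f c := by
  obtain ⟨h, H, K, D⟩ := exists_Dyn (Real.exp_pos _) hmm hc3 hex hμ hdoub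
  exact fun c hc => D.no_recurrent hc

end
end
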